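/- Let (u, π, v, θ) be a smooth solution of the stationary 3D tropical climate model. Suppose p ∈ (3/2, 3), q ∈ [2, 2p′), r ∈ [2, 2p′) where p′ = p/(p−1), α ∈ [0, 2/p − 1/3], β ∈ [0, 3/q − 1/2], γ ∈ [0, 3/r − 1/2], and the inequalities α + ((4p−6)q/((6−q)p))·β ≤ 1, α + ((4p−6)r/((6−r)p))·γ ≤ 1, and β + γ < 3/q + 3/r − 2 hold. Assume that liminf_{R→+∞} ( X_{α,p,R} + Y_{β,q,R} + Z_{γ,r,R} ) < +∞. Then u = 0, v = 0 and θ = 0 identically on ℝ³. -/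

import Mathlib

open MeasureTheory Filter Metric

noncomputable section

abbrev R3 : Type := EuclideanSpace ℝ (Fin 3)

/-- Partial derivative of `f` in the `j`-th coordinate direction. -/
def pd (f : R3 → ℝ) (j : Fin 3) (x : R3) : ℝ :=
  fderiv ℝ f x (EuclideanSpace.single j 1)

/-- Laplacian of `f`. -/
def lap (f : R3 → ℝ) (x : R3) : ℝ := ∑ j, pd (pd f j) j x

/-- The stationary 3D tropical climate model:
`-Δu + (u·∇)u + ∇π + div(v⊗v) = 0`, `-Δv + (u·∇)v + ∇θ + (v·∇)u = 0`,
`-Δθ + u·∇θ + div v = 0`, `div u = 0`. -/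
def TCM (u v : R3 → R3) (pr θ : R3 → ℝ) : Prop :=
  (∀ i x, -lap (fun y => u y i) x + (∑ j, u x j * pd (fun y => u y i) j x)
      + pd pr i x + (∑ j, pd (fun y => v y j * v y i) j x) = 0) ∧
  (∀ i x, -lap (fun y => v y i) x + (∑ j, u x j * pd (fun y => v y i) j x)
      + pd θ i x + (∑ j, v x j * pd (fun y => u y i) j x) = 0) ∧
  (∀ x, -lap θ x + (∑ j, u x j * pd θ j x) + (∑ j, pd (fun y => v y j) j x) = 0) ∧
  (∀ x, (∑ j, pd (fun y => u y j) j x) = 0)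

/-- The annulus `B_{2R} \ B_R`. -/
def annulus (R : ℝ) : Set R3 := ball (0 : R3) (2 * R) \ ball 0 R

/-- `L^p` norm of a scalar function on a set `E`. -/
def lpS (g : R3 → ℝ) (p : ℝ) (E : Set R3) : ℝ := (∫ x in E, |g x| ^ p) ^ (1 / p)

/-- `X_{α,p,R} = R^{-α} ‖f‖_{L^p(B_{2R} \ B_R)}` for a vector field `f`. -/
def XnV (f : R3 → R3) (a p R : ℝ) : ℝ := R ^ (-a) * lpS (fun x => ‖f x‖) p (annulus R)

/-- `X_{α,p,R} = R^{-α} ‖f‖_{L^p(B_{2R} \ B_R)}` for a scalar function `f`. -/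
def XnS (f : R3 → ℝ) (a p R : ℝ) : ℝ := R ^ (-a) * lpS f p (annulus R)

abbrev Sm (f : R3 → ℝ) : Prop := ContDiff ℝ (⊤ : ℕ∞) f

theorem Sm.diff {f : R3 → ℝ} (hf : Sm f) : Differentiable ℝ f := hf.differentiable (by simp)

theorem Sm.pd {f : R3 → ℝ} (hf : Sm f) (j : Fin 3) : Sm (pd f j) := by
  unfold Sm _root_.pd
  exact (hf.fderiv_right (m := (⊤ : ℕ∞)) (by simp)).clm_apply contDiff_const

theorem Sm.lap {f : R3 → ℝ} (hf : Sm f) : Sm (lap f) := by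
  unfold _root_.lap
  exact ContDiff.sum fun j _ => (hf.pd j).pd j

theorem Sm.cont {f : R3 → ℝ} (hf : Sm f) : Continuous f := hf.continuous

theorem Sm.mul' {f g : R3 → ℝ} (hf : Sm f) (hg : Sm g) : Sm (fun x => f x * g x) :=
  ContDiff.mul hf hg

theorem Sm.comp_coord {w : R3 → R3} (hw : ContDiff ℝ (⊤ : ℕ∞) w) (i : Fin 3) :
    Sm (fun y => w y i) := by
  unfold Sm; exact (contDiff_euclidean.1 hw) i

theorem pd_mul {f g : R3 → ℝ} (hf : Differentiable ℝ f) (hg : Differentiable ℝ g) (j : Fin 3)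
    (x : R3) : pd (fun y => f y * g y) j x = pd f j x * g x + f x * pd g j x := by
  unfold pd
  rw [fderiv_fun_mul (hf x) (hg x)]
  simp; ring

theorem pd_add {f g : R3 → ℝ} (hf : Differentiable ℝ f) (hg : Differentiable ℝ g) (j : Fin 3)
    (x : R3) : pd (fun y => f y + g y) j x = pd f j x + pd g j x := by
  unfold pd
  rw [fderiv_fun_add (hf x) (hg x)]
  simp

theorem pd_sum {f : Fin 3 → R3 → ℝ} (hf : ∀ i, Differentiable ℝ (f i)) (j : Fin 3)
    (x : R3) : pd (fun y => ∑ i, f i y) j x = ∑ i, pd (f i) j x := by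
  unfold pd
  rw [fderiv_fun_sum (fun i _ => hf i x)]
  simp

theorem pd_comm {f : R3 → ℝ} (hf : Sm f) (i j : Fin 3) (x : R3) :
    pd (pd f i) j x = pd (pd f j) i x := by
  have h2 : ∀ i j : Fin 3, pd (pd f i) j x =
      fderiv ℝ (fderiv ℝ f) x (EuclideanSpace.single j 1) (EuclideanSpace.single i 1) := by
    intro i j
    unfold pd
    have hd : DifferentiableAt ℝ (fderiv ℝ f) x :=
      (hf.fderiv_right (m := (⊤ : ℕ∞)) (by simp)).differentiable (by simp) x
    rw [fderiv_clm_apply hd (differentiableAt_const _)]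
    simp
  rw [h2, h2]
  exact (hf.contDiffAt.isSymmSndFDerivAt (by simp only [minSmoothness_of_isRCLikeNormedField]; exact WithTop.coe_le_coe.2 (le_top (a := (2 : ℕ∞))))) _ _

theorem pd_support {f : R3 → ℝ} (hf : HasCompactSupport f) (j : Fin 3) :
    HasCompactSupport (pd f j) := hf.fderiv_apply (𝕜 := ℝ) _

theorem ibp {g h : R3 → ℝ} (hg : Sm g) (hc : HasCompactSupport g) (hh : Sm h) (j : Fin 3) :
    ∫ x, g x * pd h j x = - ∫ x, pd g j x * h x := by
  apply integral_mul_fderiv_eq_neg_fderiv_mul_of_integrable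
  · exact ((hg.pd j).cont.mul hh.cont).integrable_of_hasCompactSupport
      ((pd_support hc j).mul_right)
  · exact (hg.cont.mul (hh.pd j).cont).integrable_of_hasCompactSupport hc.mul_right
  · exact (hg.cont.mul hh.cont).integrable_of_hasCompactSupport hc.mul_right
  · intro x _; exact hg.diff x
  · intro x _; exact hh.diff x

theorem int_mul {g h : R3 → ℝ} (hg : Continuous g) (hc : HasCompactSupport g) (hh : Continuous h) :
    Integrable (fun x => g x * h x) :=
  (hg.mul hh).integrable_of_hasCompactSupport hc.mul_right

/-- integral of `φ f Δ f`. -/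
theorem energy_lap {φ f : R3 → ℝ} (hφ : Sm φ) (hc : HasCompactSupport φ) (hf : Sm f) :
    ∫ x, φ x * (f x * lap f x) =
      - (∫ x, φ x * ∑ j, (pd f j x) ^ 2) + (1 / 2) * ∫ x, lap φ x * (f x) ^ 2 := by
  have e1 : ∀ j, ∫ x, φ x * (f x * pd (pd f j) j x) =
      - (∫ x, φ x * (pd f j x) ^ 2) + (1 / 2) * ∫ x, pd (pd φ j) j x * (f x) ^ 2 := by
    intro j
    have a1 := ibp (hφ.mul' hf) (hc.mul_right) (hf.pd j) j
    have a2 := ibp (hφ.pd j) (pd_support hc j) (hf.mul' hf) j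
    simp only [pd_mul hφ.diff hf.diff, pd_mul hf.diff hf.diff] at a1 a2
    have i1 : Integrable (fun x => pd φ j x * f x * pd f j x) :=
      ((((hφ.pd j).cont.mul hf.cont).mul (hf.pd j).cont)).integrable_of_hasCompactSupport
        ((pd_support hc j).mul_right.mul_right)
    have i2 : Integrable (fun x => φ x * (pd f j x) ^ 2) :=
      int_mul hφ.cont hc ((hf.pd j).cont.pow 2)
    have b1 : ∫ x, (pd φ j x * f x + φ x * pd f j x) * pd f j x =
        (∫ x, pd φ j x * f x * pd f j x) + ∫ x, φ x * (pd f j x) ^ 2 := by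
      rw [← integral_add i1 i2]; congr 1; ext x; ring
    have b2 : ∫ x, pd φ j x * (pd f j x * f x + f x * pd f j x) =
        2 * ∫ x, pd φ j x * f x * pd f j x := by
      rw [← integral_const_mul]; congr 1; ext x; ring
    have b3 : ∫ x, pd (pd φ j) j x * (f x) ^ 2 = ∫ x, pd (pd φ j) j x * (f x * f x) := by
      congr 1; ext x; ring
    have b4 : ∫ x, φ x * (f x * pd (pd f j) j x) = ∫ x, φ x * f x * pd (pd f j) j x := by
      congr 1; ext x; ring
    rw [b3, b4]; linarith
  have s1 : ∫ x, φ x * (f x * lap f x) = ∑ j, ∫ x, φ x * (f x * pd (pd f j) j x) := by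
    rw [← integral_finsetSum]
    · congr 1; ext x; simp only [lap, Finset.mul_sum]
    · intro j _; exact int_mul hφ.cont hc (hf.cont.mul ((hf.pd j).pd j).cont)
  have s2 : ∫ x, φ x * ∑ j, (pd f j x) ^ 2 = ∑ j, ∫ x, φ x * (pd f j x) ^ 2 := by
    rw [← integral_finsetSum]
    · congr 1; ext x; simp only [Finset.mul_sum]
    · intro j _; exact int_mul hφ.cont hc ((hf.pd j).cont.pow 2)
  have s3 : ∫ x, lap φ x * (f x) ^ 2 = ∑ j, ∫ x, pd (pd φ j) j x * (f x) ^ 2 := by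
    rw [← integral_finsetSum]
    · congr 1; ext x; simp only [lap, Finset.sum_mul]
    · intro j _; exact int_mul ((hφ.pd j).pd j).cont (pd_support (pd_support hc j) j) (hf.cont.pow 2)
  rw [s1, s2, s3, Finset.mul_sum, ← Finset.sum_neg_distrib, ← Finset.sum_add_distrib]
  exact Finset.sum_congr rfl fun j _ => e1 j

/-- the integral of a divergence against a cutoff. -/
theorem int_div {φ : R3 → ℝ} {F : Fin 3 → R3 → ℝ} (hφ : Sm φ) (hc : HasCompactSupport φ)
    (hF : ∀ j, Sm (F j)) :
    ∫ x, φ x * ∑ j, pd (F j) j x = - ∫ x, ∑ j, F j x * pd φ j x := by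
  have s1 : ∫ x, φ x * ∑ j, pd (F j) j x = ∑ j, ∫ x, φ x * pd (F j) j x := by
    rw [← integral_finsetSum]
    · congr 1; ext x; simp only [Finset.mul_sum]
    · intro j _; exact int_mul hφ.cont hc ((hF j).pd j).cont
  have s2 : ∫ x, ∑ j, F j x * pd φ j x = ∑ j, ∫ x, pd φ j x * F j x := by
    rw [← integral_finsetSum]
    · congr 1; ext x; simp only [mul_comm]
    · intro j _; exact int_mul (hφ.pd j).cont (pd_support hc j) (hF j).cont
  rw [s1, s2, ← Finset.sum_neg_distrib]
  exact Finset.sum_congr rfl fun j _ => ibp hφ hc (hF j) j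

/-- squared Frobenius norm of the gradient. -/
def en (w : R3 → R3) (x : R3) : ℝ := ∑ i, ∑ j, (pd (fun y => w y i) j x) ^ 2

def sqs (u v : R3 → R3) (θ : R3 → ℝ) (x : R3) : ℝ :=
  (∑ i, (u x i) ^ 2) + (∑ i, (v x i) ^ 2) + (θ x) ^ 2

def Fld (u v : R3 → R3) (pr θ : R3 → ℝ) (j : Fin 3) (x : R3) : ℝ :=
  ((1 / 2) * sqs u v θ x + pr x) * u x j + ((∑ i, u x i * v x i) + θ x) * v x j

theorem pd_sq {f : R3 → ℝ} (hf : Differentiable ℝ f) (j : Fin 3)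
    (x : R3) : pd (fun y => (f y) ^ 2) j x = 2 * f x * pd f j x := by
  have : (fun y => (f y) ^ 2) = fun y => f y * f y := by ext y; ring
  rw [this, pd_mul hf hf]; ring

theorem pd_const_mul {f : R3 → ℝ} (c : ℝ) (hf : Differentiable ℝ f) (j : Fin 3)
    (x : R3) : pd (fun y => c * f y) j x = c * pd f j x := by
  unfold pd
  rw [fderiv_const_mul (hf x)]
  simp

theorem Fld_sm {u v : R3 → R3} {pr θ : R3 → ℝ}
    (hu : ContDiff ℝ (⊤ : ℕ∞) u) (hv : ContDiff ℝ (⊤ : ℕ∞) v)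
    (hpr : ContDiff ℝ (⊤ : ℕ∞) pr) (hθ : ContDiff ℝ (⊤ : ℕ∞) θ) (j : Fin 3) :
    Sm (Fld u v pr θ j) := by
  have a := fun i => Sm.comp_coord hu i
  have b := fun i => Sm.comp_coord hv i
  unfold Sm at a b ⊢
  unfold Fld sqs
  fun_prop

theorem Fld_div {u v : R3 → R3} {pr θ : R3 → ℝ}
    (hu : ContDiff ℝ (⊤ : ℕ∞) u) (hv : ContDiff ℝ (⊤ : ℕ∞) v)
    (hpr : ContDiff ℝ (⊤ : ℕ∞) pr) (hθ : ContDiff ℝ (⊤ : ℕ∞) θ)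
    (hsol : TCM u v pr θ) (x : R3) :
    ∑ j, pd (Fld u v pr θ j) j x =
      (∑ i, u x i * lap (fun y => u y i) x) + (∑ i, v x i * lap (fun y => v y i) x)
        + θ x * lap θ x := by
  have a := fun i => (Sm.comp_coord hu i).diff
  have b := fun i => (Sm.comp_coord hv i).diff
  have c := Sm.diff hpr
  have d := Sm.diff hθ
  obtain ⟨h1, h2, h3, h4⟩ := hsol
  have key : ∀ j, pd (Fld u v pr θ j) j x =
      ((1 / 2) * ((∑ i, 2 * u x i * pd (fun y => u y i) j x) +
        (∑ i, 2 * v x i * pd (fun y => v y i) j x) + 2 * θ x * pd θ j x) + pd pr j x) * u x j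
      + ((1 / 2) * sqs u v θ x + pr x) * pd (fun y => u y j) j x
      + ((∑ i, (pd (fun y => u y i) j x * v x i + u x i * pd (fun y => v y i) j x))
         + pd θ j x) * v x j
      + ((∑ i, u x i * v x i) + θ x) * pd (fun y => v y j) j x := by
    intro j
    unfold Fld
    have ds : Differentiable ℝ (fun x => sqs u v θ x) := by unfold sqs; fun_prop
    rw [pd_add (f := fun x => ((1 / 2) * sqs u v θ x + pr x) * u x j)
      (g := fun x => ((∑ i, u x i * v x i) + θ x) * v x j) (by fun_prop) (by fun_prop),
      pd_mul (f := fun x => (1 / 2) * sqs u v θ x + pr x) (g := fun x => u x j)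
        (by fun_prop) (by fun_prop),
      pd_mul (f := fun x => (∑ i, u x i * v x i) + θ x) (g := fun x => v x j)
        (by fun_prop) (by fun_prop),
      pd_add (f := fun x => (1 / 2) * sqs u v θ x) (g := pr) (by fun_prop) (by fun_prop),
      pd_add (f := fun x => ∑ i, u x i * v x i) (g := θ) (by fun_prop) (by fun_prop),
      pd_const_mul _ ds, pd_sum (f := fun i x => u x i * v x i) (by fun_prop)]
    unfold sqs
    rw [pd_add (f := fun x => (∑ i, (u x i) ^ 2) + (∑ i, (v x i) ^ 2)) (g := fun x => (θ x) ^ 2)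
        (by fun_prop) (by fun_prop),
      pd_add (f := fun x => (∑ i, (u x i) ^ 2)) (g := fun x => (∑ i, (v x i) ^ 2))
        (by fun_prop) (by fun_prop),
      pd_sum (f := fun i x => (u x i) ^ 2) (by fun_prop),
      pd_sum (f := fun i x => (v x i) ^ 2) (by fun_prop), pd_sq d]
    simp only [pd_sq (a _), pd_sq (b _), pd_mul (a _) (b _)]
    ring
  simp only [key]
  have g1 := fun i => h1 i x
  have g2 := fun i => h2 i x
  have g3 := h3 x
  have g4 := h4 x
  simp only [pd_mul (b _) (b _)] at g1
  simp only [Fin.sum_univ_three] at *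
  generalize sqs u v θ x = Q
  linear_combination (u x 0) * g1 0 + (u x 1) * g1 1 + (u x 2) * g1 2 + (v x 0) * g2 0
    + (v x 1) * g2 1 + (v x 2) * g2 2 + θ x * g3 + ((1 / 2) * Q + pr x) * g4

theorem energy_id {u v : R3 → R3} {pr θ : R3 → ℝ}
    (hu : ContDiff ℝ (⊤ : ℕ∞) u) (hv : ContDiff ℝ (⊤ : ℕ∞) v)
    (hpr : ContDiff ℝ (⊤ : ℕ∞) pr) (hθ : ContDiff ℝ (⊤ : ℕ∞) θ)
    (hsol : TCM u v pr θ) {φ : R3 → ℝ} (hφ : Sm φ) (hc : HasCompactSupport φ) :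
    ∫ x, φ x * (en u x + en v x + ∑ j, (pd θ j x) ^ 2) =
      (1 / 2) * (∫ x, lap φ x * sqs u v θ x) + ∫ x, ∑ j, Fld u v pr θ j x * pd φ j x := by
  have a := fun i => Sm.comp_coord hu i
  have b := fun i => Sm.comp_coord hv i
  have h0 := int_div hφ hc (fun j => Fld_sm hu hv hpr hθ j)
  simp only [Fld_div hu hv hpr hθ hsol] at h0
  have lc : HasCompactSupport (lap φ) := by
    unfold lap
    have : (fun x => ∑ j, pd (pd φ j) j x) =
      fun x => pd (pd φ 0) 0 x + pd (pd φ 1) 1 x + pd (pd φ 2) 2 x := by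
      ext x; simp [Fin.sum_univ_three]
    rw [this]
    have k := fun j => pd_support (pd_support hc j) j
    exact ((k 0).add (k 1)).add (k 2)
  have I1 : ∀ f : R3 → ℝ, Sm f → Integrable (fun x => φ x * (f x * lap f x)) := fun f hf =>
    int_mul hφ.cont hc (hf.cont.mul hf.lap.cont)
  have I2 : ∀ f : R3 → ℝ, Sm f → Integrable (fun x => φ x * ∑ j, (pd f j x) ^ 2) := fun f hf =>
    int_mul hφ.cont hc (continuous_finsetSum _ fun j _ => ((hf.pd j).cont.pow 2))
  have I3 : ∀ f : R3 → ℝ, Sm f → Integrable (fun x => lap φ x * (f x) ^ 2) := fun f hf =>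
    int_mul hφ.lap.cont lc (hf.cont.pow 2)
  have s1 : ∫ x, φ x * ((∑ i, u x i * lap (fun y => u y i) x)
      + (∑ i, v x i * lap (fun y => v y i) x) + θ x * lap θ x) =
      (∑ i, ∫ x, φ x * (u x i * lap (fun y => u y i) x)) +
      (∑ i, ∫ x, φ x * (v x i * lap (fun y => v y i) x)) + ∫ x, φ x * (θ x * lap θ x) := by
    rw [← integral_finsetSum _ (fun i _ => I1 _ (a i)), ← integral_finsetSum _ (fun i _ => I1 _ (b i)),
      ← integral_add (integrable_finsetSum _ (fun i _ => I1 _ (a i)))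
        (integrable_finsetSum _ (fun i _ => I1 _ (b i))), ← integral_add _ (I1 _ hθ)]
    · congr 1; ext x; simp only [Finset.mul_sum, mul_add]
    · exact (integrable_finsetSum _ (fun i _ => I1 _ (a i))).add
        (integrable_finsetSum _ (fun i _ => I1 _ (b i)))
  have s2 : ∫ x, φ x * (en u x + en v x + ∑ j, (pd θ j x) ^ 2) =
      (∑ i, ∫ x, φ x * ∑ j, (pd (fun y => u y i) j x) ^ 2) +
      (∑ i, ∫ x, φ x * ∑ j, (pd (fun y => v y i) j x) ^ 2) + ∫ x, φ x * ∑ j, (pd θ j x) ^ 2 := by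
    rw [← integral_finsetSum _ (fun i _ => I2 _ (a i)), ← integral_finsetSum _ (fun i _ => I2 _ (b i)),
      ← integral_add (integrable_finsetSum _ (fun i _ => I2 _ (a i)))
        (integrable_finsetSum _ (fun i _ => I2 _ (b i))), ← integral_add _ (I2 _ hθ)]
    · congr 1; ext x; simp only [en, Finset.mul_sum, mul_add]
    · exact (integrable_finsetSum _ (fun i _ => I2 _ (a i))).add
        (integrable_finsetSum _ (fun i _ => I2 _ (b i)))
  have s3 : ∫ x, lap φ x * sqs u v θ x =
      (∑ i, ∫ x, lap φ x * (u x i) ^ 2) +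
      (∑ i, ∫ x, lap φ x * (v x i) ^ 2) + ∫ x, lap φ x * (θ x) ^ 2 := by
    rw [← integral_finsetSum _ (fun i _ => I3 _ (a i)), ← integral_finsetSum _ (fun i _ => I3 _ (b i)),
      ← integral_add (integrable_finsetSum _ (fun i _ => I3 _ (a i)))
        (integrable_finsetSum _ (fun i _ => I3 _ (b i))), ← integral_add _ (I3 _ hθ)]
    · congr 1; ext x; simp only [sqs, Finset.mul_sum, mul_add]
    · exact (integrable_finsetSum _ (fun i _ => I3 _ (a i))).add
        (integrable_finsetSum _ (fun i _ => I3 _ (b i)))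
  rw [s1] at h0
  rw [s2, s3]
  have e1 := fun i => energy_lap hφ hc (a i)
  have e2 := fun i => energy_lap hφ hc (b i)
  have e3 := energy_lap hφ hc hθ
  simp only [e1, e2, e3, Finset.sum_add_distrib, Finset.sum_neg_distrib, ← Finset.mul_sum] at h0
  linarith

theorem pd_coord (i j : Fin 3) (x : R3) : pd (fun y : R3 => y i) j x = if i = j then 1 else 0 := by
  unfold pd
  have : (fun y : R3 => y i) = fun y => (EuclideanSpace.proj i : R3 →L[ℝ] ℝ) y := by ext y; simp
  rw [this, ContinuousLinearMap.fderiv]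
  simp

theorem sm_coord (i : Fin 3) : Sm (fun y : R3 => y i) := by
  have : (fun y : R3 => y i) = fun y => (EuclideanSpace.proj i : R3 →L[ℝ] ℝ) y := by ext y; simp
  unfold Sm
  rw [this]; exact ContinuousLinearMap.contDiff _

theorem sm_nsq : Sm (fun y : R3 => ‖y‖ ^ 2) := contDiff_id.norm_sq ℝ

theorem pd_nsq (j : Fin 3) (x : R3) : pd (fun y : R3 => ‖y‖ ^ 2) j x = 2 * x j := by
  have : (fun y : R3 => ‖y‖ ^ 2) = fun y => ∑ i, (y i) ^ 2 := by
    ext y; rw [EuclideanSpace.norm_sq_eq]; simp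
  rw [this, pd_sum (f := fun i y => (y i) ^ 2) (fun i => ((sm_coord i).pow 2).differentiable (by simp))]
  simp only [pd_sq (sm_coord _).diff, pd_coord]
  simp

theorem pd_rad {h : ℝ → ℝ} (hh : Differentiable ℝ h) (j : Fin 3) (x : R3) :
    pd (fun y : R3 => h (‖y‖ ^ 2)) j x = 2 * x j * deriv h (‖x‖ ^ 2) := by
  have := pd_nsq j x
  unfold pd at this ⊢
  have h1 : HasFDerivAt (fun y : R3 => h (‖y‖ ^ 2)) _ x :=
    (hh (‖x‖ ^ 2)).hasDerivAt.comp_hasFDerivAt x (sm_nsq.diff x).hasFDerivAt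
  rw [h1.fderiv]
  simp only [ContinuousLinearMap.smul_apply, this, smul_eq_mul]; ring

theorem sm_rad {h : ℝ → ℝ} (hh : ContDiff ℝ (⊤ : ℕ∞) h) : Sm (fun y : R3 => h (‖y‖ ^ 2)) :=
  hh.comp sm_nsq

theorem smd {h : ℝ → ℝ} (hh : ContDiff ℝ (⊤ : ℕ∞) h) : ContDiff ℝ (⊤ : ℕ∞) (deriv h) := by
  have : ContDiff ℝ ((⊤ : ℕ∞) + 1) h := hh
  rw [contDiff_succ_iff_deriv] at this
  exact this.2.2

theorem pd_rad2 {h : ℝ → ℝ} (hh : ContDiff ℝ (⊤ : ℕ∞) h) (i j : Fin 3) (x : R3) :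
    pd (pd (fun y : R3 => h (‖y‖ ^ 2)) i) j x =
      2 * (if i = j then 1 else 0) * deriv h (‖x‖ ^ 2)
        + 4 * x i * x j * deriv (deriv h) (‖x‖ ^ 2) := by
  have e : pd (fun y : R3 => h (‖y‖ ^ 2)) i = fun y => (2 * y i) * deriv h (‖y‖ ^ 2) := by
    ext y; rw [pd_rad (hh.differentiable (by simp))]
  rw [e, pd_mul (f := fun y : R3 => 2 * y i) (g := fun y => deriv h (‖y‖ ^ 2))
    ((sm_coord i).diff.const_mul 2) (sm_rad (smd hh)).diff, pd_const_mul _ (sm_coord i).diff,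
    pd_coord, pd_rad ((smd hh).differentiable (by simp))]
  ring

theorem pd_congr_open {f : R3 → ℝ} {c : ℝ} {U : Set R3} (hU : IsOpen U) (h : ∀ x ∈ U, f x = c)
    (j : Fin 3) : ∀ x ∈ U, pd f j x = 0 := by
  intro x hx
  have : f =ᶠ[nhds x] fun _ => c := by
    filter_upwards [hU.mem_nhds hx] with y hy using h y hy
  unfold pd
  rw [this.fderiv_eq]; simp

/-- supported in the closed unit ball -/
def Sup1 (f : R3 → ℝ) : Prop := ∀ z, 1 < ‖z‖ → f z = 0

theorem Sup1.pd {f : R3 → ℝ} (h : Sup1 f) (j : Fin 3) : Sup1 (pd f j) :=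
  pd_congr_open (U := {z : R3 | 1 < ‖z‖}) (isOpen_lt continuous_const continuous_norm) h j

theorem Sup1.compact {f : R3 → ℝ} (h : Sup1 f) : HasCompactSupport f := by
  apply HasCompactSupport.intro (isCompact_closedBall (0 : R3) 1)
  intro x hx
  apply h
  simpa using hx

theorem Sup1.bound {f : R3 → ℝ} (h : Sup1 f) (hc : Continuous f) :
    ∃ C, 0 ≤ C ∧ ∀ z, |f z| ≤ C * (closedBall (0 : R3) 1).indicator 1 z := by
  obtain ⟨C, hC⟩ := hc.bounded_above_of_compact_support h.compact
  refine ⟨C, (norm_nonneg _).trans (hC 0), fun z => ?_⟩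
  by_cases hz : ‖z‖ ≤ 1
  · have : z ∈ closedBall (0 : R3) 1 := by simpa using hz
    simp only [Set.indicator_of_mem this, Pi.one_apply, mul_one]
    exact hC z
  · have : z ∉ closedBall (0 : R3) 1 := by simpa using hz
    simp [Set.indicator_of_notMem this, h z (not_le.1 hz)]

def hk (s : ℝ) : ℝ := expNegInvGlue (1 - s)

theorem hk_sm : ContDiff ℝ (⊤ : ℕ∞) hk := by
  unfold hk
  exact expNegInvGlue.contDiff.comp (contDiff_const.sub contDiff_id)

def PK (z : R3) : ℝ := hk (‖z‖ ^ 2)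
def rK (z : R3) : ℝ := -2 * deriv hk (‖z‖ ^ 2)

theorem PK_sm : Sm PK := sm_rad hk_sm
theorem rK_sm : Sm rK := contDiff_const.mul (sm_rad (smd hk_sm))

theorem PK_pd (k : Fin 3) (z : R3) : pd PK k z = - (z k * rK z) := by
  unfold PK rK
  rw [pd_rad (hk_sm.differentiable (by simp))]; ring

theorem PK_sup : Sup1 PK := by
  intro z hz
  unfold PK hk
  apply expNegInvGlue.zero_of_nonpos; nlinarith

theorem rK_sup : Sup1 rK := by
  intro z hz
  unfold rK
  have : hk =ᶠ[nhds (‖z‖ ^ 2)] fun _ => 0 := by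
    have h1 : (1 : ℝ) < ‖z‖ ^ 2 := by nlinarith
    filter_upwards [lt_mem_nhds h1] with s hs
    unfold hk
    apply expNegInvGlue.zero_of_nonpos; linarith
  rw [this.deriv_eq]; simp

theorem rK_int : 0 < ∫ z, rK z := by
  have anti : Antitone hk := by
    intro a b hab
    unfold hk
    exact expNegInvGlue.monotone (by linarith)
  have hn : ∀ z, 0 ≤ rK z := by
    intro z
    unfold rK
    have := anti.deriv_nonpos (x := ‖z‖ ^ 2)
    linarith
  have hne : ∃ z, rK z ≠ 0 := by
    by_contra hcon
    push Not at hcon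
    have hd : ∀ s ∈ Set.Ioo (0 : ℝ) 1, deriv hk s = 0 := by
      intro s hs
      have := hcon (EuclideanSpace.single 0 (Real.sqrt s))
      unfold rK at this
      simp only [EuclideanSpace.norm_single, Real.norm_eq_abs, sq_abs, Real.sq_sqrt hs.1.le] at this
      linarith
    obtain ⟨c, hc, he⟩ := exists_deriv_eq_slope hk (zero_lt_one) (hk_sm.continuous.continuousOn)
      (hk_sm.differentiable (by simp)).differentiableOn
    rw [hd c hc] at he
    have p0 : 0 < hk 0 := by unfold hk; exact expNegInvGlue.pos_of_pos (by norm_num)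
    have p1 : hk 1 = 0 := by unfold hk; exact expNegInvGlue.zero_of_nonpos (by norm_num)
    rw [p1] at he
    norm_num at he; linarith
  obtain ⟨z, hz⟩ := hne
  exact rK_sm.cont.integral_pos_of_hasCompactSupport_nonneg_nonzero rK_sup.compact hn hz

def chi (s : ℝ) : ℝ := Real.smoothTransition (1 - s)

theorem chi_sm : ContDiff ℝ (⊤ : ℕ∞) chi := by
  unfold chi
  exact Real.smoothTransition.contDiff.comp (contDiff_const.sub contDiff_id)

theorem chi_deriv_zero {s : ℝ} (hs : 1 < s) :
    deriv chi s = 0 ∧ deriv (deriv chi) s = 0 := by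
  have h0 : ∀ s : ℝ, 1 < s → deriv chi s = 0 := by
    intro s hs
    have : chi =ᶠ[nhds s] fun _ => 0 := by
      filter_upwards [lt_mem_nhds hs] with t ht
      exact Real.smoothTransition.zero_of_nonpos (by linarith)
    rw [this.deriv_eq]; simp
  refine ⟨h0 s hs, ?_⟩
  have : deriv chi =ᶠ[nhds s] fun _ => 0 := by
    filter_upwards [lt_mem_nhds hs] with t ht using h0 t ht
  rw [this.deriv_eq]; simp

theorem chi_deriv_zero' {s : ℝ} (hs : s < 0) :
    deriv chi s = 0 ∧ deriv (deriv chi) s = 0 := by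
  have h0 : ∀ s : ℝ, s < 0 → deriv chi s = 0 := by
    intro s hs
    have : chi =ᶠ[nhds s] fun _ => 1 := by
      filter_upwards [gt_mem_nhds hs] with t ht
      exact Real.smoothTransition.one_of_one_le (by linarith)
    rw [this.deriv_eq]; simp
  refine ⟨h0 s hs, ?_⟩
  have : deriv chi =ᶠ[nhds s] fun _ => 0 := by
    filter_upwards [gt_mem_nhds hs] with t ht using h0 t ht
  rw [this.deriv_eq]; simp

theorem chi_bound : ∃ c, 0 ≤ c ∧ ∀ s, |deriv chi s| ≤ c ∧ |deriv (deriv chi) s| ≤ c := by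
  have c1 : HasCompactSupport (deriv chi) := by
    apply HasCompactSupport.intro (isCompact_Icc (a := (0 : ℝ)) (b := 1))
    intro x hx
    rw [Set.mem_Icc, not_and_or, not_le, not_le] at hx
    rcases hx with h | h
    exacts [(chi_deriv_zero' h).1, (chi_deriv_zero h).1]
  have c2 : HasCompactSupport (deriv (deriv chi)) := by
    apply HasCompactSupport.intro (isCompact_Icc (a := (0 : ℝ)) (b := 1))
    intro x hx
    rw [Set.mem_Icc, not_and_or, not_le, not_le] at hx
    rcases hx with h | h
    exacts [(chi_deriv_zero' h).2, (chi_deriv_zero h).2]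
  obtain ⟨C1, h1⟩ := (smd chi_sm).continuous.bounded_above_of_compact_support c1
  obtain ⟨C2, h2⟩ := (smd (smd chi_sm)).continuous.bounded_above_of_compact_support c2
  exact ⟨max C1 C2, (norm_nonneg _).trans ((h1 0).trans (le_max_left _ _)),
    fun s => ⟨(h1 s).trans (le_max_left _ _), (h2 s).trans (le_max_right _ _)⟩⟩

theorem abs_coord_le (x : R3) (i : Fin 3) : |x i| ≤ ‖x‖ := by
  have := PiLp.norm_apply_le x i
  simpa using this

theorem cutoff : ∃ C, 0 < C ∧ ∀ R ρ τ : ℝ, 0 < R → 37 / 20 * R ≤ ρ → ρ < τ → τ ≤ 39 / 20 * R →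
    ∃ η : R3 → ℝ, Sm η ∧ (∀ x, 0 ≤ η x) ∧ (∀ x, η x ≤ 1) ∧ (∀ x, ‖x‖ ≤ ρ → η x = 1) ∧
      (∀ x, (ρ + τ) / 2 ≤ ‖x‖ → η x = 0) ∧ (∀ j x, |pd η j x| ≤ C / (τ - ρ)) ∧
      (∀ i j x, |pd (pd η i) j x| ≤ C / (τ - ρ) ^ 2) := by
  obtain ⟨c, hc0, hc⟩ := chi_bound
  refine ⟨10 * c + 1, by positivity, ?_⟩
  intro R ρ τ hR h1 h2 h3
  set σ := (ρ + τ) / 2 with hσ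
  set L := σ ^ 2 - ρ ^ 2 with hL
  set D := τ - ρ with hD
  have hD0 : 0 < D := by linarith
  have hDR : D ≤ R := by linarith
  have hLl : 37 / 20 * D * R ≤ L := by
    have : L = (D / 2) * (σ + ρ) := by rw [hL, hD, hσ]; ring
    rw [this]
    have : 37 / 10 * R ≤ σ + ρ := by linarith
    nlinarith
  have hL0 : 0 < L := lt_of_lt_of_le (by positivity) hLl
  set h : ℝ → ℝ := fun t => chi ((t - ρ ^ 2) / L) with hh
  have hsm : ContDiff ℝ (⊤ : ℕ∞) h := chi_sm.comp ((contDiff_id.sub contDiff_const).div_const _)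
  have hd : ∀ (f : ℝ → ℝ), Differentiable ℝ f → ∀ t,
      deriv (fun t => f ((t - ρ ^ 2) / L)) t = deriv f ((t - ρ ^ 2) / L) / L := by
    intro f hf t
    have := ((hf ((t - ρ ^ 2) / L)).hasDerivAt).comp t
      (((hasDerivAt_id t).sub_const (ρ ^ 2)).div_const L)
    have h2 := this.deriv
    simp only [Function.comp_def, id] at h2
    rw [h2]; ring
  have hd1 : deriv h = fun t => deriv chi ((t - ρ ^ 2) / L) / L := by
    ext t; exact hd chi (chi_sm.differentiable (by simp)) t
  have hd2 : ∀ t, deriv (deriv h) t = deriv (deriv chi) ((t - ρ ^ 2) / L) / L ^ 2 := by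
    intro t
    rw [hd1, deriv_div_const, hd (deriv chi) ((smd chi_sm).differentiable (by simp))]
    field_simp
  have big : ∀ x : R3, σ < ‖x‖ → 1 < (‖x‖ ^ 2 - ρ ^ 2) / L := by
    intro x hx
    rw [lt_div_iff₀ hL0, hL]
    have : 0 ≤ σ := by linarith
    nlinarith
  refine ⟨fun x => h (‖x‖ ^ 2), sm_rad hsm, fun x => Real.smoothTransition.nonneg _,
    fun x => Real.smoothTransition.le_one _, ?_, ?_, ?_, ?_⟩
  · intro x hx
    apply Real.smoothTransition.one_of_one_le
    have : (‖x‖ ^ 2 - ρ ^ 2) / L ≤ 0 := by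
      apply div_nonpos_of_nonpos_of_nonneg _ hL0.le
      nlinarith [norm_nonneg x]
    linarith
  · intro x hx
    apply Real.smoothTransition.zero_of_nonpos
    have : 1 ≤ (‖x‖ ^ 2 - ρ ^ 2) / L := by
      rw [le_div_iff₀ hL0, hL]
      have : 0 ≤ σ := by linarith
      nlinarith
    linarith
  · intro j x
    rw [pd_rad (hsm.differentiable (by simp)), hd1]
    by_cases hx : σ < ‖x‖
    · simp only [(chi_deriv_zero (big x hx)).1]; simp; positivity
    · push Not at hx
      have hx2 : |x j| ≤ 2 * R := (abs_coord_le x j).trans (by linarith)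
      rw [abs_mul, abs_mul, abs_div, abs_of_pos hL0, abs_of_pos (by norm_num : (0 : ℝ) < 2)]
      calc 2 * |x j| * (|deriv chi ((‖x‖ ^ 2 - ρ ^ 2) / L)| / L)
          ≤ 2 * (2 * R) * (c / (37 / 20 * D * R)) := by
            gcongr
            exact (hc _).1
        _ = (80 / 37 * c) / D := by field_simp; ring
        _ ≤ _ := by gcongr; linarith
  · intro i j x
    rw [pd_rad2 hsm, hd2, hd1]
    by_cases hx : σ < ‖x‖
    · simp only [(chi_deriv_zero (big x hx)).1, (chi_deriv_zero (big x hx)).2]; simp; positivity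
    · push Not at hx
      have hx2 : ∀ j, |x j| ≤ 2 * R := fun j => (abs_coord_le x j).trans (by linarith)
      have t1 : |2 * (if i = j then (1 : ℝ) else 0) * (deriv chi ((‖x‖ ^ 2 - ρ ^ 2) / L) / L)|
          ≤ 2 * 1 * (c / (37 / 20 * D * D)) := by
        rw [abs_mul, abs_mul, abs_div, abs_of_pos hL0, abs_of_pos (by norm_num : (0 : ℝ) < 2)]
        have : |if i = j then (1 : ℝ) else 0| ≤ 1 := by split_ifs <;> simp
        have hL1 : 37 / 20 * D * D ≤ L := le_trans (by gcongr) hLl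
        gcongr
        exact (hc _).1
      have t2 : |4 * x i * x j * (deriv (deriv chi) ((‖x‖ ^ 2 - ρ ^ 2) / L) / L ^ 2)|
          ≤ 4 * (2 * R) * (2 * R) * (c / (37 / 20 * D * R) ^ 2) := by
        rw [abs_mul, abs_mul, abs_mul, abs_div, abs_of_pos (by positivity : 0 < L ^ 2),
          abs_of_pos (by norm_num : (0 : ℝ) < 4)]
        gcongr
        · exact hx2 i
        · exact hx2 j
        · exact (hc _).2
      calc _ ≤ 2 * 1 * (c / (37 / 20 * D * D)) + 4 * (2 * R) * (2 * R) * (c / (37 / 20 * D * R) ^ 2)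
            := (abs_add_le _ _).trans (add_le_add t1 t2)
        _ = ((40 / 37 + 6400 / 1369) * c) / D ^ 2 := by field_simp; ring
        _ ≤ _ := by gcongr; linarith

theorem lint_scale (G : R3 → ENNReal) (hG : Measurable G) {t : ℝ} (ht : 0 < t) (x : R3) :
    ∫⁻ z, G (x - t • z) = ENNReal.ofReal (t ^ (-3 : ℝ)) * ∫⁻ y, G y := by
  have h1 : ∫⁻ z, G (x - t • z) = ∫⁻ y, (fun w => G (x - w)) y ∂(Measure.map (t • ·) volume) := by
    rw [lintegral_map (by fun_prop) (by fun_prop)]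
  rw [h1, Measure.map_addHaar_smul _ ht.ne', lintegral_smul_measure, lintegral_sub_left_eq_self]
  congr 2
  rw [abs_of_nonneg (by positivity), Real.rpow_neg ht.le]
  congr 1
  have : Module.finrank ℝ R3 = 3 := by simp
  rw [this]; norm_cast

theorem tri_enn (F G : R3 → ENNReal) (hF : Measurable F) (hG : Measurable G) {t p a : ℝ}
    (ht : 0 < t) (hp : 1 < p) (ha : 1 ≤ a) (hpa : 1 ≤ 1 / p + 1 / a) :
    ∫⁻ x, ∫⁻ z, F x * (closedBall (0 : R3) 1).indicator 1 z * G (x - t • z) ≤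
      (ENNReal.ofReal (t ^ (-3 : ℝ)) * ((∫⁻ x, F x ^ p) * ∫⁻ x, G x ^ a)) ^ (1 / p + 1 / a - 1) *
      ((∫⁻ x, F x ^ p) * volume (closedBall (0 : R3) 1)) ^ (1 - 1 / a) *
      (volume (closedBall (0 : R3) 1) * ∫⁻ x, G x ^ a) ^ (1 - 1 / p) := by
  set k : R3 → ENNReal := (closedBall (0 : R3) 1).indicator 1 with hk
  have hkm : Measurable k := measurable_one.indicator measurableSet_closedBall
  have hp0 : 0 < p := by linarith
  have ha0 : 0 < a := by linarith
  have hki : ∫⁻ z, k z = volume (closedBall (0 : R3) 1) := by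
    rw [hk, lintegral_indicator_one measurableSet_closedBall]
  set f : Fin 3 → R3 × R3 → ENNReal := ![fun y => F y.1 ^ p * G (y.1 - t • y.2) ^ a,
    fun y => F y.1 ^ p * k y.2, fun y => k y.2 * G (y.1 - t • y.2) ^ a] with hf
  set e : Fin 3 → ℝ := ![1 / p + 1 / a - 1, 1 - 1 / a, 1 - 1 / p] with he
  have h1p : 1 / p < 1 := by rw [div_lt_one hp0]; exact hp
  have h1a : 1 / a ≤ 1 := by rw [div_le_one ha0]; exact ha
  have h1p0 : 0 < 1 / p := by positivity
  have h1a0 : 0 < 1 / a := by positivity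
  have m0 : Measurable (fun y : R3 × R3 => F y.1 ^ p * G (y.1 - t • y.2) ^ a) := by fun_prop
  have m1 : Measurable (fun y : R3 × R3 => F y.1 ^ p * k y.2) := by fun_prop
  have m2 : Measurable (fun y : R3 × R3 => k y.2 * G (y.1 - t • y.2) ^ a) := by fun_prop
  have key := ENNReal.lintegral_prod_norm_pow_le (μ := (volume : Measure R3).prod volume)
    (Finset.univ : Finset (Fin 3)) (f := f) (p := e)
    (by intro i _; fin_cases i
        · exact m0.aemeasurable
        · exact m1.aemeasurable
        · exact m2.aemeasurable)
    (by simp [he, Fin.sum_univ_three]) (by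
      intro i _; fin_cases i
      · simp [he]; simp at hpa; linarith
      · simp [he]; simp at h1a; linarith
      · simp [he]; simp at h1p; linarith)
  rw [Fin.prod_univ_three] at key
  have i0 : ∫⁻ y, f 0 y ∂((volume : Measure R3).prod volume) =
      ENNReal.ofReal (t ^ (-3 : ℝ)) * ((∫⁻ x, F x ^ p) * ∫⁻ x, G x ^ a) := by
    simp only [hf, Matrix.cons_val_zero]
    rw [lintegral_prod _ m0.aemeasurable]
    have : ∀ x, ∫⁻ y, F x ^ p * G (x - t • y) ^ a =
        F x ^ p * (ENNReal.ofReal (t ^ (-3 : ℝ)) * ∫⁻ y, G y ^ a) := by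
      intro x
      rw [lintegral_const_mul _ (by fun_prop), lint_scale (fun y => G y ^ a) (by fun_prop) ht]
    simp only [this]
    rw [lintegral_mul_const _ (by fun_prop)]; ring
  have i1 : ∫⁻ y, f 1 y ∂((volume : Measure R3).prod volume) =
      ((∫⁻ x, F x ^ p) * volume (closedBall (0 : R3) 1)) := by
    change ∫⁻ y, F y.1 ^ p * k y.2 ∂((volume : Measure R3).prod volume) = _
    rw [lintegral_prod _ m1.aemeasurable]
    simp only [lintegral_const_mul _ hkm, hki]
    rw [lintegral_mul_const _ (by fun_prop)]
  have i2 : ∫⁻ y, f 2 y ∂((volume : Measure R3).prod volume) =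
      (volume (closedBall (0 : R3) 1) * ∫⁻ x, G x ^ a) := by
    change ∫⁻ y, k y.2 * G (y.1 - t • y.2) ^ a ∂((volume : Measure R3).prod volume) = _
    rw [lintegral_prod_symm _ m2.aemeasurable]
    have : ∀ z, ∫⁻ x, k z * G (x - t • z) ^ a = k z * ∫⁻ x, G x ^ a := by
      intro z
      rw [lintegral_const_mul _ (by fun_prop), lintegral_sub_right_eq_self (fun x => G x ^ a)]
    simp only [this]
    rw [lintegral_mul_const _ (by fun_prop), hki]
  rw [i0, i1, i2] at key
  refine le_trans (le_of_eq ?_) key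
  rw [lintegral_prod _ (by
    apply Measurable.aemeasurable
    apply Finset.measurable_prod
    intro i _
    fin_cases i
    · exact m0.pow_const _
    · exact m1.pow_const _
    · exact m2.pow_const _)]
  apply lintegral_congr; intro x
  apply lintegral_congr; intro z
  rw [Fin.prod_univ_three]
  change _ = (F x ^ p * G (x - t • z) ^ a) ^ (1 / p + 1 / a - 1) * (F x ^ p * k z) ^ (1 - 1 / a) *
    (k z * G (x - t • z) ^ a) ^ (1 - 1 / p)
  rw [ENNReal.mul_rpow_of_nonneg _ _ (by linarith), ENNReal.mul_rpow_of_nonneg _ _ (by linarith),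
    ENNReal.mul_rpow_of_nonneg _ _ (by linarith)]
  simp only [← ENNReal.rpow_mul]
  have eF : F x ^ (p * (1 / p + 1 / a - 1)) * F x ^ (p * (1 - 1 / a)) = F x := by
    rw [← ENNReal.rpow_add_of_nonneg _ _ (mul_nonneg hp0.le (by linarith))
      (mul_nonneg hp0.le (by linarith))]
    rw [show p * (1 / p + 1 / a - 1) + p * (1 - 1 / a) = 1 by field_simp; ring, ENNReal.rpow_one]
  have eG : G (x - t • z) ^ (a * (1 / p + 1 / a - 1)) * G (x - t • z) ^ (a * (1 - 1 / p))
      = G (x - t • z) := by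
    rw [← ENNReal.rpow_add_of_nonneg _ _ (mul_nonneg ha0.le (by linarith))
      (mul_nonneg ha0.le (by linarith))]
    rw [show a * (1 / p + 1 / a - 1) + a * (1 - 1 / p) = 1 by field_simp; ring, ENNReal.rpow_one]
  have ek : k z ^ (1 - 1 / a) * k z ^ (1 - 1 / p) = k z := by
    rw [← ENNReal.rpow_add_of_nonneg _ _ (by linarith) (by linarith), hk]
    by_cases hz : z ∈ closedBall (0 : R3) 1
    · simp [Set.indicator_of_mem hz]
    · rw [Set.indicator_of_notMem hz, ENNReal.zero_rpow_of_pos (by linarith)]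
  calc F x * k z * G (x - t • z)
      = (F x ^ (p * (1 / p + 1 / a - 1)) * F x ^ (p * (1 - 1 / a))) *
        (k z ^ (1 - 1 / a) * k z ^ (1 - 1 / p)) *
        (G (x - t • z) ^ (a * (1 / p + 1 / a - 1)) * G (x - t • z) ^ (a * (1 - 1 / p))) := by
          rw [eF, eG, ek]
    _ = _ := by ring


/-- bounded measurable sets -/
def BS (S : Set R3) : Prop := MeasurableSet S ∧ ∃ L, S ⊆ closedBall (0 : R3) L

theorem BS.int {S : Set R3} (hS : BS S) {f : R3 → ℝ} (hf : Continuous f) : IntegrableOn f S := by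
  obtain ⟨L, hL⟩ := hS.2
  exact (hf.continuousOn.integrableOn_compact (isCompact_closedBall 0 L)).mono_set hL

theorem BS.rp {S : Set R3} (hS : BS S) {f : R3 → ℝ} (hf : Continuous f) {p : ℝ}
    (hp : 0 ≤ p) : IntegrableOn (fun x => f x ^ p) S :=
  hS.int (hf.rpow_const (fun _ => Or.inr hp))

theorem lint_pow {S : Set R3} (hS : BS S) {f : R3 → ℝ} (hf : Continuous f) (hf0 : ∀ x, 0 ≤ f x)
    {p : ℝ} (hp : 0 < p) :
    ∫⁻ x, (S.indicator (fun x => ENNReal.ofReal (f x)) x) ^ p = ENNReal.ofReal (∫ x in S, f x ^ p) := by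
  have h1 : ∀ x, (S.indicator (fun x => ENNReal.ofReal (f x)) x) ^ p
      = S.indicator (fun x => ENNReal.ofReal (f x ^ p)) x := by
    intro x
    by_cases hx : x ∈ S
    · simp only [Set.indicator_of_mem hx]
      rw [ENNReal.ofReal_rpow_of_nonneg (hf0 x) hp.le]
    · simp only [Set.indicator_of_notMem hx]
      exact ENNReal.zero_rpow_of_pos hp
  simp only [h1]
  rw [lintegral_indicator hS.1, ofReal_integral_eq_lintegral_ofReal (hS.rp hf hp.le)]
  exact ae_of_all _ fun x => Real.rpow_nonneg (hf0 x) p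

theorem sint_nonneg {S : Set R3} {f : R3 → ℝ} (hf0 : ∀ x, 0 ≤ f x) : 0 ≤ ∫ x in S, f x :=
  integral_nonneg hf0

theorem holder {S : Set R3} (hS : BS S) {f g : R3 → ℝ} (hf : Continuous f) (hf0 : ∀ x, 0 ≤ f x)
    (hg : Continuous g) (hg0 : ∀ x, 0 ≤ g x) {a b : ℝ} (ha : 0 ≤ a) (hb : 0 ≤ b) (hab : a + b = 1) :
    ∫ x in S, f x ^ a * g x ^ b ≤ (∫ x in S, f x) ^ a * (∫ x in S, g x) ^ b := by
  have key := ENNReal.lintegral_mul_norm_pow_le (μ := volume.restrict S)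
    (f := fun x => ENNReal.ofReal (f x)) (g := fun x => ENNReal.ofReal (g x))
    (by fun_prop) (by fun_prop) ha hb hab
  have e1 : ∫⁻ x in S, ENNReal.ofReal (f x) ^ a * ENNReal.ofReal (g x) ^ b =
      ENNReal.ofReal (∫ x in S, f x ^ a * g x ^ b) := by
    rw [ofReal_integral_eq_lintegral_ofReal (f := fun x => f x ^ a * g x ^ b)
      (hS.int ((hf.rpow_const (fun _ => Or.inr ha)).mul (hg.rpow_const (fun _ => Or.inr hb))))
      (ae_of_all _ fun x => mul_nonneg (Real.rpow_nonneg (hf0 x) a) (Real.rpow_nonneg (hg0 x) b))]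
    apply lintegral_congr; intro x
    rw [ENNReal.ofReal_mul (Real.rpow_nonneg (hf0 x) a), ENNReal.ofReal_rpow_of_nonneg (hf0 x) ha,
      ENNReal.ofReal_rpow_of_nonneg (hg0 x) hb]
  rw [e1, ← ofReal_integral_eq_lintegral_ofReal (hS.int hf) (ae_of_all _ hf0),
    ← ofReal_integral_eq_lintegral_ofReal (hS.int hg) (ae_of_all _ hg0),
    ENNReal.ofReal_rpow_of_nonneg (sint_nonneg hf0) ha,
    ENNReal.ofReal_rpow_of_nonneg (sint_nonneg hg0) hb,
    ← ENNReal.ofReal_mul (Real.rpow_nonneg (sint_nonneg hf0) a)] at key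
  exact (ENNReal.ofReal_le_ofReal_iff (mul_nonneg (Real.rpow_nonneg (sint_nonneg hf0) a)
    (Real.rpow_nonneg (sint_nonneg hg0) b))).1 key

/-- volume of the unit ball -/
def V1 : ℝ := (volume (closedBall (0 : R3) 1)).toReal

theorem V1_pos : 0 < V1 :=
  ENNReal.toReal_pos (Metric.measure_closedBall_pos volume 0 one_pos).ne' measure_closedBall_lt_top.ne

theorem tri {S : Set R3} (hS : BS S) {f g ψ κ h : R3 → ℝ} (hf : Continuous f) (hf0 : ∀ x, 0 ≤ f x)
    (hg : Continuous g) (hg0 : ∀ x, 0 ≤ g x) {t p a c C : ℝ}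
    (ht : 0 < t) (hp : 1 < p) (ha : 1 ≤ a) (hpa : 1 ≤ 1 / p + 1 / a) (hc : 0 ≤ c) (hC : 0 ≤ C)
    (hψ : ∀ x, |ψ x| ≤ c * f x) (hκ : ∀ z, |κ z| ≤ C * (closedBall (0 : R3) 1).indicator 1 z)
    (hh : ∀ x ∈ S, |h x| ≤ g x)
    (hsup : ∀ x, ψ x ≠ 0 → x ∈ S ∧ ∀ z : R3, ‖z‖ ≤ 1 → x - t • z ∈ S) :
    |∫ x, ψ x * ∫ z, κ z * h (x - t • z)| ≤
      c * C * V1 ^ (2 - 1 / p - 1 / a) * t ^ (-3 * (1 / p + 1 / a - 1)) *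
        (∫ x in S, f x ^ p) ^ (1 / p) * (∫ x in S, g x ^ a) ^ (1 / a) := by
  have hp0 : 0 < p := by linarith
  have ha0 : 0 < a := by linarith
  set F := S.indicator (fun x => ENNReal.ofReal (f x)) with hF
  set G := S.indicator (fun x => ENNReal.ofReal (g x)) with hG
  have hFm : Measurable F := Measurable.indicator (by fun_prop) hS.1
  have hGm : Measurable G := Measurable.indicator (by fun_prop) hS.1
  have h1p : 1 / p < 1 := by rw [div_lt_one hp0]; exact hp
  have h1a : 1 / a ≤ 1 := by rw [div_le_one ha0]; exact ha
  have key := tri_enn F G hFm hGm ht hp ha hpa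
  set P := ∫ x in S, f x ^ p with hP
  set A := ∫ x in S, g x ^ a with hA
  have hP0 : 0 ≤ P := sint_nonneg fun x => Real.rpow_nonneg (hf0 x) p
  have hA0 : 0 ≤ A := sint_nonneg fun x => Real.rpow_nonneg (hg0 x) a
  have hV : volume (closedBall (0 : R3) 1) = ENNReal.ofReal V1 :=
    (ENNReal.ofReal_toReal measure_closedBall_lt_top.ne).symm
  have ht3 : 0 ≤ t ^ (-3 : ℝ) := by positivity
  rw [hF, hG, lint_pow hS hf hf0 hp0, lint_pow hS hg hg0 ha0, hV, ← hF, ← hG, ← hP, ← hA,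
    ← ENNReal.ofReal_mul hP0, ← ENNReal.ofReal_mul hP0, ← ENNReal.ofReal_mul V1_pos.le,
    ← ENNReal.ofReal_mul ht3,
    ENNReal.ofReal_rpow_of_nonneg (by positivity) (by linarith),
    ENNReal.ofReal_rpow_of_nonneg (mul_nonneg hP0 V1_pos.le) (by linarith),
    ENNReal.ofReal_rpow_of_nonneg (mul_nonneg V1_pos.le hA0) (by linarith),
    ← ENNReal.ofReal_mul (by positivity), ← ENNReal.ofReal_mul (mul_nonneg (by positivity)
      (Real.rpow_nonneg (mul_nonneg hP0 V1_pos.le) _))] at key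
  have eq : (t ^ (-3 : ℝ) * (P * A)) ^ (1 / p + 1 / a - 1) * (P * V1) ^ (1 - 1 / a) *
      (V1 * A) ^ (1 - 1 / p) =
      V1 ^ (2 - 1 / p - 1 / a) * t ^ (-3 * (1 / p + 1 / a - 1)) * P ^ (1 / p) * A ^ (1 / a) := by
    rw [Real.mul_rpow ht3 (by positivity), Real.mul_rpow hP0 hA0, Real.mul_rpow hP0 V1_pos.le,
      Real.mul_rpow V1_pos.le hA0, ← Real.rpow_mul ht.le]
    have e1 : P ^ (1 / p) = P ^ (1 / p + 1 / a - 1) * P ^ (1 - 1 / a) := by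
      rw [← Real.rpow_add_of_nonneg hP0 (by linarith) (by linarith)]; congr 1; ring
    have e2 : A ^ (1 / a) = A ^ (1 / p + 1 / a - 1) * A ^ (1 - 1 / p) := by
      rw [← Real.rpow_add_of_nonneg hA0 (by linarith) (by linarith)]; congr 1; ring
    have e3 : V1 ^ (2 - 1 / p - 1 / a) = V1 ^ (1 - 1 / a) * V1 ^ (1 - 1 / p) := by
      rw [← Real.rpow_add V1_pos]; congr 1; ring
    rw [e1, e2, e3]; ring
  rw [eq] at key
  have hpt : ∀ x, ‖ψ x * ∫ z, κ z * h (x - t • z)‖ₑ ≤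
      ∫⁻ z, ENNReal.ofReal (c * C) * (F x * (closedBall (0 : R3) 1).indicator 1 z * G (x - t • z)) := by
    intro x
    rw [enorm_mul]
    by_cases hx : ψ x = 0
    · simp [hx]
    obtain ⟨hxS, hxz⟩ := hsup x hx
    calc ‖ψ x‖ₑ * ‖∫ z, κ z * h (x - t • z)‖ₑ
        ≤ ‖ψ x‖ₑ * ∫⁻ z, ‖κ z * h (x - t • z)‖ₑ := by
          gcongr; exact enorm_integral_le_lintegral_enorm _
      _ = ∫⁻ z, ‖ψ x‖ₑ * ‖κ z * h (x - t • z)‖ₑ := by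
          rw [lintegral_const_mul' _ _ (by simp)]
      _ ≤ _ := by
          apply lintegral_mono; intro z
          simp only
          by_cases hz : z ∈ closedBall (0 : R3) 1
          · have hzS := hxz z (by simpa using hz)
            rw [hF, hG, Set.indicator_of_mem hz, Set.indicator_of_mem hxS,
              Set.indicator_of_mem hzS]
            have k1 := hκ z
            rw [Set.indicator_of_mem hz] at k1
            simp only [Pi.one_apply, mul_one] at k1 ⊢
            rw [← ofReal_norm, ← ofReal_norm, ← ENNReal.ofReal_mul (norm_nonneg _),
              ← ENNReal.ofReal_mul (hf0 x), ← ENNReal.ofReal_mul (by positivity)]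
            apply ENNReal.ofReal_le_ofReal
            rw [norm_mul, Real.norm_eq_abs, Real.norm_eq_abs, Real.norm_eq_abs]
            calc |ψ x| * (|κ z| * |h (x - t • z)|) ≤ (c * f x) * (C * g (x - t • z)) := by
                  apply mul_le_mul (hψ x) _ (by positivity) (mul_nonneg hc (hf0 x))
                  exact mul_le_mul k1 (hh _ hzS) (abs_nonneg _) hC
              _ = _ := by ring
          · have k1 := hκ z
            rw [Set.indicator_of_notMem hz] at k1
            have : κ z = 0 := by simpa using k1
            simp [this]
  have fin : ‖∫ x, ψ x * ∫ z, κ z * h (x - t • z)‖ₑ ≤ ENNReal.ofReal (c * C) * ENNReal.ofReal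
      (V1 ^ (2 - 1 / p - 1 / a) * t ^ (-3 * (1 / p + 1 / a - 1)) * P ^ (1 / p) * A ^ (1 / a)) := by
    refine (enorm_integral_le_lintegral_enorm _).trans ?_
    refine (lintegral_mono hpt).trans ?_
    have : ∀ x, ∫⁻ z, ENNReal.ofReal (c * C) * (F x * (closedBall (0 : R3) 1).indicator 1 z *
        G (x - t • z)) = ENNReal.ofReal (c * C) * ∫⁻ z, (F x * (closedBall (0 : R3) 1).indicator 1 z *
        G (x - t • z)) := by
      intro x; rw [lintegral_const_mul' _ _ (by simp)]
    simp only [this]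
    rw [lintegral_const_mul' _ _ (by simp)]
    gcongr
  rw [← ENNReal.ofReal_mul (by positivity), ← ofReal_norm, Real.norm_eq_abs,
    ENNReal.ofReal_le_ofReal_iff (by have := V1_pos; positivity)] at fin
  refine fin.trans (le_of_eq ?_)
  ring

theorem param_deriv {E : Type*} [TopologicalSpace E] [MeasurableSpace E]
    [OpensMeasurableSpace E] [SecondCountableTopology E] (μ : Measure E)
    [IsFiniteMeasureOnCompacts μ] {k : E → ℝ} (hk : Continuous k) (hkc : HasCompactSupport k)
    {Fn Fn' : E → ℝ → ℝ} (hF : Continuous fun y : E × ℝ => Fn y.1 y.2)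
    (hF' : Continuous fun y : E × ℝ => Fn' y.1 y.2)
    (hd : ∀ e t, HasDerivAt (Fn e) (Fn' e t) t) (t : ℝ) :
    HasDerivAt (fun t => ∫ e, k e * Fn e t ∂μ) (∫ e, k e * Fn' e t ∂μ) t := by
  obtain ⟨C, hC⟩ := (IsCompact.prod hkc (isCompact_Icc (a := t - 1) (b := t + 1))).exists_bound_of_continuousOn
    hF'.continuousOn
  have hFc : ∀ t, Continuous fun e => Fn e t := fun t =>
    hF.comp (continuous_id.prodMk continuous_const)
  have hFc' : ∀ t, Continuous fun e => Fn' e t := fun t =>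
    hF'.comp (continuous_id.prodMk continuous_const)
  refine (hasDerivAt_integral_of_dominated_loc_of_deriv_le (μ := μ) (bound := fun e => ‖k e‖ * C)
    (F := fun t e => k e * Fn e t) (F' := fun t e => k e * Fn' e t) (s := Set.Icc (t - 1) (t + 1))
    (Icc_mem_nhds (by linarith) (by linarith)) ?_ ?_ ?_ ?_ ?_ ?_).2
  · exact Eventually.of_forall fun t => (hk.mul (hFc t)).aestronglyMeasurable
  · exact (hk.mul (hFc t)).integrable_of_hasCompactSupport hkc.mul_right
  · exact (hk.mul (hFc' t)).aestronglyMeasurable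
  · refine ae_of_all _ fun e s hs => ?_
    rw [norm_mul]
    by_cases he : e ∈ tsupport k
    · exact mul_le_mul_of_nonneg_left (hC (e, s) ⟨he, hs⟩) (norm_nonneg _)
    · rw [image_eq_zero_of_notMem_tsupport he]; simp
  · exact (hk.norm.mul continuous_const).integrable_of_hasCompactSupport
      (hkc.norm.mul_right)
  · exact ae_of_all _ fun e s _ => (hd e s).const_mul _

theorem param_cont {E : Type*} [TopologicalSpace E] [MeasurableSpace E]
    [OpensMeasurableSpace E] [SecondCountableTopology E] (μ : Measure E)
    [IsLocallyFiniteMeasure μ] [IsFiniteMeasureOnCompacts μ] {k : E → ℝ} (hk : Continuous k) (hkc : HasCompactSupport k)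
    {Fn : E → ℝ → ℝ} (hF : Continuous fun y : E × ℝ => Fn y.1 y.2) :
    Continuous (fun t => ∫ e, k e * Fn e t ∂μ) := by
  have : ∀ t, ∫ e, k e * Fn e t ∂μ = ∫ e in tsupport k, k e * Fn e t ∂μ := by
    intro t
    rw [setIntegral_eq_integral_of_forall_compl_eq_zero]
    intro x hx
    rw [image_eq_zero_of_notMem_tsupport hx, zero_mul]
  simp only [this]
  apply continuous_parametric_integral_of_continuous _ hkc
  exact (hk.comp continuous_snd).mul (hF.comp (continuous_snd.prodMk continuous_fst))

theorem mono_bound {M Φ M' Φ' : ℝ → ℝ} {a b : ℝ} (hab : a ≤ b) (hM : ContinuousOn M (Set.Icc a b))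
    (hΦ : ContinuousOn Φ (Set.Icc a b)) (hM' : ∀ t ∈ Set.Ioo a b, HasDerivAt M (M' t) t)
    (hΦ' : ∀ t ∈ Set.Ioo a b, HasDerivAt Φ (Φ' t) t) (h : ∀ t ∈ Set.Ioo a b, |M' t| ≤ Φ' t) :
    |M b - M a| ≤ Φ b - Φ a := by
  have h1 : MonotoneOn (fun t => Φ t - M t) (Set.Icc a b) := by
    apply monotoneOn_of_hasDerivWithinAt_nonneg (convex_Icc a b) (hΦ.sub hM)
      (f' := fun t => Φ' t - M' t)
    · intro t ht; rw [interior_Icc] at ht ⊢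
      exact ((hΦ' t ht).sub (hM' t ht)).hasDerivWithinAt
    · intro t ht; rw [interior_Icc] at ht
      have := (abs_le.1 (h t ht)).2; linarith
  have h2 : MonotoneOn (fun t => Φ t + M t) (Set.Icc a b) := by
    apply monotoneOn_of_hasDerivWithinAt_nonneg (convex_Icc a b) (hΦ.add hM)
      (f' := fun t => Φ' t + M' t)
    · intro t ht; rw [interior_Icc] at ht ⊢
      exact ((hΦ' t ht).add (hM' t ht)).hasDerivWithinAt
    · intro t ht; rw [interior_Icc] at ht
      have := (abs_le.1 (h t ht)).1; linarith
  have a1 := h1 ⟨le_rfl, hab⟩ ⟨hab, le_rfl⟩ hab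
  have a2 := h2 ⟨le_rfl, hab⟩ ⟨hab, le_rfl⟩ hab
  simp only at a1 a2
  rw [abs_le]; constructor <;> linarith

theorem split_bound {k : ℝ → ℝ} (hk : Continuous k) {A B a b l T : ℝ} (ha : 0 < a) (hb : 0 < b)
    (hl : 0 < l) (hT : 0 ≤ T) (hA : 0 ≤ A) (hB : 0 ≤ B)
    (h1 : ∀ t ∈ Set.Ioo 0 T, |k t| ≤ A * t ^ (a - 1))
    (h2 : ∀ t ∈ Set.Ioo 0 T, |k t| ≤ B * t ^ (-1 - b)) :
    |∫ t in (0:ℝ)..T, k t| ≤ A * l ^ a / a + B * l ^ (-b) / b := by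
  have hN : ∀ t, HasDerivAt (fun s => ∫ y in (0:ℝ)..s, k y) (k t) t := fun t =>
    intervalIntegral.integral_hasDerivAt_right (hk.intervalIntegrable _ _)
      (hk.stronglyMeasurableAtFilter _ _) hk.continuousAt
  set N := fun s => ∫ y in (0:ℝ)..s, k y with hNdef
  have hNc : Continuous N := continuous_iff_continuousAt.2 fun t => (hN t).continuousAt
  have near : ∀ s, 0 ≤ s → s ≤ T → |N s| ≤ A * s ^ a / a := by
    intro s hs hsT
    have := mono_bound (M := N) (Φ := fun t => A * t ^ a / a) (M' := k)
      (Φ' := fun t => A * t ^ (a - 1)) hs hNc.continuousOn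
      (by
        apply Continuous.continuousOn
        exact (continuous_const.mul (continuous_id.rpow_const fun _ => Or.inr ha.le)).div_const _)
      (fun t _ => hN t)
      (fun t ht => by
        have := ((Real.hasDerivAt_rpow_const (p := a) (Or.inl ht.1.ne')).const_mul A).div_const a
        refine this.congr_deriv ?_
        field_simp)
      (fun t ht => h1 t ⟨ht.1, ht.2.trans_le hsT⟩)
    simpa [hNdef, Real.zero_rpow ha.ne'] using this
  rcases le_total T l with hTl | hTl
  · refine (near T hT le_rfl).trans ?_
    have : T ^ a ≤ l ^ a := Real.rpow_le_rpow hT hTl ha.le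
    have h3 : A * T ^ a / a ≤ A * l ^ a / a := by gcongr
    have : 0 ≤ B * l ^ (-b) / b := by positivity
    linarith
  · have n1 := near l hl.le hTl
    have n2 := mono_bound (M := N) (Φ := fun t => -(B * t ^ (-b) / b)) (M' := k)
      (Φ' := fun t => B * t ^ (-1 - b)) hTl hNc.continuousOn
      (by
        intro t ht
        apply ContinuousAt.continuousWithinAt
        have : t ≠ 0 := (hl.trans_le ht.1).ne'
        exact (((continuousAt_id.rpow_const (Or.inl this)).const_mul B).div_const b).neg)
      (fun t _ => hN t)
      (fun t ht => by
        have ht0 := hl.trans ht.1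
        have := (((Real.hasDerivAt_rpow_const (p := -b) (Or.inl ht0.ne')).const_mul B).div_const b).neg
        refine this.congr_deriv ?_
        rw [show -1 - b = -b - 1 by ring]; field_simp)
      (fun t ht => h2 t ⟨hl.trans ht.1, ht.2⟩)
    have : 0 ≤ B * T ^ (-b) / b := by have := hl.trans_le hTl; positivity
    have e : N T = (N T - N l) + N l := by ring
    change |N T| ≤ _
    rw [e]
    refine (abs_add_le _ _).trans ?_
    linarith

/-- trilinear form -/
def T3 (ψ κ h : R3 → ℝ) (t : ℝ) : ℝ := ∫ x, ψ x * ∫ z, κ z * h (x - t • z)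

theorem prodsupp {ψ κ : R3 → ℝ} (hψ : HasCompactSupport ψ) (hκ : HasCompactSupport κ) :
    HasCompactSupport (fun y : R3 × R3 => ψ y.1 * κ y.2) := by
  apply HasCompactSupport.intro (IsCompact.prod hψ hκ)
  intro y hy
  rw [Set.mem_prod, not_and_or] at hy
  rcases hy with h | h
  · rw [image_eq_zero_of_notMem_tsupport h, zero_mul]
  · rw [image_eq_zero_of_notMem_tsupport h, mul_zero]

theorem T3_prod {ψ κ h : R3 → ℝ} (hψ : Continuous ψ) (hψc : HasCompactSupport ψ)
    (hκ : Continuous κ) (hκc : HasCompactSupport κ) (hh : Continuous h) (t : ℝ) :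
    T3 ψ κ h t = ∫ y : R3 × R3, (ψ y.1 * κ y.2) * h (y.1 - t • y.2) := by
  rw [Measure.volume_eq_prod, integral_prod]
  · unfold T3
    congr 1; ext x
    rw [← integral_const_mul]
    congr 1; ext z; ring
  · apply Continuous.integrable_of_hasCompactSupport
    · fun_prop
    · exact (prodsupp hψc hκc).mul_right

theorem T3_int {ψ κ h : R3 → ℝ} (hψ : Continuous ψ) (hψc : HasCompactSupport ψ)
    (hκ : Continuous κ) (hκc : HasCompactSupport κ) (hh : Continuous h) (t : ℝ) :
    Integrable (fun y : R3 × R3 => (ψ y.1 * κ y.2) * h (y.1 - t • y.2)) := by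
  apply Continuous.integrable_of_hasCompactSupport
  · fun_prop
  · exact (prodsupp hψc hκc).mul_right

theorem T3_cont {ψ κ h : R3 → ℝ} (hψ : Continuous ψ) (hψc : HasCompactSupport ψ)
    (hκ : Continuous κ) (hκc : HasCompactSupport κ) (hh : Continuous h) :
    Continuous (T3 ψ κ h) := by
  have : T3 ψ κ h = fun t => ∫ y : R3 × R3, (ψ y.1 * κ y.2) * h (y.1 - t • y.2) := by
    ext t; exact T3_prod hψ hψc hκ hκc hh t
  rw [this]
  exact param_cont (volume : Measure (R3 × R3)) (k := fun y : R3 × R3 => ψ y.1 * κ y.2)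
    (Fn := fun y t => h (y.1 - t • y.2)) (by fun_prop) (prodsupp hψc hκc) (by fun_prop)

theorem fderiv_csum {f : R3 → ℝ} (x w : R3) : fderiv ℝ f x w = ∑ k, w k * pd f k x := by
  have hw : w = ∑ k, w k • (EuclideanSpace.single k (1 : ℝ) : R3) := by
    ext i
    fin_cases i <;> simp [Fin.sum_univ_three]
  unfold pd
  conv_lhs => rw [hw]
  rw [map_sum]
  simp

theorem line_deriv {f : R3 → ℝ} (hf : Sm f) (x z : R3) (t : ℝ) :
    HasDerivAt (fun t : ℝ => f (x - t • z)) (-∑ k, z k * pd f k (x - t • z)) t := by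
  have h1 : HasDerivAt (fun t : ℝ => x - t • z) (-z) t := by
    have := ((hasDerivAt_id t).smul_const z).const_sub x
    simpa using this
  have := (hf.diff (x - t • z)).hasFDerivAt.comp_hasDerivAt t h1
  rw [fderiv_csum] at this
  refine HasDerivAt.congr_deriv this ?_
  simp

theorem T3_deriv {ψ f : R3 → ℝ} (hψ : Continuous ψ) (hψc : HasCompactSupport ψ)
    (hf : Sm f) (t : ℝ) :
    HasDerivAt (T3 ψ rK f) (∑ k, T3 ψ (pd PK k) (pd f k) t) t := by
  have e : T3 ψ rK f = fun t => ∫ y : R3 × R3, (ψ y.1 * rK y.2) * f (y.1 - t • y.2) := by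
    ext t; exact T3_prod hψ hψc rK_sm.cont rK_sup.compact hf.cont t
  rw [e]
  have hpc : ∀ k, Continuous (pd f k) := fun k => (hf.pd k).cont
  have rc := rK_sm.cont
  have fc := hf.cont
  have := param_deriv (volume : Measure (R3 × R3)) (k := fun y : R3 × R3 => ψ y.1 * rK y.2)
    (Fn := fun y t => f (y.1 - t • y.2)) (Fn' := fun y t => -∑ k, y.2 k * pd f k (y.1 - t • y.2))
    (by fun_prop) (prodsupp hψc rK_sup.compact) (by fun_prop) (by fun_prop)
    (fun y t => line_deriv hf y.1 y.2 t) t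
  convert this using 1
  simp only [T3_prod hψ hψc (PK_sm.pd _).cont (PK_sup.pd _).compact (hpc _)]
  rw [← integral_finsetSum _ fun k _ => T3_int hψ hψc (PK_sm.pd k).cont (PK_sup.pd k).compact (hpc k) t]
  congr 1; ext y
  rw [← Finset.sum_neg_distrib, Finset.mul_sum]
  apply Finset.sum_congr rfl; intro k _
  rw [PK_pd]; ring

theorem T3_sum {ψ κ : R3 → ℝ} {H : Fin 3 → R3 → ℝ} (hψ : Continuous ψ) (hψc : HasCompactSupport ψ)
    (hκ : Continuous κ) (hκc : HasCompactSupport κ) (hh : ∀ j, Continuous (H j)) (t : ℝ) :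
    T3 ψ κ (fun y => ∑ j, H j y) t = ∑ j, T3 ψ κ (H j) t := by
  simp only [T3_prod hψ hψc hκ hκc (hh _)]
  rw [T3_prod hψ hψc hκ hκc (by fun_prop),
    ← integral_finsetSum _ fun k _ => T3_int hψ hψc hκ hκc (hh k) t]
  congr 1; ext y; rw [Finset.mul_sum]

theorem T3_sub {ψ κ f g : R3 → ℝ} (hψ : Continuous ψ) (hψc : HasCompactSupport ψ)
    (hκ : Continuous κ) (hκc : HasCompactSupport κ) (hf : Continuous f) (hg : Continuous g) (t : ℝ) :
    T3 ψ κ (fun y => f y - g y) t = T3 ψ κ f t - T3 ψ κ g t := by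
  rw [T3_prod hψ hψc hκ hκc hf, T3_prod hψ hψc hκ hκc hg, T3_prod (h := fun y => f y - g y) hψ hψc hκ hκc (hf.sub hg),
    ← integral_sub (T3_int hψ hψc hκ hκc hf t) (T3_int hψ hψc hκ hκc hg t)]
  congr 1; ext y; ring

theorem sm_shift {f : R3 → ℝ} (hf : Sm f) (x : R3) (t : ℝ) : Sm (fun z => f (x - t • z)) :=
  hf.comp (contDiff_const.sub (contDiff_id.const_smul t))

theorem pd_shift {f : R3 → ℝ} (hf : Sm f) (x : R3) (t : ℝ) (j : Fin 3) (z : R3) :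
    pd (fun z => f (x - t • z)) j z = - (t * pd f j (x - t • z)) := by
  unfold pd
  have h1 : HasFDerivAt (fun z : R3 => x - t • z) (-(t • ContinuousLinearMap.id ℝ R3)) z := by
    have := ((hasFDerivAt_id (𝕜 := ℝ) z).const_smul t).const_sub x
    simpa using this
  have := (hf.diff (x - t • z)).hasFDerivAt.comp z h1
  rw [show (fun z => f (x - t • z)) = f ∘ (fun z => x - t • z) from rfl, this.fderiv]
  simp

theorem ibp_shift {κ f : R3 → ℝ} (hκ : Sm κ) (hκc : HasCompactSupport κ) (hf : Sm f) (x : R3)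
    (t : ℝ) (j : Fin 3) :
    t * ∫ z, κ z * pd f j (x - t • z) = ∫ z, pd κ j z * f (x - t • z) := by
  have := ibp hκ hκc (sm_shift hf x t) j
  simp only [pd_shift hf] at this
  rw [← integral_const_mul]
  have e : ∫ z, κ z * -(t * pd f j (x - t • z)) = - ∫ z, t * (κ z * pd f j (x - t • z)) := by
    rw [← integral_neg]; congr 1; ext z; ring
  rw [e] at this; linarith

theorem T3_ibp {ψ κ f : R3 → ℝ} (hκ : Sm κ) (hκc : HasCompactSupport κ) (hf : Sm f)
    (t : ℝ) (j : Fin 3) : t * T3 ψ κ (pd f j) t = T3 ψ (pd κ j) f t := by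
  unfold T3
  rw [← integral_const_mul]
  congr 1; ext x
  rw [← ibp_shift hκ hκc hf]; ring

def gq (w : R3 → R3) (j k : Fin 3) (y : R3) : ℝ := w y j * w y k

theorem gq_sm {w : R3 → R3} (hw : ContDiff ℝ (⊤ : ℕ∞) w) (j k : Fin 3) : Sm (gq w j k) :=
  (Sm.comp_coord hw j).mul' (Sm.comp_coord hw k)

theorem grad_eq {u v : R3 → R3} {pr θ : R3 → ℝ} (hu : ContDiff ℝ (⊤ : ℕ∞) u)
    (hsol : TCM u v pr θ) (k : Fin 3) :
    pd pr k = fun x => (lap (fun y => u y k) x - ∑ j, pd (gq u j k) j x) - ∑ j, pd (gq v j k) j x := by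
  ext x
  have h1 := hsol.1 k x
  have h4 := hsol.2.2.2 x
  have e : ∑ j, pd (gq u j k) j x = (∑ j, u x j * pd (fun y => u y k) j x)
      + u x k * ∑ j, pd (fun y => u y j) j x := by
    rw [Finset.mul_sum, ← Finset.sum_add_distrib]
    apply Finset.sum_congr rfl; intro j _
    unfold gq
    rw [pd_mul (Sm.comp_coord hu j).diff (Sm.comp_coord hu k).diff]; ring
  rw [h4] at e
  have e2 : ∑ j, pd (gq v j k) j x = ∑ j, pd (fun y => v y j * v y k) j x := rfl
  rw [e, e2]; linarith

theorem lap_div {u : R3 → R3} (hu : ContDiff ℝ (⊤ : ℕ∞) u)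
    (hdiv : ∀ x, (∑ j, pd (fun y => u y j) j x) = 0) (x : R3) :
    ∑ k, pd (lap (fun y => u y k)) k x = 0 := by
  have h0 : ∀ j x, ∑ k, pd (pd (pd (fun y => u y k) k) j) j x = 0 := by
    intro j x
    have hs : (fun x => ∑ k, pd (fun y => u y k) k x) = fun _ => 0 := by ext x; exact hdiv x
    have h1 : (fun x => ∑ k, pd (pd (fun y => u y k) k) j x) = fun _ => 0 := by
      ext x
      rw [← pd_sum (fun k => ((Sm.comp_coord hu k).pd k).diff), hs]
      simp [pd]
    rw [← pd_sum (f := fun k => pd (pd (fun y => u y k) k) j)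
      (fun k => (((Sm.comp_coord hu k).pd k).pd j).diff), h1]
    simp [pd]
  have h2 : ∀ k, pd (lap (fun y => u y k)) k x = ∑ j, pd (pd (pd (fun y => u y k) k) j) j x := by
    intro k
    have : lap (fun y => u y k) = fun x => ∑ j, pd (pd (fun y => u y k) j) j x := rfl
    rw [this, pd_sum (f := fun j => pd (pd (fun y => u y k) j) j)
      (fun j => (((Sm.comp_coord hu k).pd j).pd j).diff)]
    apply Finset.sum_congr rfl; intro j _
    rw [pd_comm ((Sm.comp_coord hu k).pd j) j k]
    have : pd (pd (fun y => u y k) j) k = pd (pd (fun y => u y k) k) j := by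
      ext x; exact pd_comm (Sm.comp_coord hu k) j k x
    rw [this]
  simp only [h2]
  rw [Finset.sum_comm]
  simp only [h0]; simp

theorem visc_zero {u : R3 → R3} {ψ : R3 → ℝ} (hψ : Continuous ψ) (hψc : HasCompactSupport ψ)
    (hu : ContDiff ℝ (⊤ : ℕ∞) u)
    (hdiv : ∀ x, (∑ j, pd (fun y => u y j) j x) = 0) (t : ℝ) :
    ∑ k, T3 ψ (pd PK k) (lap (fun y => u y k)) t = 0 := by
  have h1 : ∀ k, T3 ψ (pd PK k) (lap (fun y => u y k)) t =
      t * T3 ψ PK (pd (lap (fun y => u y k)) k) t := fun k =>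
    (T3_ibp PK_sm PK_sup.compact (Sm.comp_coord hu k).lap t k).symm
  simp only [h1]
  rw [← Finset.mul_sum, ← T3_sum (H := fun k => pd (lap (fun y => u y k)) k) hψ hψc PK_sm.cont
    PK_sup.compact (fun k => ((Sm.comp_coord hu k).lap.pd k).cont)]
  simp only [lap_div hu hdiv]
  simp [T3]

def Kw (w : R3 → R3) (ψ : R3 → ℝ) (t : ℝ) : ℝ :=
  ∑ k, ∑ j, T3 ψ (pd PK k) (pd (gq w j k) j) t

theorem Kw_cont {w : R3 → R3} {ψ : R3 → ℝ} (hψ : Continuous ψ) (hψc : HasCompactSupport ψ)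
    (hw : ContDiff ℝ (⊤ : ℕ∞) w) : Continuous (Kw w ψ) := by
  unfold Kw
  refine continuous_finsetSum _ fun k _ => continuous_finsetSum _ fun j _ => ?_
  exact T3_cont hψ hψc (PK_sm.pd k).cont (PK_sup.pd k).compact ((gq_sm hw j k).pd j).cont

theorem press_deriv {u v : R3 → R3} {pr θ ψ : R3 → ℝ} (hψ : Continuous ψ) (hψc : HasCompactSupport ψ)
    (hu : ContDiff ℝ (⊤ : ℕ∞) u) (hv : ContDiff ℝ (⊤ : ℕ∞) v) (hpr : Sm pr)
    (hsol : TCM u v pr θ) (t : ℝ) :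
    HasDerivAt (T3 ψ rK pr) (-(Kw u ψ t + Kw v ψ t)) t := by
  refine (T3_deriv hψ hψc hpr t).congr_deriv ?_
  have hc1 : ∀ w : R3 → R3, ContDiff ℝ (⊤ : ℕ∞) w → ∀ k j, Continuous (pd (gq w j k) j) :=
    fun w hw k j => ((gq_sm hw j k).pd j).cont
  have h1 : ∀ k, T3 ψ (pd PK k) (pd pr k) t = T3 ψ (pd PK k) (lap (fun y => u y k)) t
      - (∑ j, T3 ψ (pd PK k) (pd (gq u j k) j) t) - ∑ j, T3 ψ (pd PK k) (pd (gq v j k) j) t := by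
    intro k
    have c1 := (PK_sm.pd k).cont
    have c2 := (PK_sup.pd k).compact
    have c3 := (Sm.comp_coord hu k).lap.cont
    rw [grad_eq hu hsol k, T3_sub
      (f := fun x => lap (fun y => u y k) x - ∑ j, pd (gq u j k) j x)
      (g := fun x => ∑ j, pd (gq v j k) j x) hψ hψc c1 c2
      (c3.sub (continuous_finsetSum _ fun j _ => hc1 u hu k j))
      (continuous_finsetSum _ fun j _ => hc1 v hv k j), T3_sub (f := lap (fun y => u y k))
      (g := fun x => ∑ j, pd (gq u j k) j x) hψ hψc c1 c2 c3
      (continuous_finsetSum _ fun j _ => hc1 u hu k j),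
      T3_sum hψ hψc c1 c2 (hc1 u hu k), T3_sum hψ hψc c1 c2 (hc1 v hv k)]
  simp only [h1]
  rw [Finset.sum_sub_distrib, Finset.sum_sub_distrib, visc_zero hψ hψc hu hsol.2.2.2]
  unfold Kw; ring

theorem en_nonneg (w : R3 → R3) (x : R3) : 0 ≤ en w x := by
  unfold en; positivity

theorem pd_le_en (w : R3 → R3) (i j : Fin 3) (x : R3) :
    |pd (fun y => w y i) j x| ≤ √(en w x) := by
  rw [← Real.sqrt_sq_eq_abs]
  apply Real.sqrt_le_sqrt
  unfold en
  calc (pd (fun y => w y i) j x) ^ 2 ≤ ∑ j, (pd (fun y => w y i) j x) ^ 2 :=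
        Finset.single_le_sum (f := fun j => (pd (fun y => w y i) j x) ^ 2)
          (fun _ _ => sq_nonneg _) (Finset.mem_univ j)
    _ ≤ _ := Finset.single_le_sum (f := fun i => ∑ j, (pd (fun y => w y i) j x) ^ 2)
          (fun _ _ => Finset.sum_nonneg fun _ _ => sq_nonneg _) (Finset.mem_univ i)

theorem en_cont {w : R3 → R3} (hw : ContDiff ℝ (⊤ : ℕ∞) w) : Continuous (en w) := by
  unfold en
  refine continuous_finsetSum _ fun i _ => continuous_finsetSum _ fun j _ => ?_
  exact ((Sm.comp_coord hw i).pd j).cont.pow 2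

theorem gq_le (w : R3 → R3) (j k : Fin 3) (x : R3) : |gq w j k x| ≤ ‖w x‖ ^ 2 := by
  unfold gq
  rw [abs_mul, sq]
  exact mul_le_mul (abs_coord_le _ _) (abs_coord_le _ _) (abs_nonneg _) (norm_nonneg _)

theorem pd_gq_le {w : R3 → R3} (hw : ContDiff ℝ (⊤ : ℕ∞) w) (j k l : Fin 3) (x : R3) :
    |pd (gq w j k) l x| ≤ 2 * (‖w x‖ * √(en w x)) := by
  unfold gq
  rw [pd_mul (Sm.comp_coord hw j).diff (Sm.comp_coord hw k).diff]
  refine (abs_add_le _ _).trans ?_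
  rw [abs_mul, abs_mul]
  have h1 := mul_le_mul (pd_le_en w j l x) (abs_coord_le (w x) k) (abs_nonneg _) (Real.sqrt_nonneg _)
  have h2 := mul_le_mul (abs_coord_le (w x) j) (pd_le_en w k l x) (abs_nonneg _) (norm_nonneg _)
  linarith

theorem PK2_bound : ∃ C, 0 ≤ C ∧ (∀ k z, |pd PK k z| ≤ C * (closedBall (0 : R3) 1).indicator 1 z) ∧
    (∀ k j z, |pd (pd PK k) j z| ≤ C * (closedBall (0 : R3) 1).indicator 1 z) ∧
    (∀ z, |rK z| ≤ C * (closedBall (0 : R3) 1).indicator 1 z) ∧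
    (∀ k z, |pd rK k z| ≤ C * (closedBall (0 : R3) 1).indicator 1 z) ∧
    (∀ z, |lap rK z| ≤ C * (closedBall (0 : R3) 1).indicator 1 z) := by
  choose A hA0 hA using fun k => (PK_sup.pd k).bound (PK_sm.pd k).cont
  choose B hB0 hB using fun k j => ((PK_sup.pd k).pd j).bound ((PK_sm.pd k).pd j).cont
  obtain ⟨D, hD0, hD⟩ := rK_sup.bound rK_sm.cont
  choose E hE0 hE using fun k => (rK_sup.pd k).bound (rK_sm.pd k).cont
  have ls : Sup1 (lap rK) := by
    intro z hz
    unfold lap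
    exact Finset.sum_eq_zero fun j _ => ((rK_sup.pd j).pd j) z hz
  obtain ⟨L, hL0, hL⟩ := ls.bound rK_sm.lap.cont
  have i0 : ∀ z, 0 ≤ (closedBall (0 : R3) 1).indicator (1 : R3 → ℝ) z := fun z =>
    Set.indicator_nonneg (fun _ _ => zero_le_one) z
  have sA : ∀ k, A k ≤ ∑ k, A k := fun k => Finset.single_le_sum (fun i _ => hA0 i) (Finset.mem_univ k)
  have sE : ∀ k, E k ≤ ∑ k, E k := fun k => Finset.single_le_sum (fun i _ => hE0 i) (Finset.mem_univ k)
  have sB : ∀ k j, B k j ≤ ∑ k, ∑ j, B k j := fun k j =>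
    (Finset.single_le_sum (f := fun j => B k j) (fun i _ => hB0 k i) (Finset.mem_univ j)).trans
    (Finset.single_le_sum (f := fun k => ∑ j, B k j)
      (fun i _ => Finset.sum_nonneg fun j _ => hB0 i j) (Finset.mem_univ k))
  have pA : 0 ≤ ∑ k, A k := Finset.sum_nonneg fun i _ => hA0 i
  have pE : 0 ≤ ∑ k, E k := Finset.sum_nonneg fun i _ => hE0 i
  have pB : 0 ≤ ∑ k, ∑ j, B k j := Finset.sum_nonneg fun i _ => Finset.sum_nonneg fun j _ => hB0 i j
  refine ⟨(∑ k, A k) + (∑ k, ∑ j, B k j) + D + (∑ k, E k) + L, by positivity, ?_, ?_, ?_, ?_, ?_⟩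
  · intro k z
    exact (hA k z).trans (mul_le_mul_of_nonneg_right (by linarith [sA k]) (i0 z))
  · intro k j z
    exact (hB k j z).trans (mul_le_mul_of_nonneg_right (by linarith [sB k j]) (i0 z))
  · intro z
    exact (hD z).trans (mul_le_mul_of_nonneg_right (by linarith) (i0 z))
  · intro k z
    exact (hE k z).trans (mul_le_mul_of_nonneg_right (by linarith [sE k]) (i0 z))
  · intro z
    exact (hL z).trans (mul_le_mul_of_nonneg_right (by linarith) (i0 z))

theorem abs_sum9 {f : Fin 3 → Fin 3 → ℝ} {B : ℝ} (h : ∀ k j, |f k j| ≤ B) :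
    |∑ k, ∑ j, f k j| ≤ 9 * B := by
  refine (Finset.abs_sum_le_sum_abs _ _).trans ?_
  have : ∀ k ∈ (Finset.univ : Finset (Fin 3)), |∑ j, f k j| ≤ 3 * B := by
    intro k _
    refine (Finset.abs_sum_le_sum_abs _ _).trans ?_
    refine (Finset.sum_le_sum fun j _ => h k j).trans ?_
    simp
  refine (Finset.sum_le_sum this).trans ?_
  simp; linarith

theorem Kw_near {p : ℝ} (hp1 : 3 / 2 < p) (hp2 : p < 3) : ∃ C, 0 ≤ C ∧
    ∀ (S : Set R3) (u w : R3 → R3) (ψ : R3 → ℝ) (c t : ℝ), BS S → Continuous u →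
    ContDiff ℝ (⊤ : ℕ∞) w → 0 ≤ c → 0 < t → (∀ x, |ψ x| ≤ c * ‖u x‖) →
    (∀ x, ψ x ≠ 0 → x ∈ S ∧ ∀ z : R3, ‖z‖ ≤ 1 → x - t • z ∈ S) →
    |Kw w ψ t| ≤ C * c * (∫ x in S, ‖u x‖ ^ p) ^ (1 / p) *
      (∫ x in S, (‖w x‖ * √(en w x)) ^ (3 / 2 : ℝ)) ^ (2 / 3 : ℝ) * t ^ (2 - 3 / p - 1) := by
  obtain ⟨C, hC0, hC, -⟩ := PK2_bound
  have hp0 : 0 < p := by linarith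
  refine ⟨9 * (C * V1 ^ (2 - 1 / p - 2 / 3) * 2), by have := V1_pos; positivity, ?_⟩
  intro S u w ψ c t hS hu hw hc ht hψ hsup
  unfold Kw
  have key : ∀ k j, |T3 ψ (pd PK k) (pd (gq w j k) j) t| ≤
      C * V1 ^ (2 - 1 / p - 2 / 3) * 2 * c * (∫ x in S, ‖u x‖ ^ p) ^ (1 / p) *
      (∫ x in S, (‖w x‖ * √(en w x)) ^ (3 / 2 : ℝ)) ^ (2 / 3 : ℝ) * t ^ (2 - 3 / p - 1) := by
    intro k j
    have hwc := hw.continuous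
    have hec := en_cont hw
    have h13 : 1 / 3 < 1 / p := one_div_lt_one_div_of_lt hp0 hp2
    have := tri hS (f := fun x => ‖u x‖) (g := fun x => 2 * (‖w x‖ * √(en w x))) (ψ := ψ)
      (κ := pd PK k) (h := pd (gq w j k) j) hu.norm (fun _ => norm_nonneg _)
      (by fun_prop) (fun _ => by positivity) ht (p := p) (a := 3 / 2) (by linarith) (by norm_num)
      (by norm_num at h13 ⊢; linarith) hc hC0 hψ (hC k) (fun x _ => pd_gq_le hw j k j x) hsup
    have e1 : ∫ x in S, (2 * (‖w x‖ * √(en w x))) ^ (3 / 2 : ℝ) =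
        2 ^ (3 / 2 : ℝ) * ∫ x in S, (‖w x‖ * √(en w x)) ^ (3 / 2 : ℝ) := by
      rw [← integral_const_mul]; congr 1; ext x
      rw [Real.mul_rpow (by norm_num) (by positivity)]
    rw [e1, Real.mul_rpow (by positivity) (sint_nonneg fun x => by positivity),
      ← Real.rpow_mul (by norm_num)] at this
    refine this.trans (le_of_eq ?_)
    rw [show (1 / (3 / 2) : ℝ) = 2 / 3 by norm_num, show (3 / 2 * (2 / 3) : ℝ) = 1 by norm_num,
      Real.rpow_one, show -3 * (1 / p + 2 / 3 - 1) = 2 - 3 / p - 1 by field_simp; ring]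
    ring
  refine (abs_sum9 key).trans (le_of_eq (by ring))

theorem Kw_far {p s : ℝ} (hp1 : 3 / 2 < p) (hs : 2 ≤ s) (hps : 1 ≤ 1 / p + 2 / s) : ∃ C, 0 ≤ C ∧
    ∀ (S : Set R3) (u w : R3 → R3) (ψ : R3 → ℝ) (c t : ℝ), BS S → Continuous u →
    ContDiff ℝ (⊤ : ℕ∞) w → 0 ≤ c → 0 < t → (∀ x, |ψ x| ≤ c * ‖u x‖) →
    (∀ x, ψ x ≠ 0 → x ∈ S ∧ ∀ z : R3, ‖z‖ ≤ 1 → x - t • z ∈ S) →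
    |Kw w ψ t| ≤ C * c * (∫ x in S, ‖u x‖ ^ p) ^ (1 / p) *
      (∫ x in S, ‖w x‖ ^ s) ^ (2 / s) * t ^ (-1 - (3 / p + 6 / s - 3)) := by
  obtain ⟨C, hC0, -, hC, -⟩ := PK2_bound
  have hp0 : 0 < p := by linarith
  have hs0 : 0 < s := by linarith
  refine ⟨9 * (C * V1 ^ (2 - 1 / p - 2 / s)), by have := V1_pos; positivity, ?_⟩
  intro S u w ψ c t hS hu hw hc ht hψ hsup
  unfold Kw
  have key : ∀ k j, |T3 ψ (pd PK k) (pd (gq w j k) j) t| ≤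
      C * V1 ^ (2 - 1 / p - 2 / s) * c * (∫ x in S, ‖u x‖ ^ p) ^ (1 / p) *
      (∫ x in S, ‖w x‖ ^ s) ^ (2 / s) * t ^ (-1 - (3 / p + 6 / s - 3)) := by
    intro k j
    have hwc := hw.continuous
    have := tri hS (f := fun x => ‖u x‖) (g := fun x => ‖w x‖ ^ 2) (ψ := ψ)
      (κ := pd (pd PK k) j) (h := gq w j k) hu.norm (fun _ => norm_nonneg _)
      (by fun_prop) (fun _ => by positivity) ht (p := p) (a := s / 2) (by linarith) (by linarith)
      (by rw [one_div_div]; exact hps) hc hC0 hψ (hC k j) (fun x _ => gq_le w j k x) hsup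
    have e1 : ∫ x in S, (‖w x‖ ^ 2) ^ (s / 2) = ∫ x in S, ‖w x‖ ^ s := by
      congr 1; ext x
      rw [← Real.rpow_natCast, ← Real.rpow_mul (norm_nonneg _)]
      congr 1; push_cast; ring
    rw [e1, one_div_div] at this
    have e2 := T3_ibp (ψ := ψ) (PK_sm.pd k) (PK_sup.pd k).compact (gq_sm hw j k) t j
    have e3 : T3 ψ (pd PK k) (pd (gq w j k) j) t = t⁻¹ * T3 ψ (pd (pd PK k) j) (gq w j k) t := by
      rw [← e2]; field_simp
    rw [e3, abs_mul, abs_of_pos (inv_pos.2 ht)]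
    refine (mul_le_mul_of_nonneg_left this (inv_pos.2 ht).le).trans (le_of_eq ?_)
    rw [show -1 - (3 / p + 6 / s - 3) = -1 + (-3 * (1 / p + 2 / s - 1)) by ring, Real.rpow_add ht,
      Real.rpow_neg_one]
    ring
  refine (abs_sum9 key).trans (le_of_eq (by ring))

theorem avg {S : Set R3} (hS : BS S) {g κ h : R3 → ℝ}
    (hg : Continuous g) (hg0 : ∀ x, 0 ≤ g x) {t C : ℝ} (ht : 0 < t) (hC : 0 ≤ C)
    (hκ : ∀ z, |κ z| ≤ C * (closedBall (0 : R3) 1).indicator 1 z)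
    (hh : ∀ x ∈ S, |h x| ≤ g x) {y : R3} (hy : ∀ z : R3, ‖z‖ ≤ 1 → y - t • z ∈ S) :
    |∫ z, κ z * h (y - t • z)| ≤ C * (t⁻¹ ^ 3 * ∫ x in S, g x) := by
  set G := S.indicator (fun x => ENNReal.ofReal (g x)) with hG
  have hGm : Measurable G := Measurable.indicator (by fun_prop) hS.1
  have e1 : ∫⁻ z, ENNReal.ofReal C * G (y - t • z) =
      ENNReal.ofReal (C * (t ^ (-3 : ℝ) * ∫ x in S, g x)) := by
    rw [lintegral_const_mul' _ _ (by simp), lint_scale G hGm ht, hG, lintegral_indicator hS.1,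
      ← ofReal_integral_eq_lintegral_ofReal (hS.int hg) (ae_of_all _ hg0),
      ← ENNReal.ofReal_mul (by positivity), ← ENNReal.ofReal_mul hC]
  have e2 : ‖∫ z, κ z * h (y - t • z)‖ₑ ≤ ∫⁻ z, ENNReal.ofReal C * G (y - t • z) := by
    refine (enorm_integral_le_lintegral_enorm _).trans (lintegral_mono fun z => ?_)
    simp only
    have k1 := hκ z
    by_cases hz : z ∈ closedBall (0 : R3) 1
    · have hzS := hy z (by simpa using hz)
      rw [hG, Set.indicator_of_mem hzS]
      rw [Set.indicator_of_mem hz] at k1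
      simp only [Pi.one_apply, mul_one] at k1
      rw [← ofReal_norm, ← ENNReal.ofReal_mul hC, norm_mul]
      exact ENNReal.ofReal_le_ofReal (mul_le_mul k1 (hh _ hzS) (norm_nonneg _) hC)
    · rw [Set.indicator_of_notMem hz] at k1
      have : κ z = 0 := by simpa using k1
      simp [this]
  have i0 : 0 ≤ ∫ x in S, g x := sint_nonneg hg0
  rw [e1, ← ofReal_norm, ENNReal.ofReal_le_ofReal_iff (by positivity)] at e2
  have : t ^ (-3 : ℝ) = t⁻¹ ^ 3 := by
    rw [Real.rpow_neg ht.le, inv_pow]; congr 1; norm_cast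
  rw [this] at e2
  exact e2

theorem mgrad : ∃ C, 0 ≤ C ∧ ∀ (S : Set R3) (u v : R3 → R3) (pr θ : R3 → ℝ) (t : ℝ) (y : R3),
    BS S → ContDiff ℝ (⊤ : ℕ∞) u → ContDiff ℝ (⊤ : ℕ∞) v → Sm pr → TCM u v pr θ → 0 < t →
    (∀ z : R3, ‖z‖ ≤ 1 → y - t • z ∈ S) → ∀ k,
    |∫ z, rK z * pd pr k (y - t • z)| ≤ C * (t⁻¹ ^ 5 * (∫ x in S, ‖u x‖) +
      t⁻¹ ^ 4 * ((∫ x in S, ‖u x‖ ^ 2) + ∫ x in S, ‖v x‖ ^ 2)) := by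
  obtain ⟨C, hC0, -, -, hr, hr1, hr2⟩ := PK2_bound
  refine ⟨3 * C, by positivity, ?_⟩
  intro S u v pr θ t y hS hu hv hpr hsol ht hy k
  have hgc : ∀ w : R3 → R3, ContDiff ℝ (⊤ : ℕ∞) w → ∀ k j, Continuous (pd (gq w j k) j) :=
    fun w hw k j => ((gq_sm hw j k).pd j).cont
  have hsh : ∀ f : R3 → ℝ, Continuous f → Continuous fun z => f (y - t • z) := fun f hf => by fun_prop
  have im : ∀ f : R3 → ℝ, Continuous f → Integrable fun z => rK z * f (y - t • z) := fun f hf =>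
    int_mul rK_sm.cont rK_sup.compact (hsh f hf)
  have e0 : ∫ z, rK z * pd pr k (y - t • z) =
      (∑ j, ∫ z, rK z * pd (pd (fun y => u y k) j) j (y - t • z))
      - (∑ j, ∫ z, rK z * pd (gq u j k) j (y - t • z))
      - ∑ j, ∫ z, rK z * pd (gq v j k) j (y - t • z) := by
    rw [← integral_finsetSum _ fun j _ => im _ (((Sm.comp_coord hu k).pd j).pd j).cont,
      ← integral_finsetSum _ fun j _ => im _ (hgc u hu k j),
      ← integral_finsetSum _ fun j _ => im _ (hgc v hv k j), ← integral_sub, ← integral_sub]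
    · congr 1; ext z
      simp only [grad_eq hu hsol k, ← Finset.mul_sum]
      unfold lap; ring
    · exact (integrable_finsetSum _ fun j _ => im _ (((Sm.comp_coord hu k).pd j).pd j).cont).sub
        (integrable_finsetSum _ fun j _ => im _ (hgc u hu k j))
    · exact integrable_finsetSum _ fun j _ => im _ (hgc v hv k j)
    · exact integrable_finsetSum _ fun j _ => im _ (((Sm.comp_coord hu k).pd j).pd j).cont
    · exact integrable_finsetSum _ fun j _ => im _ (hgc u hu k j)
  have eg : ∀ w : R3 → R3, ContDiff ℝ (⊤ : ℕ∞) w →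
      |∑ j, ∫ z, rK z * pd (gq w j k) j (y - t • z)| ≤ 3 * (C * (t⁻¹ ^ 4 * ∫ x in S, ‖w x‖ ^ 2)) := by
    intro w hw
    refine (Finset.abs_sum_le_sum_abs _ _).trans ?_
    have : ∀ j ∈ (Finset.univ : Finset (Fin 3)), |∫ z, rK z * pd (gq w j k) j (y - t • z)| ≤
        C * (t⁻¹ ^ 4 * ∫ x in S, ‖w x‖ ^ 2) := by
      intro j _
      have h1 := ibp_shift rK_sm rK_sup.compact (gq_sm hw j k) y t j
      have h2 := avg hS (g := fun x => ‖w x‖ ^ 2) (hw.continuous.norm.pow 2) (fun _ => by positivity)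
        ht hC0 (hr1 j) (fun x _ => gq_le w j k x) hy
      have h3 : ∫ z, rK z * pd (gq w j k) j (y - t • z) =
          t⁻¹ * ∫ z, pd rK j z * gq w j k (y - t • z) := by rw [← h1]; field_simp
      rw [h3, abs_mul, abs_of_pos (inv_pos.2 ht)]
      refine (mul_le_mul_of_nonneg_left h2 (inv_pos.2 ht).le).trans (le_of_eq (by ring))
    refine (Finset.sum_le_sum this).trans (by simp)
  have el : ∑ j, ∫ z, rK z * pd (pd (fun y => u y k) j) j (y - t • z) =
      t⁻¹ ^ 2 * ∫ z, lap rK z * u (y - t • z) k := by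
    have h1 : ∀ j, ∫ z, rK z * pd (pd (fun y => u y k) j) j (y - t • z) =
        t⁻¹ ^ 2 * ∫ z, pd (pd rK j) j z * u (y - t • z) k := by
      intro j
      have a1 := ibp_shift rK_sm rK_sup.compact ((Sm.comp_coord hu k).pd j) y t j
      have a2 := ibp_shift (rK_sm.pd j) (rK_sup.pd j).compact (Sm.comp_coord hu k) y t j
      rw [← a2, ← a1]; field_simp
    simp only [h1]
    rw [← Finset.mul_sum, ← integral_finsetSum]
    · congr 2; ext z; unfold lap; rw [Finset.sum_mul]
    · intro j _
      exact int_mul ((rK_sm.pd j).pd j).cont ((rK_sup.pd j).pd j).compact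
        (hsh (fun y => u y k) (Sm.comp_coord hu k).cont)
  have el2 : |t⁻¹ ^ 2 * ∫ z, lap rK z * u (y - t • z) k| ≤ C * (t⁻¹ ^ 5 * ∫ x in S, ‖u x‖) := by
    have h2 := avg hS (g := fun x => ‖u x‖) (h := fun x => u x k) hu.continuous.norm
      (fun _ => by positivity) ht hC0 hr2 (fun x _ => abs_coord_le _ _) hy
    rw [abs_mul, abs_of_pos (by positivity)]
    refine (mul_le_mul_of_nonneg_left h2 (by positivity)).trans (le_of_eq (by ring))
  rw [e0, el]
  refine (abs_sub _ _).trans ((add_le_add (abs_sub _ _) le_rfl).trans ?_)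
  have g1 := eg u hu
  have g2 := eg v hv
  have : 0 ≤ C * (t⁻¹ ^ 5 * ∫ x in S, ‖u x‖) := by
    have : 0 ≤ ∫ x in S, ‖u x‖ := sint_nonneg fun _ => norm_nonneg _
    positivity
  nlinarith

/-- shells -/
def Aset (R τ : ℝ) : Set R3 := {x | R ≤ ‖x‖ ∧ ‖x‖ < τ}

theorem Aset_BS (R τ : ℝ) : BS (Aset R τ) := by
  refine ⟨?_, τ, ?_⟩
  · exact (measurableSet_le measurable_const measurable_norm).inter
      (measurableSet_lt measurable_norm measurable_const)
  · intro x hx; simpa using hx.2.le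

def mm (pr : R3 → ℝ) (t : ℝ) (x : R3) : ℝ := ∫ z, rK z * pr (x - t • z)

theorem osc1 {pr : R3 → ℝ} (hpr : Sm pr) {t G L : ℝ} {x y : R3} (hG : 0 ≤ G)
    (hL : ‖x - y‖ ≤ L)
    (h : ∀ s ∈ Set.Ioo (0:ℝ) 1, ∀ k, |∫ z, rK z * pd pr k ((x - s • (x - y)) - t • z)| ≤ G) :
    |mm pr t y - mm pr t x| ≤ 3 * L * G := by
  have hpc : ∀ k, Continuous (pd pr k) := fun k => (hpr.pd k).cont
  have fc := hpr.cont
  set Q : ℝ → ℝ := fun s => ∫ z, rK z * pr ((x - t • z) - s • (x - y)) with hQ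
  have hd : ∀ s : ℝ, HasDerivAt Q (∫ z, rK z * -∑ k, (x - y) k * pd pr k ((x - t • z) - s • (x - y))) s :=
    param_deriv (volume : Measure R3) (k := rK) (Fn := fun z s => pr ((x - t • z) - s • (x - y)))
    (Fn' := fun z s => -∑ k, (x - y) k * pd pr k ((x - t • z) - s • (x - y)))
    rK_sm.cont rK_sup.compact (by fun_prop) (by fun_prop)
    (fun z s => line_deriv hpr (x - t • z) (x - y) s)
  have e : ∀ s : ℝ, ∫ z, rK z * -∑ k, (x - y) k * pd pr k ((x - t • z) - s • (x - y)) =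
      - ∑ k, (x - y) k * ∫ z, rK z * pd pr k ((x - s • (x - y)) - t • z) := by
    intro s
    simp only [← integral_const_mul]
    rw [← integral_finsetSum, ← integral_neg]
    · congr 1; ext z
      rw [mul_neg, Finset.mul_sum]
      congr 1
      apply Finset.sum_congr rfl; intro k _
      rw [sub_right_comm]; ring
    · intro k _
      exact (int_mul rK_sm.cont rK_sup.compact (by fun_prop)).const_mul _
  simp only [e] at hd
  have := mono_bound (M := Q) (Φ := fun s => (3 * L * G) * s) (a := 0) (b := 1)
    (M' := fun s => - ∑ k, (x - y) k * ∫ z, rK z * pd pr k ((x - s • (x - y)) - t • z))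
    (Φ' := fun s => 3 * L * G) zero_le_one
    (fun s _ => (hd s).continuousAt.continuousWithinAt) (by fun_prop) (fun s _ => hd s)
    (fun s _ => by simpa using (hasDerivAt_id s).const_mul (3 * L * G)) (by
      intro s hs
      rw [abs_neg]
      refine (Finset.abs_sum_le_sum_abs _ _).trans ?_
      have : ∀ k ∈ (Finset.univ : Finset (Fin 3)), |(x - y) k *
          ∫ z, rK z * pd pr k ((x - s • (x - y)) - t • z)| ≤ L * G := by
        intro k _
        rw [abs_mul]
        exact mul_le_mul ((abs_coord_le _ _).trans hL) (h s hs k) (abs_nonneg _)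
          ((norm_nonneg _).trans hL)
      refine (Finset.sum_le_sum this).trans (by simp; linarith))
  have q1 : Q 1 = mm pr t y := by
    simp only [hQ, mm]; congr 1; ext z; congr 2; rw [one_smul]; abel
  have q0 : Q 0 = mm pr t x := by simp [hQ, mm]
  rw [q1, q0] at this
  simpa using this

theorem seg_norm {x y : R3} {m σ s : ℝ} (hs : s ∈ Set.Ioo (0:ℝ) 1) (hm : 0 ≤ m) (hx1 : m ≤ ‖x‖)
    (hx2 : ‖x‖ ≤ σ) (hy1 : m ≤ ‖y‖) (hy2 : ‖y‖ ≤ σ) (hxy : 0 ≤ inner ℝ x y) :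
    m ^ 2 / 2 ≤ ‖x - s • (x - y)‖ ^ 2 ∧ ‖x - s • (x - y)‖ ≤ σ := by
  have e : x - s • (x - y) = (1 - s) • x + s • y := by
    rw [smul_sub, sub_smul, one_smul]; abel
  rw [e]
  obtain ⟨h0, h1⟩ := hs
  constructor
  · rw [norm_add_sq_real, norm_smul, norm_smul, inner_smul_left, inner_smul_right]
    simp only [Real.norm_eq_abs, abs_of_pos h0, abs_of_pos (sub_pos.2 h1), conj_trivial]
    have : 0 ≤ (1 - s) * (s * inner ℝ x y) := by
      have : 0 < 1 - s := by linarith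
      positivity
    have a1 : ((1 - s) * m) ^ 2 ≤ ((1 - s) * ‖x‖) ^ 2 := by
      have : 0 < 1 - s := by linarith
      gcongr
    have a2 : (s * m) ^ 2 ≤ (s * ‖y‖) ^ 2 := by gcongr
    nlinarith [mul_nonneg (sq_nonneg m) (sq_nonneg (2 * s - 1))]
  · refine (norm_add_le _ _).trans ?_
    rw [norm_smul, norm_smul]
    simp only [Real.norm_eq_abs, abs_of_pos h0, abs_of_pos (sub_pos.2 h1)]
    nlinarith

theorem osc {pr : R3 → ℝ} (hpr : Sm pr) {t G R σ : ℝ} (hR : 0 < R) (hG : 0 ≤ G) (hσ : 37 / 20 * R ≤ σ)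
    (h : ∀ y : R3, 13 / 10 * R ≤ ‖y‖ → ‖y‖ ≤ σ → ∀ k, |∫ z, rK z * pd pr k (y - t • z)| ≤ G) :
    ∃ e : R3, ∀ x : R3, 37 / 20 * R ≤ ‖x‖ → ‖x‖ ≤ σ → |mm pr t x - mm pr t e| ≤ 18 * σ * G := by
  have step : ∀ x y : R3, 37 / 20 * R ≤ ‖x‖ → ‖x‖ ≤ σ → 37 / 20 * R ≤ ‖y‖ → ‖y‖ ≤ σ →
      0 ≤ inner ℝ x y → |mm pr t y - mm pr t x| ≤ 6 * σ * G := by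
    intro x y hx1 hx2 hy1 hy2 hxy
    have := osc1 hpr (t := t) (x := x) (y := y) hG (L := 2 * σ)
      ((norm_sub_le _ _).trans (by linarith)) (by
      intro s hs k
      obtain ⟨n1, n2⟩ := seg_norm hs (by positivity) hx1 hx2 hy1 hy2 hxy
      refine h _ ?_ n2 k
      apply le_of_sq_le_sq _ (norm_nonneg _)
      nlinarith [sq_nonneg R])
    linarith
  set e : R3 := EuclideanSpace.single 0 (37 / 20 * R) with he
  set f : R3 := EuclideanSpace.single 1 (37 / 20 * R) with hf
  have ne : ‖e‖ = 37 / 20 * R := by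
    rw [he, EuclideanSpace.norm_single, Real.norm_eq_abs, abs_of_pos (by positivity)]
  have nf : ‖f‖ = 37 / 20 * R := by
    rw [hf, EuclideanSpace.norm_single, Real.norm_eq_abs, abs_of_pos (by positivity)]
  have ief : inner ℝ e f = 0 := by simp [he, hf, EuclideanSpace.inner_single_left]
  have hnn : 0 ≤ 6 * σ * G := by
    have : 0 ≤ σ := by linarith
    positivity
  refine ⟨e, fun x hx1 hx2 => ?_⟩
  rcases le_total 0 (inner ℝ x e) with hi | hi
  · have := step x e hx1 hx2 ne.ge (ne.le.trans hσ) hi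
    rw [abs_sub_comm] at this
    linarith
  · have s1 := step x (-e) hx1 hx2 (by rw [norm_neg]; exact ne.ge)
      (by rw [norm_neg]; exact ne.le.trans hσ) (by rw [inner_neg_right]; linarith)
    have s2 := step (-e) f (by rw [norm_neg]; exact ne.ge)
      (by rw [norm_neg]; exact ne.le.trans hσ) nf.ge (nf.le.trans hσ)
      (by rw [inner_neg_left, ief]; simp)
    have s3 := step f e nf.ge (nf.le.trans hσ) ne.ge (ne.le.trans hσ)
      (by rw [real_inner_comm, ief])
    rw [abs_le] at *
    constructor <;> linarith

theorem far_bound : ∃ C, 0 ≤ C ∧ ∀ (u v : R3 → R3) (pr θ ψ : R3 → ℝ) (R ρ τ c : ℝ),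
    ContDiff ℝ (⊤ : ℕ∞) u → ContDiff ℝ (⊤ : ℕ∞) v → Sm pr → TCM u v pr θ →
    0 < R → 37 / 20 * R ≤ ρ → ρ < τ → τ ≤ 39 / 20 * R →
    Continuous ψ → HasCompactSupport ψ → 0 ≤ c → (∀ x, |ψ x| ≤ c * ‖u x‖) →
    (∀ x, ψ x ≠ 0 → ρ ≤ ‖x‖ ∧ ‖x‖ ≤ (ρ + τ) / 2) → ∫ x, ψ x = 0 →
    |T3 ψ rK pr ((τ - ρ) / 4)| ≤ C * c * (R * (∫ x in Aset R τ, ‖u x‖) *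
      ((τ - ρ)⁻¹ ^ 5 * (∫ x in Aset R τ, ‖u x‖) + (τ - ρ)⁻¹ ^ 4 *
        ((∫ x in Aset R τ, ‖u x‖ ^ 2) + ∫ x in Aset R τ, ‖v x‖ ^ 2))) := by
  obtain ⟨C, hC0, hC⟩ := mgrad
  refine ⟨18 * 2 * C * 4 ^ 5, by positivity, ?_⟩
  intro u v pr θ ψ R ρ τ c hu hv hpr hsol hR hρ hρτ hτ hψ hψc hc hψb hψs hψ0
  set S := Aset R τ with hS
  set D := τ - ρ with hD
  have hD0 : 0 < D := by linarith
  set t := D / 4 with ht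
  have ht0 : 0 < t := by positivity
  have u1 : 0 ≤ ∫ x in S, ‖u x‖ := sint_nonneg fun _ => norm_nonneg _
  have u2 : 0 ≤ ∫ x in S, ‖u x‖ ^ 2 := sint_nonneg fun _ => by positivity
  have v2 : 0 ≤ ∫ x in S, ‖v x‖ ^ 2 := sint_nonneg fun _ => by positivity
  set G := C * (t⁻¹ ^ 5 * (∫ x in S, ‖u x‖) + t⁻¹ ^ 4 * ((∫ x in S, ‖u x‖ ^ 2) + ∫ x in S, ‖v x‖ ^ 2))
    with hG
  have hG0 : 0 ≤ G := by positivity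
  obtain ⟨e, he⟩ := osc hpr (t := t) (G := G) (R := R) (σ := (ρ + τ) / 2) hR hG0 (by linarith) (by
    intro y hy1 hy2 k
    refine hC S u v pr θ t y (Aset_BS R τ) hu hv hpr hsol ht0 ?_ k
    intro z hz
    have h1 : ‖t • z‖ ≤ t := by
      rw [norm_smul, Real.norm_eq_abs, abs_of_pos ht0]; nlinarith
    have h2 := norm_sub_norm_le y (t • z)
    have h3 := norm_sub_le y (t • z)
    constructor
    · linarith
    · linarith)
  set k := mm pr t e / ∫ z, rK z with hk
  have e1 : T3 ψ rK pr t = T3 ψ rK (fun y => pr y - k) t := by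
    rw [T3_sub (g := fun _ => k) hψ hψc rK_sm.cont rK_sup.compact hpr.cont continuous_const]
    have : T3 ψ rK (fun _ => k) t = 0 := by
      unfold T3; rw [integral_mul_const, hψ0, zero_mul]
    rw [this, sub_zero]
  have e2 : ∀ x, ∫ z, rK z * (pr (x - t • z) - k) = mm pr t x - mm pr t e := by
    intro x
    have hc := hpr.cont
    simp only [mul_sub]
    rw [integral_sub (int_mul rK_sm.cont rK_sup.compact (by fun_prop))
      (int_mul rK_sm.cont rK_sup.compact (by fun_prop)), integral_mul_const, hk]
    have := rK_int.ne'
    unfold mm; field_simp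
  rw [e1]
  unfold T3
  simp only [e2]
  have hσ : (ρ + τ) / 2 ≤ 2 * R := by linarith
  have b1 : ∀ x, ‖ψ x * (mm pr t x - mm pr t e)‖ ≤
      S.indicator (fun x => c * (36 * R * G) * ‖u x‖) x := by
    intro x
    by_cases hx : ψ x = 0
    · rw [hx, zero_mul, norm_zero]
      exact Set.indicator_nonneg (fun x _ => by positivity) x
    obtain ⟨x1, x2⟩ := hψs x hx
    have hxS : x ∈ S := ⟨by linarith, by linarith⟩
    rw [Set.indicator_of_mem hxS, norm_mul, Real.norm_eq_abs, Real.norm_eq_abs]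
    have o := he x (by linarith) x2
    have o2 : 18 * ((ρ + τ) / 2) * G ≤ 36 * R * G :=
      mul_le_mul_of_nonneg_right (by linarith) hG0
    refine (mul_le_mul (hψb x) (o.trans o2) (abs_nonneg _) (by positivity)).trans (le_of_eq (by ring))
  have := norm_integral_le_of_norm_le (μ := volume)
    (g := S.indicator (fun x => c * (36 * R * G) * ‖u x‖))
    (IntegrableOn.integrable_indicator (by
      exact (Aset_BS R τ).int (by have := hu.continuous; fun_prop)) (Aset_BS R τ).1) (ae_of_all _ b1)
  rw [integral_indicator (Aset_BS R τ).1, integral_const_mul, Real.norm_eq_abs] at this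
  refine this.trans ?_
  rw [hG, ht, show (D / 4)⁻¹ = 4 * D⁻¹ by field_simp]
  have p1 : 0 ≤ c * R * C * (∫ x in S, ‖u x‖) * (D⁻¹ ^ 4 * ((∫ x in S, ‖u x‖ ^ 2) + ∫ x in S, ‖v x‖ ^ 2)) := by
    positivity
  nlinarith

theorem press_alg {i c1 k2 k3 c x P yu yv : ℝ} (hi : 0 ≤ i) (h1 : 0 ≤ c1) (h2 : 0 ≤ k2) (h3 : 0 ≤ k3)
    (hc : 0 ≤ c) (hx : 0 ≤ x) (hP : 0 ≤ P) (hu : 0 ≤ yu) (hv : 0 ≤ yv) :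
    i * (c1 * c * x + (k2 + k3) * c * (P * yu) + (k2 + k3) * c * (P * yv)) ≤
    i * (c1 + k2 + k3) * c * (x + P * (yu + yv)) := by
  have a1 : 0 ≤ i * (c1 * c * (P * (yu + yv))) := by positivity
  have a2 : 0 ≤ i * ((k2 + k3) * c * x) := by positivity
  nlinarith

theorem press {p s : ℝ} (hp1 : 3 / 2 < p) (hp2 : p < 3) (hs : 2 ≤ s) (hps : 1 < 1 / p + 2 / s) :
    ∃ C, 0 ≤ C ∧ ∀ (u v : R3 → R3) (pr θ ψ : R3 → ℝ) (R ρ τ c lu lv : ℝ),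
    ContDiff ℝ (⊤ : ℕ∞) u → ContDiff ℝ (⊤ : ℕ∞) v → Sm pr → TCM u v pr θ →
    0 < R → 37 / 20 * R ≤ ρ → ρ < τ → τ ≤ 39 / 20 * R →
    Continuous ψ → HasCompactSupport ψ → 0 ≤ c → (∀ x, |ψ x| ≤ c * ‖u x‖) →
    (∀ x, ψ x ≠ 0 → ρ ≤ ‖x‖ ∧ ‖x‖ ≤ (ρ + τ) / 2) → ∫ x, ψ x = 0 → 0 < lu → 0 < lv →
    |∫ x, ψ x * pr x| ≤ C * c * (R * (∫ x in Aset R τ, ‖u x‖) *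
      ((τ - ρ)⁻¹ ^ 5 * (∫ x in Aset R τ, ‖u x‖) + (τ - ρ)⁻¹ ^ 4 *
        ((∫ x in Aset R τ, ‖u x‖ ^ 2) + ∫ x in Aset R τ, ‖v x‖ ^ 2)) +
      (∫ x in Aset R τ, ‖u x‖ ^ p) ^ (1 / p) *
      (((∫ x in Aset R τ, (‖u x‖ * √(en u x)) ^ (3 / 2 : ℝ)) ^ (2 / 3 : ℝ) * lu ^ (2 - 3 / p)
        + (∫ x in Aset R τ, ‖u x‖ ^ s) ^ (2 / s) * lu ^ (-(3 / p + 6 / s - 3))) +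
       ((∫ x in Aset R τ, (‖v x‖ * √(en v x)) ^ (3 / 2 : ℝ)) ^ (2 / 3 : ℝ) * lv ^ (2 - 3 / p)
        + (∫ x in Aset R τ, ‖v x‖ ^ s) ^ (2 / s) * lv ^ (-(3 / p + 6 / s - 3))))) := by
  obtain ⟨C1, hC1, h1⟩ := far_bound
  obtain ⟨C2, hC2, h2⟩ := Kw_near hp1 hp2
  obtain ⟨C3, hC3, h3⟩ := Kw_far hp1 hs hps.le
  have hp0 : 0 < p := by linarith
  have hs0 : 0 < s := by linarith
  set a := 2 - 3 / p with ha
  set b := 3 / p + 6 / s - 3 with hb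
  have ha0 : 0 < a := by
    have : 3 / p < 2 := by rw [div_lt_iff₀ hp0]; linarith
    linarith
  have hb0 : 0 < b := by
    have : b = 3 * (1 / p + 2 / s - 1) := by rw [hb]; ring
    rw [this]; linarith
  set c0 := ∫ z, rK z with hc0
  have c0p : 0 < c0 := rK_int
  refine ⟨c0⁻¹ * (C1 + C2 / a + C3 / b), by positivity, ?_⟩
  intro u v pr θ ψ R ρ τ c lu lv hu hv hpr hsol hR hρ hρτ hτ hψ hψc hc hψb hψs hψ0 hlu hlv
  have H1 := h1 u v pr θ ψ R ρ τ c hu hv hpr hsol hR hρ hρτ hτ hψ hψc hc hψb hψs hψ0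
  set S := Aset R τ with hS
  set D := τ - ρ with hD
  have hD0 : 0 < D := by linarith
  set t := D / 4 with ht
  have ht0 : 0 < t := by positivity
  set P := (∫ x in S, ‖u x‖ ^ p) ^ (1 / p) with hP
  have hP0 : 0 ≤ P := Real.rpow_nonneg (sint_nonneg fun _ => by positivity) _
  have sup : ∀ t' ∈ Set.Ioo (0 : ℝ) t, ∀ x, ψ x ≠ 0 → x ∈ S ∧ ∀ z : R3, ‖z‖ ≤ 1 → x - t' • z ∈ S := by
    intro t' ht' x hx
    obtain ⟨x1, x2⟩ := hψs x hx
    refine ⟨⟨by linarith, by linarith⟩, fun z hz => ?_⟩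
    have h1 : ‖t' • z‖ ≤ t := by
      rw [norm_smul, Real.norm_eq_abs, abs_of_pos ht'.1]
      have := ht'.1; have := ht'.2; nlinarith
    have h2 := norm_sub_norm_le x (t' • z)
    have h3 := norm_sub_le x (t' • z)
    exact ⟨by linarith, by linarith⟩
  have KB : ∀ w : R3 → R3, ContDiff ℝ (⊤ : ℕ∞) w → ∀ l, 0 < l →
      |∫ t' in (0:ℝ)..t, Kw w ψ t'| ≤ (C2 / a + C3 / b) * c * (P *
      ((∫ x in S, (‖w x‖ * √(en w x)) ^ (3 / 2 : ℝ)) ^ (2 / 3 : ℝ) * l ^ a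
        + (∫ x in S, ‖w x‖ ^ s) ^ (2 / s) * l ^ (-b))) := by
    intro w hw l hl
    set N1 := (∫ x in S, (‖w x‖ * √(en w x)) ^ (3 / 2 : ℝ)) ^ (2 / 3 : ℝ) with hN1
    set N2 := (∫ x in S, ‖w x‖ ^ s) ^ (2 / s) with hN2
    have n1 : 0 ≤ N1 := Real.rpow_nonneg (sint_nonneg fun _ => by positivity) _
    have n2 : 0 ≤ N2 := Real.rpow_nonneg (sint_nonneg fun _ => by positivity) _
    have := split_bound (Kw_cont hψ hψc hw) (A := C2 * c * P * N1) (B := C3 * c * P * N2) (a := a)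
      (b := b) (l := l) (T := t) ha0 hb0 hl ht0.le (by positivity) (by positivity)
      (fun t' ht' => h2 S u w ψ c t' (Aset_BS R τ) hu.continuous hw hc ht'.1 hψb (sup t' ht'))
      (fun t' ht' => h3 S u w ψ c t' (Aset_BS R τ) hu.continuous hw hc ht'.1 hψb (sup t' ht'))
    refine this.trans ?_
    have q1 : 0 ≤ C3 / b * c * P * (N1 * l ^ a) := by positivity
    have q2 : 0 ≤ C2 / a * c * P * (N2 * l ^ (-b)) := by positivity
    have e1 : C2 * c * P * N1 * l ^ a / a = C2 / a * c * P * (N1 * l ^ a) := by ring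
    have e2 : C3 * c * P * N2 * l ^ (-b) / b = C3 / b * c * P * (N2 * l ^ (-b)) := by ring
    rw [e1, e2]
    nlinarith
  have ku := KB u hu lu hlu
  have kv := KB v hv lv hlv
  have ftc : ∫ t' in (0:ℝ)..t, -(Kw u ψ t' + Kw v ψ t') = T3 ψ rK pr t - T3 ψ rK pr 0 :=
    intervalIntegral.integral_eq_sub_of_hasDerivAt
      (fun t' _ => press_deriv hψ hψc hu hv hpr hsol t')
      (((Kw_cont hψ hψc hu).add (Kw_cont hψ hψc hv)).neg.intervalIntegrable _ _)
  rw [intervalIntegral.integral_neg, intervalIntegral.integral_add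
    ((Kw_cont hψ hψc hu).intervalIntegrable _ _) ((Kw_cont hψ hψc hv).intervalIntegrable _ _)] at ftc
  have M0 : T3 ψ rK pr 0 = c0 * ∫ x, ψ x * pr x := by
    unfold T3
    simp only [zero_smul, sub_zero, integral_mul_const]
    rw [← integral_const_mul]; congr 1; ext x; ring
  have M1 : ∫ x, ψ x * pr x = c0⁻¹ * T3 ψ rK pr 0 := by rw [M0]; field_simp
  have M2 : |T3 ψ rK pr 0| ≤ |T3 ψ rK pr t| + |∫ t' in (0:ℝ)..t, Kw u ψ t'|
      + |∫ t' in (0:ℝ)..t, Kw v ψ t'| := by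
    have : T3 ψ rK pr 0 = T3 ψ rK pr t + (∫ t' in (0:ℝ)..t, Kw u ψ t') + ∫ t' in (0:ℝ)..t, Kw v ψ t' := by
      linarith
    rw [this]
    exact abs_add_three _ _ _
  rw [M1, abs_mul, abs_of_pos (inv_pos.2 c0p)]
  have M3 := M2.trans (add_le_add (add_le_add H1 ku) kv)
  refine (mul_le_mul_of_nonneg_left M3 (inv_pos.2 c0p).le).trans ?_
  have z1 : 0 ≤ ∫ x in S, ‖u x‖ := sint_nonneg fun _ => norm_nonneg _
  have z2 : 0 ≤ ∫ x in S, ‖u x‖ ^ 2 := sint_nonneg fun _ => by positivity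
  have z3 : 0 ≤ ∫ x in S, ‖v x‖ ^ 2 := sint_nonneg fun _ => by positivity
  have z4 : ∀ w : R3 → R3, 0 ≤ (∫ x in S, (‖w x‖ * √(en w x)) ^ (3 / 2 : ℝ)) ^ (2 / 3 : ℝ) := fun w =>
    Real.rpow_nonneg (sint_nonneg fun _ => by positivity) _
  have z5 : ∀ w : R3 → R3, 0 ≤ (∫ x in S, ‖w x‖ ^ s) ^ (2 / s) := fun w =>
    Real.rpow_nonneg (sint_nonneg fun _ => by positivity) _
  have zu := z4 u; have zu' := z5 u; have zv := z4 v; have zv' := z5 v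
  have Al := press_alg (x := (R * (∫ x in S, ‖u x‖) * (D⁻¹ ^ 5 * (∫ x in S, ‖u x‖) + D⁻¹ ^ 4 *
        ((∫ x in S, ‖u x‖ ^ 2) + ∫ x in S, ‖v x‖ ^ 2))))
    (yu := (∫ x in S, (‖u x‖ * √(en u x)) ^ (3 / 2 : ℝ)) ^ (2 / 3 : ℝ) * lu ^ a
        + (∫ x in S, ‖u x‖ ^ s) ^ (2 / s) * lu ^ (-b))
    (yv := (∫ x in S, (‖v x‖ * √(en v x)) ^ (3 / 2 : ℝ)) ^ (2 / 3 : ℝ) * lv ^ a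
        + (∫ x in S, ‖v x‖ ^ s) ^ (2 / s) * lv ^ (-b))
    (inv_pos.2 c0p).le hC1 (by positivity : 0 ≤ C2 / a) (by positivity : 0 ≤ C3 / b) hc
    (by positivity) hP0 (by positivity) (by positivity)
  refine le_trans (le_of_eq ?_) Al
  congr 3

theorem nsq_eq (x : R3) : ‖x‖ ^ 2 = ∑ i, (x i) ^ 2 := by
  rw [EuclideanSpace.norm_sq_eq]; simp

theorem fd_coord {w : R3 → R3} (hw : ContDiff ℝ (⊤ : ℕ∞) w) (x h : R3) (i : Fin 3) :
    (fderiv ℝ w x h) i = ∑ k, h k * pd (fun y => w y i) k x := by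
  rw [← fderiv_csum]
  have hd : DifferentiableAt ℝ w x := (hw.differentiable (by simp)) x
  have := ((EuclideanSpace.proj i : R3 →L[ℝ] ℝ).hasFDerivAt.comp x hd.hasFDerivAt).fderiv
  have e : (fun y => w y i) = (EuclideanSpace.proj i : R3 →L[ℝ] ℝ) ∘ w := by
    ext y; simp
  rw [e, this]; simp

theorem fd_le_en {w : R3 → R3} (hw : ContDiff ℝ (⊤ : ℕ∞) w) (x : R3) :
    ‖fderiv ℝ w x‖ ^ 2 ≤ en w x := by
  have : ‖fderiv ℝ w x‖ ≤ √(en w x) := by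
    apply ContinuousLinearMap.opNorm_le_bound _ (Real.sqrt_nonneg _)
    intro h
    apply le_of_sq_le_sq _ (by positivity)
    rw [mul_pow, Real.sq_sqrt (en_nonneg w x), nsq_eq, en, Finset.sum_mul]
    apply Finset.sum_le_sum
    intro i _
    rw [fd_coord hw, nsq_eq, mul_comm]
    exact Finset.sum_mul_sq_le_sq_mul_sq _ _ _
  calc _ ≤ √(en w x) ^ 2 := by gcongr
    _ = _ := Real.sq_sqrt (en_nonneg w x)

theorem sob : ∃ C, 0 ≤ C ∧ ∀ w : R3 → R3, ContDiff ℝ (⊤ : ℕ∞) w → HasCompactSupport w →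
    (∫ x, ‖w x‖ ^ (6 : ℝ)) ^ (1 / 3 : ℝ) ≤ C * ∫ x, en w x := by
  set K := eLpNormLESNormFDerivOfEqInnerConst (volume : Measure R3) 2 with hK
  refine ⟨(K : ℝ) ^ 2, by positivity, ?_⟩
  intro w hw hc
  have key := eLpNorm_le_eLpNorm_fderiv_of_eq_inner (volume : Measure R3) (u := w) (p := 2) (p' := 6)
    (hw.of_le (by simp)) hc (by norm_num) (by simp) (by simp; norm_num)
  have hfc : Continuous (fderiv ℝ w) := hw.continuous_fderiv (by simp)
  have hfs : HasCompactSupport (fderiv ℝ w) := hc.fderiv ℝ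
  have m1 : MemLp w 6 volume := hw.continuous.memLp_of_hasCompactSupport hc
  have m2 : MemLp (fderiv ℝ w) 2 volume := hfc.memLp_of_hasCompactSupport hfs
  have e1 := m1.eLpNorm_eq_integral_rpow_norm (by norm_num) (by norm_num)
  have e2 := m2.eLpNorm_eq_integral_rpow_norm (by norm_num) (by norm_num)
  simp only [ENNReal.toReal_ofNat] at e1 e2
  have key' : ENNReal.ofReal ((∫ x, ‖w x‖ ^ (6 : ℝ)) ^ (6 : ℝ)⁻¹) ≤
      ENNReal.ofReal (K * (∫ x, ‖fderiv ℝ w x‖ ^ (2 : ℝ)) ^ (2 : ℝ)⁻¹) := by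
    rw [ENNReal.ofReal_mul (NNReal.coe_nonneg K), ← e1, ← e2, ENNReal.ofReal_coe_nnreal]
    exact key
  have i0 : 0 ≤ ∫ x, ‖w x‖ ^ (6 : ℝ) := integral_nonneg fun _ => by positivity
  have i1 : 0 ≤ ∫ x, ‖fderiv ℝ w x‖ ^ (2 : ℝ) := integral_nonneg fun _ => by positivity
  rw [ENNReal.ofReal_le_ofReal_iff (by positivity)] at key'
  have k2 := pow_le_pow_left₀ (by positivity) key' 2
  rw [mul_pow, ← Real.rpow_natCast, ← Real.rpow_mul i0, ← Real.rpow_natCast (_ ^ (2:ℝ)⁻¹),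
    ← Real.rpow_mul i1] at k2
  norm_num at k2
  norm_num
  refine k2.trans ?_
  refine mul_le_mul_of_nonneg_left ?_ (by positivity)
  apply integral_mono
  · refine Continuous.integrable_of_hasCompactSupport (hfc.norm.pow 2) (hfs.mono ?_)
    intro x hx
    simp only [Function.mem_support] at hx ⊢
    intro h0
    apply hx
    simp [h0]
  · apply (en_cont hw).integrable_of_hasCompactSupport
    refine hfs.mono ?_
    intro x hx
    simp only [Function.mem_support] at hx ⊢
    intro h0
    apply hx
    have : ∀ i j, pd (fun y => w y i) j x = 0 := by
      intro i j
      have := fd_coord hw x (EuclideanSpace.single j 1) i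
      rw [h0, ← fderiv_csum] at this
      simpa [pd] using this.symm
    simp [en, this]
  · intro x
    exact fd_le_en hw x

theorem sobcut : ∃ C, 0 ≤ C ∧ ∀ (w : R3 → R3) (η : R3 → ℝ) (A B : Set R3) (k : ℝ),
    ContDiff ℝ (⊤ : ℕ∞) w → Sm η → HasCompactSupport η → BS A → BS B → (∀ x ∈ B, η x = 1) →
    (∀ j x, pd η j x ≠ 0 → x ∈ A) → (∀ j x, |pd η j x| ≤ k) →
    (∫ x in B, ‖w x‖ ^ (6 : ℝ)) ^ (1 / 3 : ℝ) ≤ C * ((∫ x, η x ^ 2 * en w x) + k ^ 2 * ∫ x in A, ‖w x‖ ^ 2) := by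
  obtain ⟨C, hC, h⟩ := sob
  refine ⟨C * 6, by positivity, ?_⟩
  intro w η A B k hw hη hηc hA hB h1 hs hk
  have hW : ContDiff ℝ (⊤ : ℕ∞) (fun x => η x • w x) := ContDiff.smul hη hw
  have hWc : HasCompactSupport (fun x => η x • w x) := hηc.smul_right
  have hb := h _ hW hWc
  have wc := hw.continuous
  have ηc := hη.cont
  have h6 : ∫ x in B, ‖w x‖ ^ (6 : ℝ) ≤ ∫ x, ‖η x • w x‖ ^ (6 : ℝ) := by
    rw [setIntegral_congr_fun (g := fun x => ‖η x • w x‖ ^ (6 : ℝ)) hB.1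
      (fun x hx => by simp [h1 x hx])]
    apply setIntegral_le_integral
    · apply Continuous.integrable_of_hasCompactSupport
      · exact hW.continuous.norm.rpow_const (fun _ => Or.inr (by norm_num))
      · exact hWc.norm.comp_left (g := fun t : ℝ => t ^ (6 : ℝ)) (by norm_num)
    · exact ae_of_all _ fun x => by positivity
  have i6 : 0 ≤ ∫ x in B, ‖w x‖ ^ (6 : ℝ) := sint_nonneg fun _ => by positivity
  refine (Real.rpow_le_rpow i6 h6 (by norm_num)).trans (hb.trans ?_)
  rw [mul_assoc]
  refine mul_le_mul_of_nonneg_left ?_ hC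
  have pt : ∀ x, en (fun x => η x • w x) x ≤ 2 * (η x ^ 2 * en w x) + A.indicator (fun x => 6 * k ^ 2 * ‖w x‖ ^ 2) x := by
    intro x
    have e1 : ∀ i j, pd (fun y => (η y • w y) i) j x = pd η j x * w x i + η x * pd (fun y => w y i) j x := by
      intro i j
      have := pd_mul hη.diff (Sm.comp_coord hw i).diff j x
      simpa using this
    have e2 : en (fun x => η x • w x) x ≤ 2 * (η x ^ 2 * en w x) + ∑ i, ∑ j, 2 * ((pd η j x)^2 * (w x i)^2) := by
      unfold en
      simp only [e1]
      rw [Finset.mul_sum, Finset.mul_sum, ← Finset.sum_add_distrib]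
      apply Finset.sum_le_sum; intro i _
      rw [Finset.mul_sum, Finset.mul_sum, ← Finset.sum_add_distrib]
      apply Finset.sum_le_sum; intro j _
      nlinarith [sq_nonneg (pd η j x * w x i - η x * pd (fun y => w y i) j x)]
    refine e2.trans (add_le_add le_rfl ?_)
    by_cases hx : x ∈ A
    · rw [Set.indicator_of_mem hx, nsq_eq, Finset.mul_sum]
      apply Finset.sum_le_sum; intro i _
      have : ∀ j, 2 * ((pd η j x)^2 * (w x i)^2) ≤ 2 * (k ^ 2 * (w x i)^2) := by
        intro j
        have := sq_le_sq' (neg_le_of_abs_le (hk j x)) (le_of_abs_le (hk j x))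
        gcongr
      refine (Finset.sum_le_sum fun j _ => this j).trans (le_of_eq ?_)
      simp; ring
    · rw [Set.indicator_of_notMem hx]
      have : ∀ j, pd η j x = 0 := fun j => by
        by_contra h; exact hx (hs j x h)
      simp [this]
  have int1 : Integrable (fun x => η x ^ 2 * en w x) :=
    int_mul (g := fun x => η x ^ 2) (by fun_prop) (hηc.comp_left (g := fun t : ℝ => t ^ 2) (by norm_num)) (en_cont hw)
  have int2 : Integrable (A.indicator (fun x => 6 * k ^ 2 * ‖w x‖ ^ 2)) :=
    IntegrableOn.integrable_indicator (hA.int (by fun_prop)) hA.1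
  have q1 : ∫ x, en (fun x => η x • w x) x ≤ ∫ x, (2 * (η x ^ 2 * en w x) + A.indicator (fun x => 6 * k ^ 2 * ‖w x‖ ^ 2) x) := by
    apply integral_mono_of_nonneg (ae_of_all _ fun x => en_nonneg _ x) ((int1.const_mul 2).add int2)
      (ae_of_all _ pt)
  rw [integral_add (int1.const_mul 2) int2, integral_indicator hA.1, integral_const_mul, integral_const_mul] at q1
  refine q1.trans ?_
  have : 0 ≤ ∫ x, η x ^ 2 * en w x := integral_nonneg fun x => mul_nonneg (sq_nonneg _) (en_nonneg w x)
  nlinarith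

theorem cutsq : ∃ C, 0 < C ∧ ∀ R ρ τ : ℝ, 0 < R → 37 / 20 * R ≤ ρ → ρ < τ → τ ≤ 39 / 20 * R →
    ∃ η : R3 → ℝ, Sm η ∧ HasCompactSupport η ∧ (∀ x, ‖x‖ ≤ ρ → η x = 1) ∧
      (∀ j x, |pd η j x| ≤ C * (τ - ρ)⁻¹) ∧
      (∀ j x, pd η j x ≠ 0 → ρ ≤ ‖x‖ ∧ ‖x‖ ≤ (ρ + τ) / 2) ∧
      (∀ j x, |pd (fun y => η y ^ 2) j x| ≤ C * (τ - ρ)⁻¹) ∧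
      (∀ j x, pd (fun y => η y ^ 2) j x ≠ 0 → ρ ≤ ‖x‖ ∧ ‖x‖ ≤ (ρ + τ) / 2) ∧
      (∀ x, |lap (fun y => η y ^ 2) x| ≤ C * (τ - ρ)⁻¹ ^ 2) ∧
      (∀ x, lap (fun y => η y ^ 2) x ≠ 0 → ρ ≤ ‖x‖ ∧ ‖x‖ ≤ (ρ + τ) / 2) := by
  obtain ⟨c, hc, h⟩ := cutoff
  refine ⟨c + 2 * c + 3 * (2 * c ^ 2 + 2 * c), by positivity, ?_⟩
  intro R ρ τ hR h1 h2 h3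
  obtain ⟨η, hη, hη0, hη1, ha, hb, hd, hdd⟩ := h R ρ τ hR h1 h2 h3
  set D := τ - ρ with hD
  have hD0 : 0 < D := by linarith
  set i := D⁻¹ with hi
  have i0 : 0 < i := inv_pos.2 hD0
  have e1 : c / D = c * i := div_eq_mul_inv _ _
  have e2 : c / D ^ 2 = c * i ^ 2 := by rw [div_eq_mul_inv, hi, inv_pow]
  rw [e1] at hd; rw [e2] at hdd
  have U1 : IsOpen {x : R3 | ‖x‖ < ρ} := isOpen_lt continuous_norm continuous_const
  have U2 : IsOpen {x : R3 | (ρ + τ) / 2 < ‖x‖} := isOpen_lt continuous_const continuous_norm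
  have van : ∀ (f : R3 → ℝ) (a b : ℝ), (∀ x, ‖x‖ < ρ → f x = a) → (∀ x, (ρ + τ) / 2 < ‖x‖ → f x = b) →
      ∀ j, (∀ x, ‖x‖ < ρ → pd f j x = 0) ∧ (∀ x, (ρ + τ) / 2 < ‖x‖ → pd f j x = 0) := fun f a b fa fb j =>
    ⟨fun x hx => pd_congr_open U1 fa j x hx, fun x hx => pd_congr_open U2 fb j x hx⟩
  have conv : ∀ (f : R3 → ℝ), ((∀ x, ‖x‖ < ρ → f x = 0) ∧ (∀ x, (ρ + τ) / 2 < ‖x‖ → f x = 0)) →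
      ∀ x, f x ≠ 0 → ρ ≤ ‖x‖ ∧ ‖x‖ ≤ (ρ + τ) / 2 := by
    intro f hf x hx
    constructor
    · by_contra hh; exact hx (hf.1 x (not_le.1 hh))
    · by_contra hh; exact hx (hf.2 x (not_le.1 hh))
  have v1 := van η 1 0 (fun x hx => ha x hx.le) (fun x hx => hb x hx.le)
  have v2 := van (fun y => η y ^ 2) 1 0 (fun x hx => by simp [ha x hx.le]) (fun x hx => by simp [hb x hx.le])
  have v3 : ∀ j, _ := fun j => van (pd (fun y => η y ^ 2) j) 0 0 (v2 j).1 (v2 j).2 j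
  have pq : ∀ j, pd (fun y => η y ^ 2) j = fun x => 2 * (η x * pd η j x) := by
    intro j; ext x; rw [pd_sq hη.diff]; ring
  have ppq : ∀ j x, pd (pd (fun y => η y ^ 2) j) j x = 2 * (pd η j x ^ 2 + η x * pd (pd η j) j x) := by
    intro j x
    rw [pq, pd_const_mul 2 (hη.mul' (hη.pd j)).diff, pd_mul hη.diff (hη.pd j).diff]; ring
  have ab : ∀ x, |η x| ≤ 1 := fun x => by rw [abs_of_nonneg (hη0 x)]; exact hη1 x
  refine ⟨η, hη, ?_, ha, ?_, fun j => conv _ (v1 j), ?_, fun j => conv _ (v2 j), ?_, conv _ ?_⟩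
  · apply HasCompactSupport.intro (isCompact_closedBall (0 : R3) ((ρ + τ) / 2))
    intro x hx
    simp only [mem_closedBall, dist_zero_right, not_le] at hx
    exact hb x hx.le
  · intro j x
    refine (hd j x).trans (mul_le_mul_of_nonneg_right ?_ i0.le)
    nlinarith [sq_nonneg c]
  · intro j x
    rw [pq]
    have : |2 * (η x * pd η j x)| ≤ 2 * (1 * (c * i)) := by
      rw [abs_mul, abs_mul, abs_two]
      gcongr
      · exact ab x
      · exact hd j x
    refine this.trans ?_
    have : 0 ≤ (c + 3 * (2 * c ^ 2 + 2 * c)) * i := by positivity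
    linarith
  · intro x
    unfold lap
    have : ∀ j, |pd (pd (fun y => η y ^ 2) j) j x| ≤ (2 * c ^ 2 + 2 * c) * i ^ 2 := by
      intro j
      rw [ppq, abs_mul, abs_two]
      have a1 : |pd η j x ^ 2| ≤ (c * i) ^ 2 := by
        rw [abs_pow]; exact pow_le_pow_left₀ (abs_nonneg _) (hd j x) 2
      have a2 : |η x * pd (pd η j) j x| ≤ 1 * (c * i ^ 2) := by
        rw [abs_mul]
        exact mul_le_mul (ab x) (hdd j j x) (abs_nonneg _) zero_le_one
      have := abs_add_le (pd η j x ^ 2) (η x * pd (pd η j) j x)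
      nlinarith
    refine (Finset.abs_sum_le_sum_abs _ _).trans ((Finset.sum_le_sum fun j _ => this j).trans ?_)
    simp only [Finset.sum_const, Finset.card_univ, Fintype.card_fin, nsmul_eq_mul]
    push_cast
    have : 0 ≤ (c + 2 * c) * i ^ 2 := by positivity
    linarith
  · constructor
    · intro x hx; unfold lap; exact Finset.sum_eq_zero fun j _ => (v3 j).1 x hx
    · intro x hx; unfold lap; exact Finset.sum_eq_zero fun j _ => (v3 j).2 x hx

def Th (θ : R3 → ℝ) (x : R3) : R3 := EuclideanSpace.single 0 (θ x)

theorem Th_norm (θ : R3 → ℝ) (x : R3) : ‖Th θ x‖ = |θ x| := by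
  unfold Th; simp

theorem Th_sm {θ : R3 → ℝ} (h : Sm θ) : ContDiff ℝ (⊤ : ℕ∞) (Th θ) := by
  rw [contDiff_euclidean]
  intro i
  unfold Th
  by_cases hi : i = 0
  · subst hi; simpa using h
  · have : (fun x => (EuclideanSpace.single (0 : Fin 3) (θ x) : R3) i) = fun _ => 0 := by
      ext x; simp [hi]
    rw [this]; exact contDiff_const

theorem Th_en (θ : R3 → ℝ) (x : R3) : en (Th θ) x = ∑ j, (pd θ j x) ^ 2 := by
  unfold en Th
  have e0 : (fun x => (EuclideanSpace.single (0 : Fin 3) (θ x) : R3) 0) = θ := by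
    ext x; simp
  have e1 : (fun x => (EuclideanSpace.single (0 : Fin 3) (θ x) : R3) 1) = fun _ => 0 := by
    ext x; simp
  have e2 : (fun x => (EuclideanSpace.single (0 : Fin 3) (θ x) : R3) 2) = fun _ => 0 := by
    ext x; simp
  rw [Fin.sum_univ_three, e0, e1, e2]
  simp [pd]

def Wf (u v : R3 → R3) (θ : R3 → ℝ) : Fin 3 → R3 → R3 := ![u, v, Th θ]

theorem Wf_sm {u v : R3 → R3} {θ : R3 → ℝ} (hu : ContDiff ℝ (⊤ : ℕ∞) u) (hv : ContDiff ℝ (⊤ : ℕ∞) v)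
    (hθ : Sm θ) (k : Fin 3) : ContDiff ℝ (⊤ : ℕ∞) (Wf u v θ k) := by
  fin_cases k
  · exact hu
  · exact hv
  · exact Th_sm hθ

theorem sqs_eq (u v : R3 → R3) (θ : R3 → ℝ) (x : R3) : sqs u v θ x = ∑ k, ‖Wf u v θ k x‖ ^ 2 := by
  rw [Fin.sum_univ_three]
  simp only [Wf, Matrix.cons_val]
  rw [Th_norm, sq_abs, nsq_eq, nsq_eq]; rfl

theorem enst {u v : R3 → R3} {pr θ φ : R3 → ℝ} {A : Set R3} {a b : ℝ}
    (hu : ContDiff ℝ (⊤ : ℕ∞) u) (hv : ContDiff ℝ (⊤ : ℕ∞) v)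
    (hpr : ContDiff ℝ (⊤ : ℕ∞) pr) (hθ : ContDiff ℝ (⊤ : ℕ∞) θ)
    (hsol : TCM u v pr θ) (hφ : Sm φ) (hc : HasCompactSupport φ) (hA : BS A) (ha : 0 ≤ a) (hb : 0 ≤ b)
    (h1 : ∀ j x, |pd φ j x| ≤ a) (h1s : ∀ j x, pd φ j x ≠ 0 → x ∈ A)
    (h2 : ∀ x, |lap φ x| ≤ b) (h2s : ∀ x, lap φ x ≠ 0 → x ∈ A) :
    ∫ x, φ x * (∑ k, en (Wf u v θ k) x) ≤ b * (∑ k, ∫ x in A, ‖Wf u v θ k x‖ ^ 2) +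
      6 * a * ((∑ k, ∫ x in A, ‖Wf u v θ k x‖ ^ 2 * ‖u x‖) + ∫ x in A, |θ x| * ‖v x‖) +
      |∫ x, (∑ j, u x j * pd φ j x) * pr x| := by
  have E := energy_id hu hv hpr hθ hsol hφ hc
  have W := Wf_sm hu hv hθ
  have Wc := fun k => (W k).continuous
  have uc := hu.continuous
  have vc := hv.continuous
  have tc := hθ.continuous
  have pc := hpr.continuous
  have sc : Continuous (sqs u v θ) := by
    have : sqs u v θ = fun x => ∑ k, ‖Wf u v θ k x‖ ^ 2 := funext (sqs_eq u v θ)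
    rw [this]; fun_prop
  have uic : ∀ i, Continuous fun x => u x i := fun i => (Sm.comp_coord hu i).cont
  have vic : ∀ i, Continuous fun x => v x i := fun i => (Sm.comp_coord hv i).cont
  have pφc := fun j => (hφ.pd j).cont
  have lφc := hφ.lap.cont
  have e0 : ∀ x, en u x + en v x + ∑ j, (pd θ j x) ^ 2 = ∑ k, en (Wf u v θ k) x := by
    intro x
    rw [← Th_en, Fin.sum_univ_three]
    simp only [Wf, Matrix.cons_val]
  simp only [e0] at E
  rw [E]
  set G : R3 → ℝ := fun x => (1 / 2) * (lap φ x * sqs u v θ x) +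
    ((1 / 2) * sqs u v θ x * (∑ j, u x j * pd φ j x) + ((∑ i, u x i * v x i) + θ x) * ∑ j, v x j * pd φ j x)
    with hG
  have supl : HasCompactSupport (lap φ) := by
    have s := fun j => pd_support (pd_support hc j) j
    rw [show lap φ = fun x => pd (pd φ 0) 0 x + pd (pd φ 1) 1 x + pd (pd φ 2) 2 x by
      ext x; unfold lap; rw [Fin.sum_univ_three]]
    exact ((s 0).add (s 1)).add (s 2)
  have supu : ∀ w : R3 → R3, HasCompactSupport (fun x => ∑ j, w x j * pd φ j x) := by
    intro w
    have s := fun j => (pd_support hc j).mul_left (f := fun x => w x j)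
    rw [show (fun x => ∑ j, w x j * pd φ j x) = fun x => w x 0 * pd φ 0 x + w x 1 * pd φ 1 x + w x 2 * pd φ 2 x by
      ext x; rw [Fin.sum_univ_three]]
    exact ((s 0).add (s 1)).add (s 2)
  have cu : Continuous (fun x => ∑ j, u x j * pd φ j x) := by fun_prop
  have cv : Continuous (fun x => ∑ j, v x j * pd φ j x) := by fun_prop
  have I1 : Integrable (fun x => lap φ x * sqs u v θ x) := int_mul lφc supl sc
  have I2 : Integrable (fun x => (∑ j, u x j * pd φ j x) * pr x) := int_mul cu (supu u) pc
  have I3 : Integrable (fun x => (∑ j, u x j * pd φ j x) * ((1 / 2) * sqs u v θ x)) :=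
    int_mul cu (supu u) (by fun_prop)
  have I4 : Integrable (fun x => (∑ j, v x j * pd φ j x) * ((∑ i, u x i * v x i) + θ x)) :=
    int_mul cv (supu v) (by fun_prop)
  have I34 : Integrable (fun x => (∑ j, u x j * pd φ j x) * ((1 / 2) * sqs u v θ x)
        + (∑ j, v x j * pd φ j x) * ((∑ i, u x i * v x i) + θ x)) := I3.add I4
  have e1 : (1 / 2) * (∫ x, lap φ x * sqs u v θ x) + ∫ x, ∑ j, Fld u v pr θ j x * pd φ j x
      = (∫ x, G x) + ∫ x, (∑ j, u x j * pd φ j x) * pr x := by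
    have : ∀ x, ∑ j, Fld u v pr θ j x * pd φ j x = (∑ j, u x j * pd φ j x) * ((1 / 2) * sqs u v θ x)
        + (∑ j, v x j * pd φ j x) * ((∑ i, u x i * v x i) + θ x) + (∑ j, u x j * pd φ j x) * pr x := by
      intro x
      unfold Fld
      simp only [Fin.sum_univ_three]; ring
    simp only [this]
    have e2 : ∀ x, G x = (1 / 2) * (lap φ x * sqs u v θ x) + ((∑ j, u x j * pd φ j x) * ((1 / 2) * sqs u v θ x)
        + (∑ j, v x j * pd φ j x) * ((∑ i, u x i * v x i) + θ x)) := by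
      intro x; simp only [hG]; ring
    simp only [e2]
    rw [integral_add I34 I2, integral_add (I1.const_mul _) I34, integral_const_mul]
    ring
  rw [e1]
  refine add_le_add ?_ (le_abs_self _)
  set H : R3 → ℝ := fun x => b * (∑ k, ‖Wf u v θ k x‖ ^ 2) +
    6 * a * ((∑ k, ‖Wf u v θ k x‖ ^ 2 * ‖u x‖) + |θ x| * ‖v x‖) with hH
  have pt : ∀ x, ‖G x‖ ≤ A.indicator H x := by
    intro x
    rw [Real.norm_eq_abs]
    by_cases hx : x ∈ A
    · rw [Set.indicator_of_mem hx]
      simp only [hG, hH]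
      have cs : ∀ w : R3 → R3, |∑ j, w x j * pd φ j x| ≤ 3 * a * ‖w x‖ := by
        intro w
        refine (Finset.abs_sum_le_sum_abs _ _).trans ((Finset.sum_le_sum (g := fun _ => a * ‖w x‖) fun j _ => ?_).trans ?_)
        · rw [abs_mul, mul_comm]
          exact mul_le_mul (h1 j x) (abs_coord_le _ _) (abs_nonneg _) ha
        · simp; linarith
      have uv : |∑ i, u x i * v x i| ≤ ‖u x‖ * ‖v x‖ := by
        have := abs_real_inner_le_norm (u x) (v x)
        rw [PiLp.inner_apply] at this
        simpa [mul_comm] using this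
      have S := sqs_eq u v θ x
      have S0 : 0 ≤ sqs u v θ x := by rw [S]; positivity
      have hv2 : ‖v x‖ ^ 2 ≤ sqs u v θ x := by
        rw [S, Fin.sum_univ_three]
        simp only [Wf, Matrix.cons_val]
        nlinarith [sq_nonneg ‖u x‖, sq_nonneg ‖Th θ x‖]
      rw [← Finset.sum_mul, ← S]
      have t1 : |1 / 2 * (lap φ x * sqs u v θ x)| ≤ 1 / 2 * (b * sqs u v θ x) := by
        rw [abs_mul, abs_mul, abs_of_nonneg S0, abs_of_nonneg (by norm_num : (0:ℝ) ≤ 1 / 2)]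
        gcongr; exact h2 x
      have t2 : |1 / 2 * sqs u v θ x * ∑ j, u x j * pd φ j x| ≤ 1 / 2 * sqs u v θ x * (3 * a * ‖u x‖) := by
        rw [abs_mul, abs_of_nonneg (by positivity : 0 ≤ 1 / 2 * sqs u v θ x)]
        gcongr; exact cs u
      have t3 : |((∑ i, u x i * v x i) + θ x) * ∑ j, v x j * pd φ j x| ≤ (‖u x‖ * ‖v x‖ + |θ x|) * (3 * a * ‖v x‖) := by
        rw [abs_mul]
        refine mul_le_mul ((abs_add_le _ _).trans (add_le_add uv le_rfl)) (cs v) (abs_nonneg _) (by positivity)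
      have t := (abs_add_le (1 / 2 * (lap φ x * sqs u v θ x)) (1 / 2 * sqs u v θ x * (∑ j, u x j * pd φ j x) + ((∑ i, u x i * v x i) + θ x) * ∑ j, v x j * pd φ j x)).trans
        (add_le_add t1 ((abs_add_le _ _).trans (add_le_add t2 t3)))
      refine t.trans ?_
      have r1 : 0 ≤ b * sqs u v θ x := by positivity
      have r2 : a * ‖u x‖ * ‖v x‖ ^ 2 ≤ a * ‖u x‖ * sqs u v θ x := by gcongr
      have r3 : 0 ≤ a * ‖u x‖ * sqs u v θ x := by positivity
      have r4 : 0 ≤ a * (|θ x| * ‖v x‖) := by positivity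
      nlinarith
    · rw [Set.indicator_of_notMem hx]
      have z1 : ∀ j, pd φ j x = 0 := fun j => by by_contra h; exact hx (h1s j x h)
      have z2 : lap φ x = 0 := by by_contra h; exact hx (h2s x h)
      simp [hG, z1, z2]
  have Hc : Continuous H := by fun_prop
  have n := norm_integral_le_of_norm_le (μ := volume) (IntegrableOn.integrable_indicator (hA.int Hc) hA.1) (ae_of_all _ pt)
  refine (le_abs_self _).trans ((Real.norm_eq_abs _ ▸ n).trans (le_of_eq ?_))
  rw [integral_indicator hA.1, hH, integral_add, integral_const_mul, integral_const_mul, integral_add,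
    integral_finsetSum, integral_finsetSum]
  · intro k _; exact hA.int (by fun_prop)
  · intro k _; exact hA.int (by fun_prop)
  · exact hA.int (by fun_prop)
  · exact hA.int (by fun_prop)
  · exact hA.int (by fun_prop)
  · exact hA.int (by fun_prop)

def Fen (W : Fin 3 → R3 → R3) (ρ : ℝ) : ℝ := ∑ k, ((∫ x in closedBall (0 : R3) ρ, en (W k) x) +
  (∫ x in closedBall (0 : R3) ρ, ‖W k x‖ ^ (6 : ℝ)) ^ (1 / 3 : ℝ))

theorem cB_BS (ρ : ℝ) : BS (closedBall (0 : R3) ρ) := ⟨measurableSet_closedBall, ρ, le_rfl⟩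

theorem est_alg {K j R a1 a2 a3 U S P Y C Cs Cp E E0 L Q : ℝ} (hK : 1 ≤ K) (hj : 0 ≤ j) (hR : R * j = 1)
    (h1 : 0 ≤ a1) (h2 : 0 ≤ a2) (h3 : 0 ≤ a3) (hU : 0 ≤ U) (hS : 0 ≤ S) (hP : 0 ≤ P) (hY : 0 ≤ Y)
    (hC : 0 ≤ C) (hCs : 0 ≤ Cs) (hCp : 0 ≤ Cp) (e0 : E0 ≤ E)
    (e1 : L ≤ Cs * (E + (C * (K * j)) ^ 2 * a1))
    (e2 : E ≤ C * (K * j) ^ 2 * a1 + 6 * (C * (K * j)) * (a2 + a3) + Q)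
    (e3 : Q ≤ Cp * (3 * (C * (K * j))) * (R * U * ((K * j) ^ 5 * U + (K * j) ^ 4 * S) + P * Y)) :
    E0 + L ≤ ((1 + Cs) * (6 * C + 3 * C * Cp) + Cs * C ^ 2) * K ^ 6 * (j ^ 2 * a1 + j * a2 + j * a3 + j ^ 5 * U ^ 2 +
      j ^ 4 * (U * S) + j * (P * Y)) := by
  set T := j ^ 2 * a1 + j * a2 + j * a3 + j ^ 5 * U ^ 2 + j ^ 4 * (U * S) + j * (P * Y) with hT
  have k1 : K ≤ K ^ 6 := le_self_pow₀ hK (by norm_num)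
  have k2 : K ^ 2 ≤ K ^ 6 := pow_le_pow_right₀ hK (by norm_num)
  have k5 : K ^ 5 ≤ K ^ 6 := pow_le_pow_right₀ hK (by norm_num)
  have K0 : 0 ≤ K := by linarith
  have t1 : 0 ≤ j ^ 2 * a1 := by positivity
  have t2 : 0 ≤ j * a2 := by positivity
  have t3 : 0 ≤ j * a3 := by positivity
  have t4 : 0 ≤ j ^ 5 * U ^ 2 := by positivity
  have t5 : 0 ≤ j ^ 4 * (U * S) := by positivity
  have t6 : 0 ≤ j * (P * Y) := by positivity
  have m1 : C * (K * j) ^ 2 * a1 + 6 * (C * (K * j)) * (a2 + a3) ≤ 6 * C * (K ^ 6 * T) := by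
    have e : C * (K * j) ^ 2 * a1 + 6 * (C * (K * j)) * (a2 + a3) =
      C * (K ^ 2 * (j ^ 2 * a1)) + 6 * C * (K * (j * a2 + j * a3)) := by ring
    have s1 : K ^ 2 * (j ^ 2 * a1) ≤ K ^ 6 * (j ^ 2 * a1) := by gcongr
    have s2 : K * (j * a2 + j * a3) ≤ K ^ 6 * (j * a2 + j * a3) := by gcongr
    have s3 : K ^ 6 * (j ^ 2 * a1) + K ^ 6 * (j * a2 + j * a3) ≤ K ^ 6 * T := by
      rw [← mul_add]; gcongr; rw [hT]; linarith
    have s4 : 0 ≤ K ^ 6 * (j ^ 2 * a1) := by positivity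
    rw [e]
    nlinarith
  have m2 : Q ≤ 3 * C * Cp * (K ^ 6 * T) := by
    refine e3.trans ?_
    have e : Cp * (3 * (C * (K * j))) * (R * U * ((K * j) ^ 5 * U + (K * j) ^ 4 * S) + P * Y)
        = 3 * C * Cp * (K ^ 6 * ((R * j) * (j ^ 5 * U ^ 2)) + K ^ 5 * ((R * j) * (j ^ 4 * (U * S))) + K * (j * (P * Y))) := by ring
    rw [e, hR, one_mul, one_mul]
    have s1 : K ^ 5 * (j ^ 4 * (U * S)) ≤ K ^ 6 * (j ^ 4 * (U * S)) := by gcongr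
    have s2 : K * (j * (P * Y)) ≤ K ^ 6 * (j * (P * Y)) := by gcongr
    have s3 : K ^ 6 * (j ^ 5 * U ^ 2) + K ^ 6 * (j ^ 4 * (U * S)) + K ^ 6 * (j * (P * Y)) ≤ K ^ 6 * T := by
      rw [← mul_add, ← mul_add]; gcongr; rw [hT]; linarith
    gcongr
    linarith
  have m3 : (C * (K * j)) ^ 2 * a1 ≤ C ^ 2 * (K ^ 6 * T) := by
    have : (C * (K * j)) ^ 2 * a1 = C ^ 2 * (K ^ 2 * (j ^ 2 * a1)) := by ring
    rw [this]; gcongr; rw [hT]; linarith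
  have m4 : E ≤ (6 * C + 3 * C * Cp) * (K ^ 6 * T) := by linarith
  have m5 : Cs * (E + (C * (K * j)) ^ 2 * a1) ≤ Cs * ((6 * C + 3 * C * Cp) * (K ^ 6 * T) + C ^ 2 * (K ^ 6 * T)) := by
    gcongr
  nlinarith

theorem near_H {A : Set R3} (hA : BS A) {w : R3 → R3} (hw : ContDiff ℝ (⊤ : ℕ∞) w) {H : ℝ} (hH : 0 ≤ H)
    (h1 : ∫ x in A, en w x ≤ H) (h2 : (∫ x in A, ‖w x‖ ^ (6 : ℝ)) ^ (1 / 3 : ℝ) ≤ H) :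
    (∫ x in A, (‖w x‖ * √(en w x)) ^ (3 / 2 : ℝ)) ^ (2 / 3 : ℝ) ≤ H := by
  have wc := hw.continuous
  have i1 : 0 ≤ ∫ x in A, en w x := sint_nonneg (en_nonneg w)
  have i2 : 0 ≤ ∫ x in A, ‖w x‖ ^ (6 : ℝ) := sint_nonneg fun _ => by positivity
  have h := holder hA (f := fun x => ‖w x‖ ^ (6 : ℝ)) (g := en w) (a := 1 / 4) (b := 3 / 4)
    (wc.norm.rpow_const fun _ => Or.inr (by norm_num)) (fun _ => by positivity) (en_cont hw) (en_nonneg w)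
    (by norm_num) (by norm_num) (by norm_num)
  have e : ∀ x, (‖w x‖ * √(en w x)) ^ (3 / 2 : ℝ) = (‖w x‖ ^ (6 : ℝ)) ^ (1 / 4 : ℝ) * en w x ^ (3 / 4 : ℝ) := by
    intro x
    rw [Real.mul_rpow (norm_nonneg _) (Real.sqrt_nonneg _), ← Real.rpow_mul (norm_nonneg _),
      Real.sqrt_eq_rpow, ← Real.rpow_mul (en_nonneg w x)]
    norm_num
  simp only [e]
  have i3 : 0 ≤ ∫ x in A, (‖w x‖ ^ (6 : ℝ)) ^ (1 / 4 : ℝ) * en w x ^ (3 / 4 : ℝ) :=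
    sint_nonneg fun x => mul_nonneg (by positivity) (Real.rpow_nonneg (en_nonneg w x) _)
  refine (Real.rpow_le_rpow i3 h (by norm_num)).trans ?_
  have i4 : 0 ≤ (∫ x in A, ‖w x‖ ^ (6 : ℝ)) ^ (1 / 3 : ℝ) := by positivity
  have e2 : ((∫ x in A, ‖w x‖ ^ (6 : ℝ)) ^ (1 / 4 : ℝ) * (∫ x in A, en w x) ^ (3 / 4 : ℝ)) ^ (2 / 3 : ℝ) =
     ((∫ x in A, ‖w x‖ ^ (6 : ℝ)) ^ (1 / 3 : ℝ)) ^ (1 / 2 : ℝ) * (∫ x in A, en w x) ^ (1 / 2 : ℝ) := by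
    rw [Real.mul_rpow (by positivity) (by positivity), ← Real.rpow_mul i2, ← Real.rpow_mul i1, ← Real.rpow_mul i2]
    norm_num
  rw [e2]
  calc _ ≤ H ^ (1 / 2 : ℝ) * H ^ (1 / 2 : ℝ) := by gcongr
    _ = H := by rw [← Real.mul_rpow hH hH, ← Real.sqrt_eq_rpow, Real.sqrt_mul_self hH]

theorem est1 {p s : ℝ} (hp1 : 3 / 2 < p) (hp2 : p < 3) (hs : 2 ≤ s) (hps : 1 < 1 / p + 2 / s) :
    ∃ C, 0 ≤ C ∧ ∀ (u v : R3 → R3) (pr θ : R3 → ℝ) (R ρ τ lu lv H : ℝ),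
    ContDiff ℝ (⊤ : ℕ∞) u → ContDiff ℝ (⊤ : ℕ∞) v → Sm pr → Sm θ → TCM u v pr θ →
    0 < R → 37 / 20 * R ≤ ρ → ρ < τ → τ ≤ 39 / 20 * R → 0 < lu → 0 < lv → 0 ≤ H →
    (∀ k, ∫ x in Aset R τ, en (Wf u v θ k) x ≤ H) →
    (∀ k, (∫ x in Aset R τ, ‖Wf u v θ k x‖ ^ (6 : ℝ)) ^ (1 / 3 : ℝ) ≤ H) →
    Fen (Wf u v θ) ρ ≤ C * (R / (τ - ρ)) ^ 6 * (
      R⁻¹ ^ 2 * (∑ k, ∫ x in Aset R τ, ‖Wf u v θ k x‖ ^ 2) +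
      R⁻¹ * (∑ k, ∫ x in Aset R τ, ‖Wf u v θ k x‖ ^ 2 * ‖u x‖) +
      R⁻¹ * (∫ x in Aset R τ, |θ x| * ‖v x‖) +
      R⁻¹ ^ 5 * (∫ x in Aset R τ, ‖u x‖) ^ 2 +
      R⁻¹ ^ 4 * ((∫ x in Aset R τ, ‖u x‖) * ((∫ x in Aset R τ, ‖u x‖ ^ 2) + ∫ x in Aset R τ, ‖v x‖ ^ 2)) +
      R⁻¹ * ((∫ x in Aset R τ, ‖u x‖ ^ p) ^ (1 / p) *
      ((H * lu ^ (2 - 3 / p) + (∫ x in Aset R τ, ‖u x‖ ^ s) ^ (2 / s) * lu ^ (-(3 / p + 6 / s - 3))) +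
       (H * lv ^ (2 - 3 / p) + (∫ x in Aset R τ, ‖v x‖ ^ s) ^ (2 / s) * lv ^ (-(3 / p + 6 / s - 3)))))) := by
  obtain ⟨C, hC, hcut⟩ := cutsq
  obtain ⟨Cs, hCs, hsob⟩ := sobcut
  obtain ⟨Cp, hCp, hpress⟩ := press hp1 hp2 hs hps
  refine ⟨(1 + Cs) * (6 * C + 3 * C * Cp) + Cs * C ^ 2, by positivity, ?_⟩
  intro u v pr θ R ρ τ lu lv H hu hv hpr hθ hsol hR h1 h2 h3 hlu hlv hH hen h6
  obtain ⟨η, hη, hηc, ha, hd, hds, hq, hqs, hl, hls⟩ := hcut R ρ τ hR h1 h2 h3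
  set A := Aset R τ with hA
  have hAB : BS A := Aset_BS R τ
  have inA : ∀ x : R3, (ρ ≤ ‖x‖ ∧ ‖x‖ ≤ (ρ + τ) / 2) → x ∈ A := fun x hx =>
    ⟨by linarith [hx.1], by linarith [hx.2]⟩
  have hD : 0 < τ - ρ := by linarith
  have eD : (τ - ρ)⁻¹ = R / (τ - ρ) * R⁻¹ := by field_simp
  have W := Wf_sm hu hv hθ
  set φ : R3 → ℝ := fun y => η y ^ 2 with hφd
  have hφ : Sm φ := ContDiff.pow hη 2
  have hφc : HasCompactSupport φ := hηc.comp_left (g := fun t : ℝ => t ^ 2) (by norm_num)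
  have D0 : 0 < (τ - ρ)⁻¹ := inv_pos.2 hD
  have e2 := enst hu hv hpr hθ hsol hφ hφc hAB (a := C * (τ - ρ)⁻¹) (b := C * (τ - ρ)⁻¹ ^ 2) (by positivity)
    (by positivity) hq (fun j x h => inA x (hqs j x h)) hl (fun x h => inA x (hls x h))
  set ψ : R3 → ℝ := fun x => ∑ j, u x j * pd φ j x with hψ
  have uic : ∀ i, Continuous fun x => u x i := fun i => (Sm.comp_coord hu i).cont
  have pφc := fun j => (hφ.pd j).cont
  have ψc : Continuous ψ := by rw [hψ]; fun_prop
  have ψs : HasCompactSupport ψ := by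
    have s := fun j => (pd_support hφc j).mul_left (f := fun x => u x j)
    rw [show ψ = fun x => u x 0 * pd φ 0 x + u x 1 * pd φ 1 x + u x 2 * pd φ 2 x by
      ext x; rw [hψ]; simp only [Fin.sum_univ_three]]
    exact ((s 0).add (s 1)).add (s 2)
  have ψb : ∀ x, |ψ x| ≤ 3 * (C * (τ - ρ)⁻¹) * ‖u x‖ := by
    intro x
    refine (Finset.abs_sum_le_sum_abs _ _).trans ((Finset.sum_le_sum (g := fun _ => C * (τ - ρ)⁻¹ * ‖u x‖) fun j _ => ?_).trans ?_)
    · rw [abs_mul, mul_comm]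
      exact mul_le_mul (hq j x) (abs_coord_le _ _) (abs_nonneg _) (by positivity)
    · simp; linarith
  have ψsup : ∀ x, ψ x ≠ 0 → ρ ≤ ‖x‖ ∧ ‖x‖ ≤ (ρ + τ) / 2 := by
    intro x hx
    by_contra hcon
    apply hx
    refine Finset.sum_eq_zero fun j _ => ?_
    have : pd φ j x = 0 := by by_contra h; exact hcon (hqs j x h)
    rw [this, mul_zero]
  have ψ0 : ∫ x, ψ x = 0 := by
    have := int_div hφ hφc (F := fun j x => u x j) (fun j => Sm.comp_coord hu j)
    simp only [hsol.2.2.2, mul_zero, integral_zero] at this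
    rw [hψ]; linarith
  have e3 := hpress u v pr θ ψ R ρ τ (3 * (C * (τ - ρ)⁻¹)) lu lv hu hv hpr hsol hR h1 h2 h3 ψc ψs
    (by positivity) ψb ψsup ψ0 hlu hlv
  have nu := near_H hAB hu hH (hen 0) (h6 0)
  have nv := near_H hAB hv hH (hen 1) (h6 1)
  have U0 : 0 ≤ ∫ x in A, ‖u x‖ := sint_nonneg fun _ => norm_nonneg _
  have U2 : 0 ≤ ∫ x in A, ‖u x‖ ^ 2 := sint_nonneg fun _ => by positivity
  have V2 : 0 ≤ ∫ x in A, ‖v x‖ ^ 2 := sint_nonneg fun _ => by positivity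
  have P0 : 0 ≤ (∫ x in A, ‖u x‖ ^ p) ^ (1 / p) := Real.rpow_nonneg (sint_nonneg fun _ => by positivity) _
  have Nu0 : 0 ≤ (∫ x in A, ‖u x‖ ^ s) ^ (2 / s) := Real.rpow_nonneg (sint_nonneg fun _ => by positivity) _
  have Nv0 : 0 ≤ (∫ x in A, ‖v x‖ ^ s) ^ (2 / s) := Real.rpow_nonneg (sint_nonneg fun _ => by positivity) _
  have e3' := e3.trans (b := _) (c := Cp * (3 * (C * (τ - ρ)⁻¹)) * (R * (∫ x in A, ‖u x‖) *
      ((τ - ρ)⁻¹ ^ 5 * (∫ x in A, ‖u x‖) + (τ - ρ)⁻¹ ^ 4 *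
        ((∫ x in A, ‖u x‖ ^ 2) + ∫ x in A, ‖v x‖ ^ 2)) +
      (∫ x in A, ‖u x‖ ^ p) ^ (1 / p) *
      ((H * lu ^ (2 - 3 / p) + (∫ x in A, ‖u x‖ ^ s) ^ (2 / s) * lu ^ (-(3 / p + 6 / s - 3))) +
       (H * lv ^ (2 - 3 / p) + (∫ x in A, ‖v x‖ ^ s) ^ (2 / s) * lv ^ (-(3 / p + 6 / s - 3)))))) (by
    gcongr)
  have ic : ∀ k, Integrable (fun x => φ x * en (Wf u v θ k) x) := fun k => int_mul hφ.cont hφc (en_cont (W k))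
  have ceB := cB_BS ρ
  have eE : ∫ x, φ x * (∑ k, en (Wf u v θ k) x) = ∑ k, ∫ x, φ x * en (Wf u v θ k) x := by
    rw [← integral_finsetSum _ (fun k _ => ic k)]
    congr 1; ext x; rw [Finset.mul_sum]
  have e0 : ∑ k, ∫ x in closedBall (0 : R3) ρ, en (Wf u v θ k) x ≤ ∫ x, φ x * (∑ k, en (Wf u v θ k) x) := by
    rw [eE]
    apply Finset.sum_le_sum
    intro k _
    rw [setIntegral_congr_fun (g := fun x => φ x * en (Wf u v θ k) x) ceB.1
      (fun x hx => by simp [hφd, ha x (by simpa using hx)])]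
    exact setIntegral_le_integral (ic k) (ae_of_all _ fun x => mul_nonneg (by positivity) (en_nonneg _ x))
  have e1 : ∑ k, (∫ x in closedBall (0 : R3) ρ, ‖Wf u v θ k x‖ ^ (6 : ℝ)) ^ (1 / 3 : ℝ) ≤
      Cs * ((∫ x, φ x * (∑ k, en (Wf u v θ k) x)) + (C * (τ - ρ)⁻¹) ^ 2 * ∑ k, ∫ x in A, ‖Wf u v θ k x‖ ^ 2) := by
    rw [eE, Finset.mul_sum _ _ ((C * (τ - ρ)⁻¹) ^ 2), ← Finset.sum_add_distrib, Finset.mul_sum]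
    apply Finset.sum_le_sum
    intro k _
    exact hsob (Wf u v θ k) η A _ (C * (τ - ρ)⁻¹) (W k) hη hηc hAB ceB (fun x hx => ha x (by simpa using hx))
      (fun j x h => inA x (hds j x h)) hd
  have hK : 1 ≤ R / (τ - ρ) := by rw [le_div_iff₀ hD]; linarith
  rw [eD] at e1 e2 e3'
  unfold Fen
  rw [Finset.sum_add_distrib]
  refine est_alg hK (inv_pos.2 hR).le (mul_inv_cancel₀ hR.ne') ?_ ?_ ?_ U0 (by positivity) P0 (by positivity) hC.le hCs hCp e0 e1 e2 e3'
  · exact Finset.sum_nonneg fun k _ => sint_nonneg fun _ => by positivity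
  · exact Finset.sum_nonneg fun k _ => sint_nonneg fun _ => by positivity
  · exact sint_nonneg fun _ => by positivity

theorem hol2 {A : Set R3} (hA : BS A) {f g : R3 → ℝ} (hf : Continuous f) (hf0 : ∀ x, 0 ≤ f x)
    (hg : Continuous g) (hg0 : ∀ x, 0 ≤ g x) {a b : ℝ} (ha : 0 < a) (hb : 0 < b) (hab : 1 / a + 1 / b = 1) :
    ∫ x in A, f x * g x ≤ (∫ x in A, f x ^ a) ^ (1 / a) * (∫ x in A, g x ^ b) ^ (1 / b) := by
  have h := holder hA (f := fun x => f x ^ a) (g := fun x => g x ^ b) (a := 1 / a) (b := 1 / b)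
    (hf.rpow_const fun _ => Or.inr ha.le) (fun x => Real.rpow_nonneg (hf0 x) _)
    (hg.rpow_const fun _ => Or.inr hb.le) (fun x => Real.rpow_nonneg (hg0 x) _)
    (by positivity) (by positivity) hab
  have e : ∀ x, (f x ^ a) ^ (1 / a) * (g x ^ b) ^ (1 / b) = f x * g x := by
    intro x
    rw [← Real.rpow_mul (hf0 x), ← Real.rpow_mul (hg0 x), mul_one_div_cancel ha.ne', mul_one_div_cancel hb.ne',
      Real.rpow_one, Real.rpow_one]
  simp only [e] at h
  exact h

theorem hol1 {A : Set R3} (hA : BS A) {f : R3 → ℝ} (hf : Continuous f) (hf0 : ∀ x, 0 ≤ f x)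
    {a : ℝ} (ha : 1 ≤ a) :
    ∫ x in A, f x ≤ (∫ x in A, f x ^ a) ^ (1 / a) * (∫ _x in A, (1 : ℝ)) ^ (1 - 1 / a) := by
  have a0 : 0 < a := by linarith
  have h := holder hA (f := fun x => f x ^ a) (g := fun _ => 1) (a := 1 / a) (b := 1 - 1 / a)
    (hf.rpow_const fun _ => Or.inr a0.le) (fun x => Real.rpow_nonneg (hf0 x) _)
    continuous_const (fun x => zero_le_one)
    (by positivity) (by rw [sub_nonneg, div_le_one a0]; exact ha) (by ring)
  have e : ∀ x, (f x ^ a) ^ (1 / a) * (1 : ℝ) ^ (1 - 1 / a) = f x := by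
    intro x
    rw [← Real.rpow_mul (hf0 x), mul_one_div_cancel a0.ne', Real.rpow_one, Real.one_rpow, mul_one]
  simp only [e] at h
  exact h

theorem vol_A : ∃ V, 1 ≤ V ∧ ∀ R τ : ℝ, 0 < R → τ ≤ 2 * R → ∫ _x in Aset R τ, (1 : ℝ) ≤ V * R ^ (3 : ℝ) := by
  refine ⟨8 * (volume (ball (0 : R3) 1)).toReal + 1, by
    have := ENNReal.toReal_nonneg (a := volume (ball (0 : R3) 1)); linarith, ?_⟩
  intro R τ hR hτ
  have sub : Aset R τ ⊆ closedBall (0 : R3) (2 * R) := by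
    intro x hx; simp only [mem_closedBall, dist_zero_right]; exact hx.2.le.trans hτ
  have h1 : ∫ _x in Aset R τ, (1 : ℝ) ≤ ∫ _x in closedBall (0 : R3) (2 * R), (1 : ℝ) :=
    setIntegral_mono_set ((cB_BS _).int continuous_const) (ae_of_all _ fun _ => zero_le_one) sub.eventuallyLE
  refine h1.trans ?_
  rw [setIntegral_const, smul_eq_mul, mul_one, Measure.real, Measure.addHaar_closedBall _ _ (by positivity)]
  rw [ENNReal.toReal_mul, ENNReal.toReal_ofReal (by positivity)]
  have : R ^ (3 : ℝ) = R ^ 3 := by norm_cast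
  rw [this]
  simp only [finrank_euclideanSpace, Fintype.card_fin]
  have : 0 < R ^ 3 := by positivity
  nlinarith

theorem interp {A : Set R3} (hA : BS A) {w : R3 → R3} (hw : Continuous w) {q s M H : ℝ} (hq : 0 < q) (hq6 : q < 6)
    (hqs : q ≤ s) (hs : s ≤ 6) (hM : 0 ≤ M) (hH : 0 ≤ H) (h1 : (∫ x in A, ‖w x‖ ^ q) ^ (1 / q) ≤ M)
    (h2 : (∫ x in A, ‖w x‖ ^ (6 : ℝ)) ^ (1 / 3 : ℝ) ≤ H) :
    (∫ x in A, ‖w x‖ ^ s) ^ (2 / s) ≤ M ^ (2 * (q * (6 - s) / (s * (6 - q)))) * H ^ (1 - q * (6 - s) / (s * (6 - q))) := by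
  have s0 : 0 < s := by linarith
  have d0 : 0 < 6 - q := by linarith
  set a := (6 - s) / (6 - q) with ha
  set b := (s - q) / (6 - q) with hb
  have a0 : 0 ≤ a := div_nonneg (by linarith) d0.le
  have b0 : 0 ≤ b := div_nonneg (by linarith) d0.le
  have h := holder hA (f := fun x => ‖w x‖ ^ q) (g := fun x => ‖w x‖ ^ (6 : ℝ)) (a := a) (b := b)
    (hw.norm.rpow_const fun _ => Or.inr hq.le) (fun x => by positivity)
    (hw.norm.rpow_const fun _ => Or.inr (by norm_num)) (fun x => by positivity) a0 b0
    (by rw [ha, hb]; field_simp; ring)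
  have e : ∀ x, (‖w x‖ ^ q) ^ a * (‖w x‖ ^ (6 : ℝ)) ^ b = ‖w x‖ ^ s := by
    intro x
    rw [← Real.rpow_mul (norm_nonneg _), ← Real.rpow_mul (norm_nonneg _), ← Real.rpow_add_of_nonneg (norm_nonneg _)
      (by positivity) (by positivity)]
    congr 1
    rw [ha, hb]; field_simp; ring
  simp only [e] at h
  have i1 : 0 ≤ ∫ x in A, ‖w x‖ ^ q := sint_nonneg fun _ => by positivity
  have i2 : 0 ≤ ∫ x in A, ‖w x‖ ^ (6 : ℝ) := sint_nonneg fun _ => by positivity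
  have i3 : 0 ≤ ∫ x in A, ‖w x‖ ^ s := sint_nonneg fun _ => by positivity
  refine (Real.rpow_le_rpow i3 h (by positivity)).trans ?_
  rw [Real.mul_rpow (by positivity) (by positivity), ← Real.rpow_mul i1, ← Real.rpow_mul i2]
  have f1 : a * (2 / s) = (1 / q) * (2 * (q * (6 - s) / (s * (6 - q)))) := by rw [ha]; field_simp
  have f2 : b * (2 / s) = (1 / 3) * (1 - q * (6 - s) / (s * (6 - q))) := by rw [hb]; field_simp; ring
  have g1 : 0 ≤ 2 * (q * (6 - s) / (s * (6 - q))) := by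
    have : 0 ≤ 6 - s := by linarith
    positivity
  have g2 : 0 ≤ 1 - q * (6 - s) / (s * (6 - q)) := by
    have : 0 ≤ (1 / 3) * (1 - q * (6 - s) / (s * (6 - q))) := by rw [← f2]; positivity
    linarith
  rw [f1, f2, Real.rpow_mul i1, Real.rpow_mul i2]
  gcongr

/-- combined numeric facts for one field -/
theorem wnum {A : Set R3} (hA : BS A) {w : R3 → R3} (hw : Continuous w) {p q M H lam : ℝ} (hp1 : 3 / 2 < p)
    (hp2 : p < 3) (hq : 0 < q) (hq2 : q < 2 * (p / (p - 1))) (hM : 0 < M) (hH : 0 < H)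
    (hlam : lam = (2 * p - 3) * q / (p * (6 - q)))
    (h1 : (∫ x in A, ‖w x‖ ^ q) ^ (1 / q) ≤ M)
    (h2 : (∫ x in A, ‖w x‖ ^ (6 : ℝ)) ^ (1 / 3 : ℝ) ≤ H) :
    q < 6 ∧ 0 < lam ∧ lam < 1 ∧
    (∫ x in A, ‖w x‖ ^ (2 * (p / (p - 1)))) ^ ((p - 1) / p) ≤ M ^ (2 * lam) * H ^ (1 - lam) ∧
    (∀ s, q ≤ s → s ≤ 6 → 2 ≤ s → ∃ l, 0 < l ∧ H * l ^ (2 - 3 / p) ≤ M ^ (2 * lam) * H ^ (1 - lam) ∧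
      (∫ x in A, ‖w x‖ ^ s) ^ (2 / s) * l ^ (-(3 / p + 6 / s - 3)) ≤ M ^ (2 * lam) * H ^ (1 - lam)) := by
  have p0 : 0 < p := by linarith
  have pm : 0 < p - 1 := by linarith
  have S6 : 2 * (p / (p - 1)) < 6 := by
    rw [← mul_div_assoc, div_lt_iff₀ pm]; linarith
  have q6 : q < 6 := by linarith
  have d0 : 0 < 6 - q := by linarith
  have l0 : 0 < lam := by
    rw [hlam]; have : 0 < 2 * p - 3 := by linarith
    positivity
  have l1 : lam < 1 := by
    rw [hlam, div_lt_one (by positivity)]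
    rw [← mul_div_assoc, lt_div_iff₀ pm] at hq2
    nlinarith
  refine ⟨q6, l0, l1, ?_, ?_⟩
  · have := interp hA hw hq q6 hq2.le S6.le hM.le hH.le h1 h2
    have e1 : 2 / (2 * (p / (p - 1))) = (p - 1) / p := by field_simp
    have e2 : q * (6 - 2 * (p / (p - 1))) / (2 * (p / (p - 1)) * (6 - q)) = lam := by
      rw [hlam]; field_simp; ring
    rw [e1, e2] at this
    exact this
  · intro s hqs hs6 hs2
    have s0 : 0 < s := by linarith
    have I := interp hA hw hq q6 hqs hs6 hM.le hH.le h1 h2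
    have key : ∀ t : ℝ, ((M ^ 2 / H) ^ (q / (6 - q))) ^ t = M ^ (2 * (q / (6 - q) * t)) * H ^ (-(q / (6 - q) * t)) := by
      intro t
      rw [← Real.rpow_mul (by positivity), Real.div_rpow (by positivity) hH.le, ← Real.rpow_natCast M 2,
        ← Real.rpow_mul hM.le, Real.rpow_neg hH.le, div_eq_mul_inv]
      norm_num
    refine ⟨(M ^ 2 / H) ^ (q / (6 - q)), by positivity, ?_, ?_⟩
    · rw [key]
      have e : q / (6 - q) * (2 - 3 / p) = lam := by rw [hlam]; field_simp
      rw [e]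
      apply le_of_eq
      rw [sub_eq_add_neg, Real.rpow_add hH, Real.rpow_one]; ring
    · rw [key]
      refine (mul_le_mul_of_nonneg_right I (by positivity)).trans (le_of_eq ?_)
      rw [mul_mul_mul_comm, ← Real.rpow_add hM, ← Real.rpow_add hH]
      congr 2
      · rw [hlam]; field_simp; ring
      · rw [hlam]; field_simp; ring

theorem vpow {V R t c : ℝ} (hV : 1 ≤ V) (hR : 0 < R) (hc : 0 ≤ c) (h : c ≤ V * R ^ (3 : ℝ)) (ht : 0 ≤ t) (ht1 : t ≤ 1) :
    c ^ t ≤ V * R ^ (3 * t) := by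
  refine (Real.rpow_le_rpow hc h ht).trans ?_
  rw [Real.mul_rpow (by linarith) (by positivity), ← Real.rpow_mul hR.le]
  gcongr
  calc V ^ t ≤ V ^ (1 : ℝ) := Real.rpow_le_rpow_of_exponent_le hV ht1
    _ = V := Real.rpow_one V

theorem sqpow (a t : ℝ) (ha : 0 ≤ a) : (a ^ 2) ^ t = a ^ (2 * t) := by
  rw [← Real.rpow_natCast, ← Real.rpow_mul ha]; norm_num

theorem pack {A : Set R3} (hA : BS A) {u w : R3 → R3} (hu : Continuous u) (hw : Continuous w)
    {p q α β C0 R H lam V : ℝ} (hp1 : 3 / 2 < p)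
    (hp2 : p < 3) (hq : 0 < q) (hq2 : q < 2 * (p / (p - 1))) (hH : 0 < H) (hC0 : 1 ≤ C0) (hR : 1 ≤ R) (hV : 1 ≤ V)
    (hvol : ∫ _x in A, (1 : ℝ) ≤ V * R ^ (3 : ℝ))
    (hlam : lam = (2 * p - 3) * q / (p * (6 - q)))
    (hc1 : α + 2 * lam * β ≤ 1) (hc2 : β ≤ 3 / q - 1 / 2)
    (hP : (∫ x in A, ‖u x‖ ^ p) ^ (1 / p) ≤ C0 * R ^ α)
    (h1 : (∫ x in A, ‖w x‖ ^ q) ^ (1 / q) ≤ C0 * R ^ β)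
    (h2 : (∫ x in A, ‖w x‖ ^ (6 : ℝ)) ^ (1 / 3 : ℝ) ≤ H) :
    R⁻¹ ^ 2 * (∫ x in A, ‖w x‖ ^ 2) ≤ V * C0 ^ 2 * H ^ (1 - lam) ∧
    R⁻¹ ^ 4 * (R ^ α * R ^ (3 - 3 / p) * ∫ x in A, ‖w x‖ ^ 2) ≤ V * C0 ^ 2 * H ^ (1 - lam) ∧
    R⁻¹ * (∫ x in A, ‖w x‖ ^ 2 * ‖u x‖) ≤ C0 ^ 3 * H ^ (1 - lam) ∧
    (∀ s, q ≤ s → s ≤ 6 → 2 ≤ s → ∃ l, 0 < l ∧ R⁻¹ * ((∫ x in A, ‖u x‖ ^ p) ^ (1 / p) *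
      (H * l ^ (2 - 3 / p) + (∫ x in A, ‖w x‖ ^ s) ^ (2 / s) * l ^ (-(3 / p + 6 / s - 3)))) ≤
      2 * C0 ^ 3 * H ^ (1 - lam)) := by
  have R0 : 0 < R := by linarith
  have p0 : 0 < p := by linarith
  have pm : 0 < p - 1 := by linarith
  obtain ⟨q6, l0, l1, hS, hl⟩ := wnum hA hw hp1 hp2 hq hq2 (by positivity : 0 < C0 * R ^ β) hH hlam h1 h2
  have d0 : 0 < 6 - q := by linarith
  set N := (C0 * R ^ β) ^ (2 * lam) * H ^ (1 - lam) with hN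
  have N0 : 0 < N := by positivity
  have Hk : 0 < H ^ (1 - lam) := by positivity
  have Nb : N ≤ C0 ^ 2 * R ^ (2 * lam * β) * H ^ (1 - lam) := by
    rw [hN, Real.mul_rpow (by positivity) (by positivity), ← Real.rpow_mul R0.le]
    rw [show β * (2 * lam) = 2 * lam * β by ring]
    gcongr
    rw [← Real.rpow_natCast]
    exact Real.rpow_le_rpow_of_exponent_le hC0 (by push_cast; linarith)
  have gen : ∀ t, t + 2 * lam * β ≤ 0 → R ^ t * N ≤ C0 ^ 2 * H ^ (1 - lam) := by
    intro t ht
    calc R ^ t * N ≤ R ^ t * (C0 ^ 2 * R ^ (2 * lam * β) * H ^ (1 - lam)) := by gcongr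
      _ = C0 ^ 2 * R ^ (t + 2 * lam * β) * H ^ (1 - lam) := by rw [Real.rpow_add R0]; ring
      _ ≤ C0 ^ 2 * 1 * H ^ (1 - lam) := by
        gcongr; exact Real.rpow_le_one_of_one_le_of_nonpos hR ht
      _ = _ := by ring
  have lb : 2 * lam * β ≤ 2 - 3 / p := by
    have : 2 * lam * β ≤ 2 * lam * (3 / q - 1 / 2) := by gcongr
    refine this.trans (le_of_eq ?_)
    rw [hlam]; field_simp; ring
  have g1 := gen (-1 + α) (by linarith)
  have g2 := gen (-2 + 3 / p) (by linarith)
  have v0 : 0 ≤ ∫ _x in A, (1 : ℝ) := sint_nonneg fun _ => zero_le_one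
  have w2 : ∫ x in A, ‖w x‖ ^ 2 ≤ N * (V * R ^ (3 / p)) := by
    have h := hol1 hA (f := fun x => ‖w x‖ ^ 2) (by fun_prop) (fun _ => by positivity) (a := p / (p - 1))
      (by rw [le_div_iff₀ pm]; linarith)
    simp only [sqpow _ _ (norm_nonneg _)] at h
    rw [show 1 / (p / (p - 1)) = (p - 1) / p by field_simp] at h
    refine h.trans ?_
    rw [show 1 - (p - 1) / p = 1 / p by field_simp; ring]
    refine mul_le_mul hS ?_ (by positivity) N0.le
    have := vpow hV R0 v0 hvol (t := 1 / p) (by positivity) (by rw [div_le_one p0]; linarith)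
    rwa [show 3 * (1 / p) = 3 / p by ring] at this
  have r1 : R⁻¹ = R ^ (-1 : ℝ) := by rw [Real.rpow_neg_one]
  have r2 : R⁻¹ ^ 2 = R ^ (-2 : ℝ) := by
    rw [Real.rpow_neg R0.le, inv_pow]; norm_cast
  have r4 : R⁻¹ ^ 4 = R ^ (-4 : ℝ) := by
    rw [Real.rpow_neg R0.le, inv_pow]; norm_cast
  have N' : R⁻¹ * (R ^ α * N) ≤ C0 ^ 2 * H ^ (1 - lam) := by
    refine le_trans (le_of_eq ?_) g1
    rw [r1, Real.rpow_add R0]; ring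
  have P0 : 0 ≤ (∫ x in A, ‖u x‖ ^ p) ^ (1 / p) := Real.rpow_nonneg (sint_nonneg fun _ => by positivity) _
  refine ⟨?_, ?_, ?_, ?_⟩
  · calc _ ≤ R⁻¹ ^ 2 * (N * (V * R ^ (3 / p))) := by gcongr
      _ = V * (R ^ (-2 + 3 / p) * N) := by rw [r2, Real.rpow_add R0]; ring
      _ ≤ V * (C0 ^ 2 * H ^ (1 - lam)) := by gcongr
      _ = _ := by ring
  · calc _ ≤ R⁻¹ ^ 4 * (R ^ α * R ^ (3 - 3 / p) * (N * (V * R ^ (3 / p)))) := by gcongr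
      _ = V * (R ^ (-1 + α) * N) := by
        rw [r4]
        have : R ^ (-1 + α) = R ^ (-4 : ℝ) * (R ^ α * R ^ (3 - 3 / p)) * R ^ (3 / p) := by
          rw [← Real.rpow_add R0, ← Real.rpow_add R0, ← Real.rpow_add R0]; congr 1; ring
        rw [this]; ring
      _ ≤ V * (C0 ^ 2 * H ^ (1 - lam)) := by gcongr
      _ = _ := by ring
  · have h := hol2 hA (f := fun x => ‖w x‖ ^ 2) (g := fun x => ‖u x‖) (by fun_prop) (fun _ => by positivity)
      (by fun_prop) (fun _ => by positivity) (a := p / (p - 1)) (b := p) (by positivity) p0 (by field_simp; ring)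
    simp only [sqpow _ _ (norm_nonneg _)] at h
    rw [show 1 / (p / (p - 1)) = (p - 1) / p by field_simp] at h
    calc _ ≤ R⁻¹ * (N * (C0 * R ^ α)) := by
          gcongr
          exact h.trans (mul_le_mul hS hP P0 N0.le)
      _ = C0 * (R⁻¹ * (R ^ α * N)) := by ring
      _ ≤ C0 * (C0 ^ 2 * H ^ (1 - lam)) := by gcongr
      _ = _ := by ring
  · intro s hs1 hs2 hs3
    obtain ⟨l, hl0, a1, a2⟩ := hl s hs1 hs2 hs3
    refine ⟨l, hl0, ?_⟩
    have : 0 ≤ (∫ x in A, ‖w x‖ ^ s) ^ (2 / s) := Real.rpow_nonneg (sint_nonneg fun _ => by positivity) _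
    calc _ ≤ R⁻¹ * ((C0 * R ^ α) * (N + N)) := by gcongr
      _ = 2 * C0 * (R⁻¹ * (R ^ α * N)) := by ring
      _ ≤ 2 * C0 * (C0 ^ 2 * H ^ (1 - lam)) := by gcongr
      _ = _ := by ring

theorem l2b {A : Set R3} (hA : BS A) {w : R3 → R3} (hw : Continuous w)
    {q β C0 R V : ℝ} (hq : 2 ≤ q) (hC0 : 1 ≤ C0) (hR : 1 ≤ R) (hV : 1 ≤ V)
    (hvol : ∫ _x in A, (1 : ℝ) ≤ V * R ^ (3 : ℝ))
    (h1 : (∫ x in A, ‖w x‖ ^ q) ^ (1 / q) ≤ C0 * R ^ β) :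
    (∫ x in A, ‖w x‖ ^ (2 : ℝ)) ^ (1 / 2 : ℝ) ≤ V * C0 * R ^ (3 / 2 - 3 / q + β) := by
  have R0 : 0 < R := by linarith
  have q0 : 0 < q := by linarith
  have v0 : 0 ≤ ∫ _x in A, (1 : ℝ) := sint_nonneg fun _ => zero_le_one
  have h := hol1 hA (f := fun x => ‖w x‖ ^ (2 : ℝ)) (hw.norm.rpow_const fun _ => Or.inr (by norm_num)) (fun _ => by positivity) (a := q / 2)
      (by linarith)
  have e : ∀ x, (‖w x‖ ^ (2 : ℝ)) ^ (q / 2) = ‖w x‖ ^ q := by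
    intro x; rw [← Real.rpow_mul (norm_nonneg _)]; congr 1; ring
  simp only [e] at h
  have i0 : 0 ≤ ∫ x in A, ‖w x‖ ^ (2 : ℝ) := sint_nonneg fun _ => by positivity
  have i1 : 0 ≤ ∫ x in A, ‖w x‖ ^ q := sint_nonneg fun _ => by positivity
  refine (Real.rpow_le_rpow i0 h (by norm_num)).trans ?_
  rw [Real.mul_rpow (by positivity) (by positivity), ← Real.rpow_mul i1, ← Real.rpow_mul v0]
  rw [show 1 / (q / 2) * (1 / 2) = 1 / q by field_simp]
  have := vpow hV R0 v0 hvol (t := (1 - 1 / (q / 2)) * (1 / 2)) (by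
    have : 1 / (q / 2) ≤ 1 := by rw [div_le_one (by positivity)]; linarith
    nlinarith) (by
    have : 0 ≤ 1 / (q / 2) := by positivity
    linarith)
  calc _ ≤ (C0 * R ^ β) * (V * R ^ (3 * ((1 - 1 / (q / 2)) * (1 / 2)))) := by gcongr
    _ = V * C0 * R ^ (3 / 2 - 3 / q + β) := by
      have : R ^ (3 / 2 - 3 / q + β) = R ^ β * R ^ (3 * ((1 - 1 / (q / 2)) * (1 / 2))) := by
        rw [← Real.rpow_add R0]; congr 1; field_simp; ring
      rw [this]; ring

theorem cross {A : Set R3} (hA : BS A) {w z : R3 → R3} (hw : Continuous w) (hz : Continuous z)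
    {q r β γ C0 R V : ℝ} (hq : 2 ≤ q) (hr : 2 ≤ r) (hC0 : 1 ≤ C0) (hR : 1 ≤ R) (hV : 1 ≤ V)
    (hvol : ∫ _x in A, (1 : ℝ) ≤ V * R ^ (3 : ℝ))
    (h1 : (∫ x in A, ‖w x‖ ^ q) ^ (1 / q) ≤ C0 * R ^ β)
    (h2 : (∫ x in A, ‖z x‖ ^ r) ^ (1 / r) ≤ C0 * R ^ γ) :
    R⁻¹ * ∫ x in A, ‖z x‖ * ‖w x‖ ≤ (V * C0) ^ 2 * R ^ (-(3 / q + 3 / r - 2 - (β + γ))) := by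
  have R0 : 0 < R := by linarith
  have a1 := l2b hA hw hq hC0 hR hV hvol h1
  have a2 := l2b hA hz hr hC0 hR hV hvol h2
  have h := hol2 hA (f := fun x => ‖z x‖) (g := fun x => ‖w x‖) (by fun_prop) (fun _ => by positivity)
      (by fun_prop) (fun _ => by positivity) (a := 2) (b := 2) (by norm_num) (by norm_num) (by norm_num)
  have i1 : 0 ≤ (∫ x in A, ‖w x‖ ^ (2 : ℝ)) ^ (1 / 2 : ℝ) := Real.rpow_nonneg (sint_nonneg fun _ => by positivity) _
  have i2 : 0 ≤ (∫ x in A, ‖z x‖ ^ (2 : ℝ)) ^ (1 / 2 : ℝ) := Real.rpow_nonneg (sint_nonneg fun _ => by positivity) _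
  calc _ ≤ R⁻¹ * ((V * C0 * R ^ (3 / 2 - 3 / r + γ)) * (V * C0 * R ^ (3 / 2 - 3 / q + β))) := by
        gcongr
        exact h.trans (mul_le_mul a2 a1 i1 (by positivity))
    _ = _ := by
      have : R ^ (-(3 / q + 3 / r - 2 - (β + γ))) = R ^ (-1 : ℝ) * (R ^ (3 / 2 - 3 / r + γ) * R ^ (3 / 2 - 3 / q + β)) := by
        rw [← Real.rpow_add R0, ← Real.rpow_add R0]; congr 1; ring
      rw [this, Real.rpow_neg_one]; ring

theorem u1b {A : Set R3} (hA : BS A) {u : R3 → R3} (hu : Continuous u)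
    {p α C0 R V : ℝ} (hp : 1 ≤ p) (hC0 : 1 ≤ C0) (hR : 1 ≤ R) (hV : 1 ≤ V)
    (hvol : ∫ _x in A, (1 : ℝ) ≤ V * R ^ (3 : ℝ))
    (hP : (∫ x in A, ‖u x‖ ^ p) ^ (1 / p) ≤ C0 * R ^ α) :
    ∫ x in A, ‖u x‖ ≤ C0 * V * (R ^ α * R ^ (3 - 3 / p)) ∧
    (∫ x in A, ‖u x‖) ^ 2 ≤ V * R ^ 3 * ∫ x in A, ‖u x‖ ^ 2 := by
  have R0 : 0 < R := by linarith
  have p0 : 0 < p := by linarith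
  have v0 : 0 ≤ ∫ _x in A, (1 : ℝ) := sint_nonneg fun _ => zero_le_one
  have P0 : 0 ≤ (∫ x in A, ‖u x‖ ^ p) ^ (1 / p) := Real.rpow_nonneg (sint_nonneg fun _ => by positivity) _
  constructor
  · have h := hol1 hA (f := fun x => ‖u x‖) (by fun_prop) (fun _ => by positivity) hp
    have := vpow hV R0 v0 hvol (t := 1 - 1 / p) (by rw [sub_nonneg, div_le_one p0]; exact hp) (by
      have : 0 ≤ 1 / p := by positivity
      linarith)
    rw [show 3 * (1 - 1 / p) = 3 - 3 / p by ring] at this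
    refine h.trans ((mul_le_mul hP this (by positivity) (by positivity)).trans (le_of_eq (by ring)))
  · have h := hol1 hA (f := fun x => ‖u x‖) (by fun_prop) (fun _ => by positivity) (a := 2) (by norm_num)
    have i : 0 ≤ ∫ x in A, ‖u x‖ := sint_nonneg fun _ => norm_nonneg _
    have j : 0 ≤ ∫ x in A, ‖u x‖ ^ 2 := sint_nonneg fun _ => by positivity
    have h2 := pow_le_pow_left₀ i h 2
    simp only [Real.rpow_two] at h2
    rw [show (1 - 1 / 2 : ℝ) = 1 / 2 by norm_num, ← Real.sqrt_eq_rpow, ← Real.sqrt_eq_rpow, mul_pow,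
      Real.sq_sqrt v0, Real.sq_sqrt j] at h2
    refine h2.trans ?_
    rw [mul_comm]
    gcongr
    refine hvol.trans (le_of_eq ?_)
    norm_cast

theorem mealg {C0 V hU hVv hT hE R I1 I2 J2 K2 I3 J3 K3 X P A B ra : ℝ} (hC0 : 1 ≤ C0) (hV : 1 ≤ V) (R0 : 0 < R)
    (hu0 : 0 < hU) (hv0 : 0 < hVv) (ht0 : 0 < hT) (hR0 : 0 < hE) (I20 : 0 ≤ I2) (J20 : 0 ≤ J2)
    (u2 : R⁻¹ ^ 2 * I2 ≤ V * C0 ^ 2 * hU) (v2 : R⁻¹ ^ 2 * J2 ≤ V * C0 ^ 2 * hVv) (t2 : R⁻¹ ^ 2 * K2 ≤ V * C0 ^ 2 * hT)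
    (u3 : R⁻¹ * I3 ≤ C0 ^ 3 * hU) (v3 : R⁻¹ * J3 ≤ C0 ^ 3 * hVv) (t3 : R⁻¹ * K3 ≤ C0 ^ 3 * hT)
    (u4 : R⁻¹ ^ 4 * (ra * I2) ≤ V * C0 ^ 2 * hU) (v4 : R⁻¹ ^ 4 * (ra * J2) ≤ V * C0 ^ 2 * hVv)
    (U1 : I1 ≤ C0 * V * ra) (U2 : I1 ^ 2 ≤ V * R ^ 3 * I2) (hX : R⁻¹ * X ≤ (V * C0) ^ 2 * hE)
    (L1 : R⁻¹ * (P * A) ≤ 2 * C0 ^ 3 * hU) (L2 : R⁻¹ * (P * B) ≤ 2 * C0 ^ 3 * hVv) :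
    R⁻¹ ^ 2 * (I2 + J2 + K2) + R⁻¹ * (I3 + J3 + K3) + R⁻¹ * X + R⁻¹ ^ 5 * I1 ^ 2 + R⁻¹ ^ 4 * (I1 * (I2 + J2)) +
      R⁻¹ * (P * (A + B)) ≤ 20 * V ^ 2 * C0 ^ 3 * (hU + hVv + hT + hE) := by
  have T4 : R⁻¹ ^ 5 * I1 ^ 2 ≤ V * (V * C0 ^ 2 * hU) := by
    calc R⁻¹ ^ 5 * I1 ^ 2 ≤ R⁻¹ ^ 5 * (V * R ^ 3 * I2) := by gcongr
      _ = V * (R⁻¹ ^ 2 * I2) := by field_simp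
      _ ≤ _ := by gcongr
  have T5 : R⁻¹ ^ 4 * (I1 * (I2 + J2)) ≤ C0 * V * (V * C0 ^ 2 * hU + V * C0 ^ 2 * hVv) := by
    calc R⁻¹ ^ 4 * (I1 * (I2 + J2)) ≤ R⁻¹ ^ 4 * ((C0 * V * ra) * (I2 + J2)) := by gcongr
      _ = C0 * V * (R⁻¹ ^ 4 * (ra * I2) + R⁻¹ ^ 4 * (ra * J2)) := by ring
      _ ≤ _ := by gcongr
  have T6 := add_le_add L1 L2
  rw [← mul_add, ← mul_add] at T6
  have g1 : C0 ^ 2 ≤ C0 ^ 3 := by nlinarith [mul_nonneg (sq_nonneg C0) (sub_nonneg.2 hC0)]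
  have g2 : V ≤ V ^ 2 := by nlinarith
  have g3 : V * C0 ^ 2 ≤ V ^ 2 * C0 ^ 3 := by gcongr
  have g4 : C0 ^ 3 ≤ V ^ 2 * C0 ^ 3 := le_mul_of_one_le_left (by positivity) (by nlinarith)
  have g5 : V ^ 2 * C0 ^ 2 ≤ V ^ 2 * C0 ^ 3 := by gcongr
  set D := V ^ 2 * C0 ^ 3 with hD
  have m1 : ∀ x : ℝ, 0 < x → V * C0 ^ 2 * x ≤ D * x := fun x hx => by gcongr
  have m2 : ∀ x : ℝ, 0 < x → C0 ^ 3 * x ≤ D * x := fun x hx => by gcongr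
  have m3 : ∀ x : ℝ, 0 < x → V ^ 2 * C0 ^ 2 * x ≤ D * x := fun x hx => by gcongr
  have X' : R⁻¹ * X ≤ D * hE := hX.trans (by rw [mul_pow]; exact m3 _ hR0)
  have T4' : R⁻¹ ^ 5 * I1 ^ 2 ≤ D * hU := T4.trans (by
    rw [show V * (V * C0 ^ 2 * hU) = V ^ 2 * C0 ^ 2 * hU by ring]; exact m3 _ hu0)
  have T5' : R⁻¹ ^ 4 * (I1 * (I2 + J2)) ≤ D * hU + D * hVv := T5.trans (le_of_eq (by rw [hD]; ring))
  have T6' := T6.trans (add_le_add (by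
    rw [mul_assoc]; exact mul_le_mul_of_nonneg_left (m2 _ hu0) zero_le_two : 2 * C0 ^ 3 * hU ≤ 2 * (D * hU)) (by
    rw [mul_assoc]; exact mul_le_mul_of_nonneg_left (m2 _ hv0) zero_le_two : 2 * C0 ^ 3 * hVv ≤ 2 * (D * hVv)))
  have B1 := (add_le_add (add_le_add (u2.trans (m1 _ hu0)) (v2.trans (m1 _ hv0))) (t2.trans (m1 _ ht0)))
  have B2 := (add_le_add (add_le_add (u3.trans (m2 _ hu0)) (v3.trans (m2 _ hv0))) (t3.trans (m2 _ ht0)))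
  rw [← mul_add, ← mul_add] at B1 B2
  refine (add_le_add (add_le_add (add_le_add (add_le_add (add_le_add B1 B2) X') T4') T5') T6').trans ?_
  have D0 : 0 < D := by positivity
  have := mul_pos D0 hu0
  have := mul_pos D0 hv0
  have := mul_pos D0 ht0
  have := mul_pos D0 hR0
  rw [show 20 * V ^ 2 * C0 ^ 3 = 20 * D by rw [hD]; ring]
  nlinarith

theorem ME {p q r α β γ C0 : ℝ} (hp1 : 3 / 2 < p) (hp2 : p < 3) (hq1 : 2 ≤ q) (hq2 : q < 2 * (p / (p - 1)))
    (hr1 : 2 ≤ r) (hr2 : r < 2 * (p / (p - 1))) (hα1 : 0 ≤ α) (hα2 : α ≤ 2 / p - 1 / 3)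
    (hβ2 : β ≤ 3 / q - 1 / 2) (hγ2 : γ ≤ 3 / r - 1 / 2)
    (hc1 : α + ((4 * p - 6) * q / ((6 - q) * p)) * β ≤ 1)
    (hc2 : α + ((4 * p - 6) * r / ((6 - r) * p)) * γ ≤ 1)
    (hC0 : 1 ≤ C0) :
    ∃ C κu κv κt : ℝ, 0 ≤ C ∧ (0 < κu ∧ κu < 1) ∧ (0 < κv ∧ κv < 1) ∧ (0 < κt ∧ κt < 1) ∧
    ∀ (u v : R3 → R3) (pr θ : R3 → ℝ) (R ρ τ H : ℝ), ContDiff ℝ (⊤ : ℕ∞) u → ContDiff ℝ (⊤ : ℕ∞) v → Sm pr → Sm θ →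
      TCM u v pr θ → 1 ≤ R → 37 / 20 * R ≤ ρ → ρ < τ → τ ≤ 39 / 20 * R → 0 < H →
      (∫ x in Aset R τ, ‖u x‖ ^ p) ^ (1 / p) ≤ C0 * R ^ α →
      (∫ x in Aset R τ, ‖v x‖ ^ q) ^ (1 / q) ≤ C0 * R ^ β →
      (∫ x in Aset R τ, ‖Th θ x‖ ^ r) ^ (1 / r) ≤ C0 * R ^ γ →
      (∀ k, ∫ x in Aset R τ, en (Wf u v θ k) x ≤ H) →
      (∀ k, (∫ x in Aset R τ, ‖Wf u v θ k x‖ ^ (6 : ℝ)) ^ (1 / 3 : ℝ) ≤ H) →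
      Fen (Wf u v θ) ρ ≤ C * (R / (τ - ρ)) ^ 6 * (H ^ κu + H ^ κv + H ^ κt +
        R ^ (-(3 / q + 3 / r - 2 - (β + γ)))) := by
  have p0 : 0 < p := by linarith
  have pm : 0 < p - 1 := by linarith
  have S6 : 2 * (p / (p - 1)) < 6 := by
    rw [← mul_div_assoc, div_lt_iff₀ pm]; linarith
  have hpp : p < 2 * (p / (p - 1)) := by
    rw [← mul_div_assoc, lt_div_iff₀ pm]; nlinarith
  have hlt : ∀ q : ℝ, 0 < q → q < 2 * (p / (p - 1)) →
      0 < (2 * p - 3) * q / (p * (6 - q)) ∧ (2 * p - 3) * q / (p * (6 - q)) < 1 := by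
    intro q q0 h
    have d0 : 0 < 6 - q := by linarith
    have : 0 < 2 * p - 3 := by linarith
    refine ⟨by positivity, ?_⟩
    rw [div_lt_one (by positivity)]
    rw [← mul_div_assoc, lt_div_iff₀ pm] at h
    nlinarith
  have eqc : ∀ q b : ℝ, ((4 * p - 6) * q / ((6 - q) * p)) * b = 2 * ((2 * p - 3) * q / (p * (6 - q))) * b := by
    intro q b; ring
  rw [eqc] at hc1 hc2
  have hc0 : α + 2 * ((2 * p - 3) * p / (p * (6 - p))) * α ≤ 1 := by
    have d0 : 0 < 6 - p := by linarith
    have : α + 2 * ((2 * p - 3) * p / (p * (6 - p))) * α = 3 * p / (6 - p) * α := by field_simp; ring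
    rw [this]
    calc 3 * p / (6 - p) * α ≤ 3 * p / (6 - p) * (2 / p - 1 / 3) := by gcongr
      _ = 1 := by field_simp; ring
  have hα3 : α ≤ 3 / p - 1 / 2 := by
    have : 1 / 3 < 1 / p := by apply one_div_lt_one_div_of_lt <;> linarith
    have e : 3 / p = 2 / p + 1 / p := by ring
    linarith
  obtain ⟨a1, a2⟩ := hlt p p0 hpp
  obtain ⟨b1, b2⟩ := hlt q (by linarith) hq2
  obtain ⟨c1, c2⟩ := hlt r (by linarith) hr2
  set lu := (2 * p - 3) * p / (p * (6 - p)) with hlu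
  set lv := (2 * p - 3) * q / (p * (6 - q)) with hlv
  set lt := (2 * p - 3) * r / (p * (6 - r)) with hlt'
  obtain ⟨s, hs2, hsp, hsq, hs⟩ : ∃ s : ℝ, 2 ≤ s ∧ p ≤ s ∧ q ≤ s ∧ s < 2 * (p / (p - 1)) :=
    ⟨max p q, hq1.trans (le_max_right _ _), le_max_left _ _, le_max_right _ _, max_lt hpp hq2⟩
  have hps : 1 < 1 / p + 2 / s := by
    have s0 : 0 < s := by linarith
    rw [← mul_div_assoc, lt_div_iff₀ pm] at hs
    rw [div_add_div _ _ p0.ne' s0.ne', lt_div_iff₀ (by positivity)]; nlinarith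
  obtain ⟨Ce, hCe, E⟩ := est1 hp1 hp2 hs2 hps
  obtain ⟨V, hV, hvol⟩ := vol_A
  refine ⟨Ce * (20 * V ^ 2 * C0 ^ 3), 1 - lu, 1 - lv, 1 - lt, by positivity, ⟨by linarith, by linarith⟩,
    ⟨by linarith, by linarith⟩, ⟨by linarith, by linarith⟩, ?_⟩
  intro u v pr θ R ρ τ H hu hv hpr hθ hsol hR hρ hρτ hτ hH Pu Pv Pt hen h6
  have R0 : 0 < R := by linarith
  have hA := Aset_BS R τ
  have vol := hvol R τ R0 (by linarith)
  have cu := hu.continuous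
  have cv := hv.continuous
  have ct : Continuous (Th θ) := (Wf_sm hu hv hθ 2).continuous
  obtain ⟨u2, u4, u3, uS⟩ := pack hA cu cu hp1 hp2 p0 hpp hH hC0 hR hV vol hlu hc0 hα3 Pu Pu (h6 0)
  obtain ⟨v2, v4, v3, vS⟩ := pack hA cu cv hp1 hp2 (by linarith) hq2 hH hC0 hR hV vol hlv hc1 hβ2 Pu Pv (h6 1)
  obtain ⟨t2, t4, t3, -⟩ := pack hA cu ct hp1 hp2 (by linarith) hr2 hH hC0 hR hV vol hlt' hc2 hγ2 Pu Pt (h6 2)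
  have X := cross hA cv ct hq1 hr1 hC0 hR hV vol Pv Pt
  simp only [Th_norm] at X
  obtain ⟨U1, U2⟩ := u1b hA cu (by linarith) hC0 hR hV vol Pu
  obtain ⟨l1, l10, L1⟩ := uS s hsp (by linarith) hs2
  obtain ⟨l2, l20, L2⟩ := vS s hsq (by linarith) hs2
  have F := E u v pr θ R ρ τ l1 l2 H hu hv hpr hθ hsol R0 hρ hρτ hτ l10 l20 hH.le hen h6
  refine F.trans ?_
  have hd : 0 < τ - ρ := by linarith
  rw [show ∀ a b c d : ℝ, a * b * c * d = a * c * (b * d) by intros; ring]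
  refine mul_le_mul_of_nonneg_left ?_ (by positivity)
  rw [Fin.sum_univ_three, Fin.sum_univ_three]
  have I20 : 0 ≤ ∫ x in Aset R τ, ‖u x‖ ^ 2 := sint_nonneg fun _ => by positivity
  have J20 : 0 ≤ ∫ x in Aset R τ, ‖v x‖ ^ 2 := sint_nonneg fun _ => by positivity
  exact mealg hC0 hV R0 (Real.rpow_pos_of_pos hH (1 - lu)) (Real.rpow_pos_of_pos hH (1 - lv))
    (Real.rpow_pos_of_pos hH (1 - lt)) (Real.rpow_pos_of_pos R0 _) I20 J20 u2 v2 t2 u3 v3 t3 u4 v4 U1 U2 X L1 L2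

theorem iter {B κ G : ℝ} (hB : 0 < B) (hκ0 : 0 < κ) (hκ : κ < 1) {g : ℕ → ℝ} (g1 : ∀ n, 1 ≤ g n) (gG : ∀ n, g n ≤ G)
    (h : ∀ n, g n ≤ B * 64 ^ n * g (n + 1) ^ κ) :
    g 0 ≤ (B * ((64 : ℝ) ^ (1 / (1 - κ))) ^ κ) ^ (1 / (1 - κ)) := by
  have k0 : 0 < 1 - κ := by linarith
  set a : ℝ := (64 : ℝ) ^ (1 / (1 - κ)) with ha
  have a1 : 1 ≤ a := Real.one_le_rpow (by norm_num) (by positivity)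
  have a0 : 0 < a := by linarith
  have aa : 64 * a ^ κ = a := by
    have : (64 : ℝ) = a ^ (1 - κ) := by
      rw [ha, ← Real.rpow_mul (by norm_num), one_div_mul_cancel k0.ne', Real.rpow_one]
    rw [this, ← Real.rpow_add a0]; simp
  have bdd : BddAbove (Set.range fun n => g n / a ^ n) := by
    refine ⟨G, ?_⟩
    rintro _ ⟨n, rfl⟩
    exact (div_le_self (by linarith [g1 n]) (one_le_pow₀ a1)).trans (gG n)
  set S := ⨆ n, g n / a ^ n with hS
  have le : ∀ n, g n ≤ S * a ^ n := by
    intro n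
    rw [← div_le_iff₀ (by positivity)]
    exact le_ciSup bdd n
  have S1 : 1 ≤ S := by have := le 0; simp at this; linarith [g1 0]
  have S0 : 0 < S := by linarith
  have hSS : S ≤ B * a ^ κ * S ^ κ := by
    refine ciSup_le fun n => ?_
    rw [div_le_iff₀ (by positivity)]
    have g0 : 0 ≤ g (n + 1) := by linarith [g1 (n + 1)]
    calc g n ≤ B * 64 ^ n * g (n + 1) ^ κ := h n
      _ ≤ B * 64 ^ n * (S * a ^ (n + 1)) ^ κ := by gcongr; exact le _
      _ = B * a ^ κ * S ^ κ * (64 * a ^ κ) ^ n := by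
        rw [Real.mul_rpow S0.le (by positivity), ← Real.rpow_natCast a, ← Real.rpow_mul a0.le, mul_comm _ κ,
          Real.rpow_mul a0.le, Real.rpow_natCast, pow_succ, mul_pow]; ring
      _ = _ := by rw [aa]
  have h2 : S ^ (1 - κ) ≤ B * a ^ κ := by
    rw [Real.rpow_sub S0, Real.rpow_one, div_le_iff₀ (by positivity)]; exact hSS
  have h3 := Real.rpow_le_rpow (by positivity) h2 (by positivity : 0 ≤ 1 / (1 - κ))
  rw [← Real.rpow_mul S0.le, mul_one_div_cancel k0.ne', Real.rpow_one] at h3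
  have := le 0
  simp at this
  linarith

theorem int_mono {S T : Set R3} (hT : BS T) (h : S ⊆ T) {f : R3 → ℝ} (hf : Continuous f) (hf0 : ∀ x, 0 ≤ f x) :
    ∫ x in S, f x ≤ ∫ x in T, f x :=
  setIntegral_mono_set (hT.int hf) (ae_of_all _ hf0) h.eventuallyLE

theorem c6 {w : R3 → R3} (hw : ContDiff ℝ (⊤ : ℕ∞) w) : Continuous fun x => ‖w x‖ ^ (6 : ℝ) :=
  hw.continuous.norm.rpow_const fun _ => Or.inr (by norm_num)

theorem Fen_terms {W : Fin 3 → R3 → R3} (hW : ∀ k, ContDiff ℝ (⊤ : ℕ∞) (W k)) {S : Set R3} {ρ : ℝ}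
    (hS : S ⊆ closedBall 0 ρ) (k : Fin 3) :
    ∫ x in S, en (W k) x ≤ Fen W ρ ∧ (∫ x in S, ‖W k x‖ ^ (6 : ℝ)) ^ (1 / 3 : ℝ) ≤ Fen W ρ := by
  have a : ∀ k, 0 ≤ ∫ x in closedBall (0 : R3) ρ, en (W k) x := fun k => sint_nonneg (en_nonneg _)
  have b : ∀ k, 0 ≤ (∫ x in closedBall (0 : R3) ρ, ‖W k x‖ ^ (6 : ℝ)) ^ (1 / 3 : ℝ) := fun k =>
    Real.rpow_nonneg (sint_nonneg fun _ => by positivity) _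
  have c : (∫ x in closedBall (0 : R3) ρ, en (W k) x) + (∫ x in closedBall (0 : R3) ρ, ‖W k x‖ ^ (6 : ℝ)) ^ (1 / 3 : ℝ) ≤ Fen W ρ :=
    Finset.single_le_sum (f := fun k => (∫ x in closedBall (0 : R3) ρ, en (W k) x) + (∫ x in closedBall (0 : R3) ρ, ‖W k x‖ ^ (6 : ℝ)) ^ (1 / 3 : ℝ))
      (fun k _ => add_nonneg (a k) (b k)) (Finset.mem_univ k)
  have d := int_mono (cB_BS ρ) hS (en_cont (hW k)) (en_nonneg _)
  have e : (∫ x in S, ‖W k x‖ ^ (6 : ℝ)) ^ (1 / 3 : ℝ) ≤ (∫ x in closedBall (0 : R3) ρ, ‖W k x‖ ^ (6 : ℝ)) ^ (1 / 3 : ℝ) :=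
    Real.rpow_le_rpow (sint_nonneg fun _ => by positivity) (int_mono (cB_BS ρ) hS (c6 (hW k)) fun _ => by positivity) (by norm_num)
  exact ⟨by linarith [b k], by linarith [a k]⟩

theorem Fen_mono {W : Fin 3 → R3 → R3} (hW : ∀ k, ContDiff ℝ (⊤ : ℕ∞) (W k)) {ρ τ : ℝ} (h : ρ ≤ τ) : Fen W ρ ≤ Fen W τ := by
  unfold Fen
  refine Finset.sum_le_sum fun k _ => add_le_add ?_ ?_
  · exact int_mono (cB_BS τ) (closedBall_subset_closedBall h) (en_cont (hW k)) (en_nonneg _)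
  · exact Real.rpow_le_rpow (sint_nonneg fun _ => by positivity)
      (int_mono (cB_BS τ) (closedBall_subset_closedBall h) (c6 (hW k)) fun _ => by positivity) (by norm_num)

theorem Fen_nonneg (W : Fin 3 → R3 → R3) (ρ : ℝ) : 0 ≤ Fen W ρ :=
  Finset.sum_nonneg fun k _ => add_nonneg (sint_nonneg (en_nonneg _)) (Real.rpow_nonneg (sint_nonneg fun _ => by positivity) _)

theorem stage1 {W : Fin 3 → R3 → R3} (hW : ∀ k, ContDiff ℝ (⊤ : ℕ∞) (W k)) {C κu κv κt ε R : ℝ} (hC : 0 ≤ C)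
    {κ : ℝ} (ku : κu ≤ κ) (kv : κv ≤ κ) (kt : κt ≤ κ) (k0 : 0 < κ) (k1 : κ < 1) (hε : 0 < ε) (hR : 1 ≤ R)
    (E : ∀ ρ τ H : ℝ, 37 / 20 * R ≤ ρ → ρ < τ → τ ≤ 39 / 20 * R → 0 < H → (∀ k, ∫ x in Aset R τ, en (W k) x ≤ H) →
      (∀ k, (∫ x in Aset R τ, ‖W k x‖ ^ (6 : ℝ)) ^ (1 / 3 : ℝ) ≤ H) →
      Fen W ρ ≤ C * (R / (τ - ρ)) ^ 6 * (H ^ κu + H ^ κv + H ^ κt + R ^ (-ε))) :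
    Fen W (37 / 20 * R) ≤ ((1 + 4 * C * 20 ^ 6) * ((64 : ℝ) ^ (1 / (1 - κ))) ^ κ) ^ (1 / (1 - κ)) := by
  have R0 : 0 < R := by linarith
  set s : ℕ → ℝ := fun n => (39 / 20 - 1 / 10 * (1 / 2) ^ n) * R with hs
  have hp : ∀ n : ℕ, (0 : ℝ) < (1 / 2) ^ n := fun n => by positivity
  have hp1 : ∀ n : ℕ, ((1 : ℝ) / 2) ^ n ≤ 1 := fun n => pow_le_one₀ (by norm_num) (by norm_num)
  have F0 := Fen_nonneg W
  have key := iter (B := 1 + 4 * C * 20 ^ 6) (κ := κ) (G := 1 + Fen W (39 / 20 * R)) (g := fun n => 1 + Fen W (s n))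
    (by positivity) k0 k1 (fun n => by linarith [F0 (s n)]) (fun n => by
      have := Fen_mono hW (ρ := s n) (τ := 39 / 20 * R) (by simp only [hs]; nlinarith [hp n])
      linarith) (fun n => by
      have d : s (n + 1) - s n = R * (1 / 20 * (1 / 2) ^ n) := by simp only [hs]; ring
      have pos := mul_pos R0 (hp n)
      have hH : 1 ≤ 1 + Fen W (s (n + 1)) := by linarith [F0 (s (n + 1))]
      have sub : Aset R (s (n + 1)) ⊆ closedBall 0 (s (n + 1)) := by
        intro x hx; simp only [mem_closedBall, dist_zero_right]; exact hx.2.le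
      have e := E (s n) (s (n + 1)) (1 + Fen W (s (n + 1))) (by simp only [hs]; nlinarith [hp1 n])
        (by nlinarith) (by simp only [hs]; nlinarith [hp (n + 1)]) (by linarith)
        (fun k => by linarith [(Fen_terms hW sub k).1]) (fun k => by linarith [(Fen_terms hW sub k).2])
      set H := 1 + Fen W (s (n + 1)) with hHd
      have q : R / (s (n + 1) - s n) = 20 * 2 ^ n := by
        rw [d, one_div_pow]; field_simp
      rw [q, mul_pow, ← pow_mul, mul_comm n 6, pow_mul] at e
      have P : ∀ k', k' ≤ κ → H ^ k' ≤ H ^ κ := fun k' hk => Real.rpow_le_rpow_of_exponent_le hH hk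
      have Rε : R ^ (-ε) ≤ H ^ κ := (Real.rpow_le_one_of_one_le_of_nonpos hR (by linarith)).trans
        (Real.one_le_rpow hH k0.le)
      have Hk1 : 1 ≤ H ^ κ := Real.one_le_rpow hH k0.le
      have six : (1 : ℝ) ≤ 64 ^ n := one_le_pow₀ (by norm_num)
      norm_num only at e ⊢
      calc 1 + Fen W (s n) ≤ 1 * 64 ^ n * H ^ κ + C * (64000000 * 64 ^ n) * (H ^ κ + H ^ κ + H ^ κ + H ^ κ) := by
            refine add_le_add (by nlinarith) (e.trans ?_)
            gcongr
        _ = _ := by ring)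
  have : s 0 = 37 / 20 * R := by simp only [hs]; ring
  rw [← this]

  linarith

theorem integrable_of_bdd {f : R3 → ℝ} (hf : Continuous f) (hf0 : ∀ x, 0 ≤ f x) {M : ℝ}
    (h : ∀ ρ : ℝ, ∫ x in closedBall (0 : R3) ρ, f x ≤ M) : Integrable f := by
  have cov := aecover_closedBall (μ := (volume : Measure R3)) (x := 0) (r := fun n : ℕ => (n : ℝ)) tendsto_natCast_atTop_atTop
  refine cov.integrable_of_integral_norm_bounded M (fun n => (cB_BS _).int hf) (Eventually.of_forall fun n => ?_)
  simp only [Real.norm_eq_abs, abs_of_nonneg (hf0 _)]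
  exact h n

theorem tail {f : R3 → ℝ} (hf : Continuous f) (hf0 : ∀ x, 0 ≤ f x) (hi : Integrable f) {δ : ℝ} (hδ : 0 < δ) :
    ∀ᶠ R : ℝ in atTop, ∀ τ, ∫ x in Aset R τ, f x ≤ δ := by
  have cov := aecover_ball (μ := (volume : Measure R3)) (x := 0) (r := fun n : ℝ => n) tendsto_id
  have t := cov.integral_tendsto_of_countably_generated hi
  filter_upwards [t.eventually (lt_mem_nhds (sub_lt_self (∫ x, f x) hδ))] with R hR τ
  have h1 : ∫ x in Aset R τ, f x ≤ ∫ x in (ball (0 : R3) R)ᶜ, f x :=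
    setIntegral_mono_set hi.integrableOn (ae_of_all _ hf0) (HasSubset.Subset.eventuallyLE (by
      intro x hx; simp only [Set.mem_compl_iff, mem_ball, dist_zero_right, not_lt]; exact hx.1))
  have h2 := integral_add_compl (measurableSet_ball (x := (0 : R3)) (ε := R)) hi
  linarith

theorem stage2 {W : Fin 3 → R3 → R3} (hW : ∀ k, ContDiff ℝ (⊤ : ℕ∞) (W k)) {C κu κv κt ε : ℝ} (hC : 0 ≤ C)
    (ku : 0 < κu ∧ κu < 1) (kv : 0 < κv ∧ κv < 1) (kt : 0 < κt ∧ κt < 1) (hε : 0 < ε)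
    (E : ∃ᶠ R : ℝ in atTop, ∀ ρ τ H : ℝ, 37 / 20 * R ≤ ρ → ρ < τ → τ ≤ 39 / 20 * R → 0 < H → (∀ k, ∫ x in Aset R τ, en (W k) x ≤ H) →
      (∀ k, (∫ x in Aset R τ, ‖W k x‖ ^ (6 : ℝ)) ^ (1 / 3 : ℝ) ≤ H) →
      Fen W ρ ≤ C * (R / (τ - ρ)) ^ 6 * (H ^ κu + H ^ κv + H ^ κt + R ^ (-ε))) (k : Fin 3) (x : R3) : W k x = 0 := by
  obtain ⟨M, hM⟩ : ∃ M, ∀ ρ, Fen W ρ ≤ M := by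
    refine ⟨((1 + 4 * C * 20 ^ 6) * ((64 : ℝ) ^ (1 / (1 - max κu (max κv κt)))) ^ (max κu (max κv κt))) ^ (1 / (1 - max κu (max κv κt))), fun ρ => ?_⟩
    obtain ⟨R, hRE, hR1⟩ := (E.and_eventually (eventually_ge_atTop (max 1 ρ))).exists
    have h1 : 1 ≤ R := (le_max_left _ _).trans hR1
    have h2 : ρ ≤ R := (le_max_right _ _).trans hR1
    refine (Fen_mono hW (by linarith : ρ ≤ 37 / 20 * R)).trans ?_
    exact stage1 hW hC (le_max_left _ _) ((le_max_left _ _).trans (le_max_right _ _))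
      ((le_max_right _ _).trans (le_max_right _ _)) (lt_of_lt_of_le ku.1 (le_max_left _ _))
      (max_lt ku.2 (max_lt kv.2 kt.2)) hε h1 hRE
  have M0 : 0 ≤ M := (Fen_nonneg W 0).trans (hM 0)
  have i1 : ∀ k, Integrable (en (W k)) := fun k => integrable_of_bdd (en_cont (hW k)) (en_nonneg _)
    (fun ρ => (Fen_terms hW (subset_refl _) k).1.trans (hM ρ))
  have cube : ∀ a b : ℝ, 0 ≤ a → 0 ≤ b → (a ^ (1 / 3 : ℝ) ≤ b ↔ a ≤ b ^ 3) := by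
    intro a b ha hb
    have e : (b ^ 3) ^ (1 / 3 : ℝ) = b := by
      rw [← Real.rpow_natCast, ← Real.rpow_mul hb]; norm_num
    conv_lhs => rw [← e]
    exact Real.rpow_le_rpow_iff ha (by positivity) (by norm_num)
  have n6 : ∀ (k : Fin 3) (S : Set R3), 0 ≤ ∫ x in S, ‖W k x‖ ^ (6 : ℝ) := fun k S => sint_nonneg fun _ => by positivity
  have i2 : ∀ k, Integrable (fun x => ‖W k x‖ ^ (6 : ℝ)) := fun k => integrable_of_bdd (c6 (hW k)) (fun _ => by positivity)
    (M := M ^ 3) (fun ρ => (cube _ _ (n6 k _) M0).1 ((Fen_terms hW (subset_refl _) k).2.trans (hM ρ)))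
  have small : ∀ ρ0, Fen W ρ0 ≤ 0 := by
    intro ρ0
    refine le_of_forall_pos_le_add fun η hη => ?_
    rw [zero_add]
    have cont : ContinuousAt (fun δ : ℝ => C * 10 ^ 6 * (δ ^ κu + δ ^ κv + δ ^ κt + δ)) 0 := by
      have c : ∀ κ : ℝ, 0 < κ → Continuous fun δ : ℝ => δ ^ κ := fun κ h => Real.continuous_rpow_const h.le
      exact (continuous_const.mul ((((c _ ku.1).add (c _ kv.1)).add (c _ kt.1)).add continuous_id)).continuousAt
    have ev : ∀ᶠ δ : ℝ in nhds 0, C * 10 ^ 6 * (δ ^ κu + δ ^ κv + δ ^ κt + δ) < η := by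
      refine cont.eventually (p := fun y => y < η) ?_
      apply gt_mem_nhds
      simp only [Real.zero_rpow ku.1.ne', Real.zero_rpow kv.1.ne', Real.zero_rpow kt.1.ne']
      simpa using hη
    obtain ⟨δ, hδ, hδ0⟩ := ((ev.filter_mono nhdsWithin_le_nhds).and (self_mem_nhdsWithin (s := Set.Ioi (0 : ℝ)))).exists
    have hδ0 : 0 < δ := hδ0
    have t1 : ∀ᶠ R : ℝ in atTop, ∀ k, ∀ τ, ∫ x in Aset R τ, en (W k) x ≤ δ :=
      eventually_all.2 fun k => tail (en_cont (hW k)) (en_nonneg _) (i1 k) hδ0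
    have t2 : ∀ᶠ R : ℝ in atTop, ∀ k, ∀ τ, ∫ x in Aset R τ, ‖W k x‖ ^ (6 : ℝ) ≤ δ ^ 3 :=
      eventually_all.2 fun k => tail (c6 (hW k)) (fun _ => by positivity) (i2 k) (by positivity)
    have t3 : ∀ᶠ R : ℝ in atTop, R ^ (-ε) < δ := (tendsto_rpow_neg_atTop hε).eventually (gt_mem_nhds hδ0)
    obtain ⟨R, hRE, ⟨⟨h1, h2⟩, h3⟩, h4⟩ := (E.and_eventually (((t1.and t2).and t3).and (eventually_ge_atTop (max 1 ρ0)))).exists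
    have hR1 : 1 ≤ R := (le_max_left _ _).trans h4
    have hR2 : ρ0 ≤ R := (le_max_right _ _).trans h4
    have := hRE (37 / 20 * R) (39 / 20 * R) δ le_rfl (by linarith) le_rfl hδ0 (fun k => h1 k _)
      (fun k => (cube _ _ (n6 k _) hδ0.le).2 (h2 k _))
    refine (Fen_mono hW (by linarith : ρ0 ≤ 37 / 20 * R)).trans (this.trans ?_)
    have e : R / (39 / 20 * R - 37 / 20 * R) = 10 := by
      rw [← sub_mul]; field_simp; norm_num
    rw [e]
    refine le_trans ?_ hδ.le
    gcongr
  have z : ∫ x, ‖W k x‖ ^ (6 : ℝ) = 0 := by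
    have cov := aecover_closedBall (μ := (volume : Measure R3)) (x := 0) (r := fun n : ℕ => (n : ℝ)) tendsto_natCast_atTop_atTop
    have t := cov.integral_tendsto_of_countably_generated (i2 k)
    refine tendsto_nhds_unique t ?_
    have : (fun n : ℕ => ∫ x in closedBall (0 : R3) n, ‖W k x‖ ^ (6 : ℝ)) = fun _ => 0 := by
      funext n
      refine le_antisymm ?_ (n6 k _)
      have := (cube _ _ (n6 k _) le_rfl).1 ((Fen_terms hW (subset_refl (closedBall (0 : R3) n)) k).2.trans (small n))
      simpa using this
    rw [this]; exact tendsto_const_nhds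
  rw [integral_eq_zero_iff_of_nonneg (fun _ => by positivity) (i2 k)] at z
  have z2 := ((c6 (hW k)).ae_eq_iff_eq volume continuous_const).1 z
  have z3 := congrFun z2 x
  have : ‖W k x‖ = 0 := by
    by_contra hne
    have : 0 < ‖W k x‖ := lt_of_le_of_ne (norm_nonneg _) (Ne.symm hne)
    have := Real.rpow_pos_of_pos this 6
    exact this.ne' z3
  exact norm_eq_zero.1 this

theorem annb {w : R3 → R3} (hw : Continuous w) {a q R τ C0 : ℝ} (hq : 0 < q) (hR : 1 ≤ R) (hτ : τ ≤ 39 / 20 * R)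
    (h : R ^ (-a) * (∫ x in annulus R, ‖w x‖ ^ q) ^ (1 / q) ≤ C0) :
    (∫ x in Aset R τ, ‖w x‖ ^ q) ^ (1 / q) ≤ C0 * R ^ a := by
  have R0 : 0 < R := by linarith
  have B : BS (annulus R) := ⟨measurableSet_ball.diff measurableSet_ball, 2 * R, fun x hx => ball_subset_closedBall hx.1⟩
  have sub : Aset R τ ⊆ annulus R := by
    intro x hx
    refine ⟨?_, ?_⟩
    · rw [mem_ball, dist_zero_right]; linarith [hx.2]
    · rw [mem_ball, dist_zero_right, not_lt]; exact hx.1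
  have m := int_mono B sub (hw.norm.rpow_const fun _ => Or.inr hq.le) (fun _ => by positivity)
  have m' := Real.rpow_le_rpow (sint_nonneg fun _ => by positivity) m (by positivity : 0 ≤ 1 / q)
  refine m'.trans ?_
  rw [Real.rpow_neg R0.le, inv_mul_le_iff₀ (by positivity)] at h
  linarith

theorem liouville_tcm_A14 (u v : R3 → R3) (pr θ : R3 → ℝ)
    (hu : ContDiff ℝ (⊤ : ℕ∞) u) (hv : ContDiff ℝ (⊤ : ℕ∞) v)
    (hpr : ContDiff ℝ (⊤ : ℕ∞) pr) (hθ : ContDiff ℝ (⊤ : ℕ∞) θ)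
    (hsol : TCM u v pr θ)
    (p q r α β γ : ℝ)
    (hp1 : 3 / 2 < p) (hp2 : p < 3)
    (hq1 : 2 ≤ q) (hq2 : q < 2 * (p / (p - 1)))
    (hr1 : 2 ≤ r) (hr2 : r < 2 * (p / (p - 1)))
    (hα1 : 0 ≤ α) (hα2 : α ≤ 2 / p - 1 / 3)
    (hβ1 : 0 ≤ β) (hβ2 : β ≤ 3 / q - 1 / 2)
    (hγ1 : 0 ≤ γ) (hγ2 : γ ≤ 3 / r - 1 / 2)
    (hc1 : α + ((4 * p - 6) * q / ((6 - q) * p)) * β ≤ 1)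
    (hc2 : α + ((4 * p - 6) * r / ((6 - r) * p)) * γ ≤ 1)
    (hc3 : β + γ < 3 / q + 3 / r - 2)
    (hliminf : ∃ C : ℝ, ∃ᶠ R in (atTop : Filter ℝ),
      XnV u α p R + XnV v β q R + XnS θ γ r R ≤ C) :
    (∀ x, u x = 0) ∧ (∀ x, v x = 0) ∧ (∀ x, θ x = 0) := by
  obtain ⟨C, hfr⟩ := hliminf
  obtain ⟨K, κu, κv, κt, hK, ku, kv, kt, E⟩ := ME hp1 hp2 hq1 hq2 hr1 hr2 hα1 hα2 hβ2 hγ2 hc1 hc2 (le_max_right C 1)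
  have p0 : 0 < p := by linarith
  have ct : Continuous (Th θ) := (Wf_sm hu hv hθ 2).continuous
  have key := stage2 (Wf_sm hu hv hθ) hK ku kv kt (by linarith : 0 < 3 / q + 3 / r - 2 - (β + γ)) (by
    refine (hfr.and_eventually (eventually_ge_atTop 1)).mono ?_
    rintro R ⟨hX, hR⟩ ρ τ H h1 h2 h3 h4 h5 h6
    have R0 : 0 < R := by linarith
    simp only [XnV, XnS, lpS, abs_norm] at hX
    simp only [← Th_norm] at hX
    have n1 : 0 ≤ R ^ (-α) * (∫ x in annulus R, ‖u x‖ ^ p) ^ (1 / p) :=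
      mul_nonneg (by positivity) (Real.rpow_nonneg (sint_nonneg fun _ => by positivity) _)
    have n2 : 0 ≤ R ^ (-β) * (∫ x in annulus R, ‖v x‖ ^ q) ^ (1 / q) :=
      mul_nonneg (by positivity) (Real.rpow_nonneg (sint_nonneg fun _ => by positivity) _)
    have n3 : 0 ≤ R ^ (-γ) * (∫ x in annulus R, ‖Th θ x‖ ^ r) ^ (1 / r) :=
      mul_nonneg (by positivity) (Real.rpow_nonneg (sint_nonneg fun _ => by positivity) _)
    have hC := le_max_left C 1
    exact E u v pr θ R ρ τ H hu hv hpr hθ hsol hR h1 h2 h3 h4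
      (annb hu.continuous p0 hR h3 (by linarith)) (annb hv.continuous (by linarith) hR h3 (by linarith))
      (annb ct (by linarith) hR h3 (by linarith)) h5 h6)
  refine ⟨fun x => key 0 x, fun x => key 1 x, fun x => ?_⟩
  have := key 2 x
  have h2 : ‖Th θ x‖ = 0 := norm_eq_zero.2 this
  rw [Th_norm] at h2
  exact abs_eq_zero.1 h2
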